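/- Let q be a prime power, r ≥ 1, and let t ≥ 2 be an integer. Let f(X) = ∑_{i=0}^{M} A_i X^{q^{k_i}} ∈ F_{q^r}[X] with 0 = k_0 < k_1 < ⋯ < k_M, A_i ≠ 0 for all i, A_M = 1, k_i ≠ t for all i, and k_i ≥ t for all i ≥ 2. Suppose either t divides k_M and k_M ≥ 3t, or t does not divide k_M and k_M ≥ 2t − 1. Then f is not an exceptional scattered polynomial of index t; that is, f is scattered of index t over F_{q^{rm}} for only finitely many positive integers m. -/

import Mathlib

set_option linter.unusedSectionVars false

section
open Polynomial

namespace Step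

/-- Span of bounded weighted monomials. -/
def Sp (F : Type*) {B : Type*} [Field F] [CommRing B] [Algebra F B] (x y z : B) (c d e m : ℕ) :
    Submodule F B :=
  Submodule.span F {b | ∃ i j k : ℕ, i + c * (j + k) ≤ m ∧ j < d ∧ k < e ∧ b = x ^ i * y ^ j * z ^ k}

section
variable {F : Type*} {B : Type*} [Field F] [CommRing B] [Algebra F B] {x y z : B} {c d e : ℕ}

lemma Sp_mono {m n : ℕ} (h : m ≤ n) : Sp F x y z c d e m ≤ Sp F x y z c d e n := by
  apply Submodule.span_mono
  rintro b ⟨i, j, k, h1, h2, h3, h4⟩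
  exact ⟨i, j, k, h1.trans h, h2, h3, h4⟩

lemma Sp_finrank (m : ℕ) : Module.Finite F (Sp F x y z c d e m) ∧
    Module.finrank F (Sp F x y z c d e m) ≤ d * e * (m + 1) := by
  classical
  let g : Fin d × Fin e × Fin (m + 1) → B := fun a => x ^ a.2.2.1 * y ^ a.1.1 * z ^ a.2.1.1
  have h1 : Sp F x y z c d e m ≤ Submodule.span F (Set.range g) := by
    apply Submodule.span_mono
    rintro b ⟨i, j, k, h1, h2, h3, rfl⟩
    exact ⟨(⟨j, h2⟩, ⟨k, h3⟩, ⟨i, by omega⟩), rfl⟩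
  have hf : Module.Finite F (Submodule.span F (Set.range g)) :=
    Module.Finite.span_of_finite F (Set.finite_range g)
  refine ⟨Submodule.finiteDimensional_of_le h1, ?_⟩
  refine (Submodule.finrank_mono h1).trans ((finrank_range_le_card g).trans ?_)
  simp [mul_assoc]

/-- general monomials are in the reduced span -/
lemma mono_mem_Sp
    (hy : ∀ s : ℕ, y ^ (d + s) ∈ Submodule.span F
      {b | ∃ i j : ℕ, i + c * j ≤ c * (d + s) ∧ j < d + s ∧ b = x ^ i * y ^ j})
    (hz : ∀ s : ℕ, z ^ (e + s) ∈ Submodule.span F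
      {b | ∃ i j k : ℕ, i + c * (j + k) ≤ c * (e + s) ∧ k < e + s ∧ b = x ^ i * y ^ j * z ^ k})
    (m i j k : ℕ) (h : i + c * (j + k) ≤ m) : x ^ i * y ^ j * z ^ k ∈ Sp F x y z c d e m := by
  induction k using Nat.strong_induction_on generalizing i j with
  | _ k ihk =>
  by_cases hk : k < e
  · induction j using Nat.strong_induction_on generalizing i with
    | _ j ihj =>
    by_cases hj : j < d
    · exact Submodule.subset_span ⟨i, j, k, h, hj, hk, rfl⟩
    · obtain ⟨s, rfl⟩ := Nat.exists_eq_add_of_le (not_lt.mp hj)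
      have := hy s
      have key : ∀ b ∈ Submodule.span F
        {b | ∃ i j : ℕ, i + c * j ≤ c * (d + s) ∧ j < d + s ∧ b = x ^ i * y ^ j},
        x ^ i * b * z ^ k ∈ Sp F x y z c d e m := by
        intro b hb
        induction hb using Submodule.span_induction with
        | mem b hb =>
          obtain ⟨i', j', h1, h2, rfl⟩ := hb
          have := ihj j' h2 (i + i') (by simp only [mul_add] at *; omega)
          convert this using 1; ring
        | zero => simp
        | add a b _ _ ha hb => rw [mul_add, add_mul]; exact add_mem ha hb
        | smul r a _ ha => rw [mul_smul_comm, smul_mul_assoc]; exact Submodule.smul_mem _ _ ha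
      exact key _ this
  · obtain ⟨s, rfl⟩ := Nat.exists_eq_add_of_le (not_lt.mp hk)
    have := hz s
    have key : ∀ b ∈ Submodule.span F
      {b | ∃ i j k : ℕ, i + c * (j + k) ≤ c * (e + s) ∧ k < e + s ∧ b = x ^ i * y ^ j * z ^ k},
      x ^ i * y ^ j * b ∈ Sp F x y z c d e m := by
      intro b hb
      induction hb using Submodule.span_induction with
      | mem b hb =>
        obtain ⟨i', j', k', h1, h2, rfl⟩ := hb
        have := ihk k' h2 (i + i') (j + j') (by simp only [mul_add] at *; omega)
        convert this using 1; ring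
      | zero => simp
      | add a b _ _ ha hb => rw [mul_add]; exact add_mem ha hb
      | smul r a _ ha => rw [mul_smul_comm]; exact Submodule.smul_mem _ _ ha
    exact key _ this

/-- evaluation of a two-variable polynomial -/
noncomputable def ev2 (F : Type*) {B : Type*} [Field F] [CommRing B] [Algebra F B] (x y : B) :
    F[X][X] →+* B := eval₂RingHom (aeval x : F[X] →ₐ[F] B).toRingHom y

lemma aeval_mem (h : F[X]) (u : B) (s : Set B)
    (hs : ∀ i ≤ h.natDegree, x ^ i * u ∈ s) :
    aeval x h * u ∈ Submodule.span F s := by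
  rw [aeval_eq_sum_range, Finset.sum_mul]
  refine Submodule.sum_mem _ fun i hi => ?_
  rw [smul_mul_assoc]
  exact Submodule.smul_mem _ _ (Submodule.subset_span (hs i (by simpa [Nat.lt_succ_iff] using hi)))

lemma ev2_eq (H : F[X][X]) (hm : H.Monic) : ev2 F x y H =
    y ^ H.natDegree + ∑ i ∈ Finset.range H.natDegree, aeval x (H.coeff i) * y ^ i := by
  conv_lhs => rw [hm.as_sum]
  simp [ev2, eval₂_finsetSum]

lemma redY (H : F[X][X]) (hm : H.Monic) (hc : ∀ i < H.natDegree, (H.coeff i).natDegree ≤ c)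
    (h0 : ev2 F x y H = 0) (s : ℕ) : y ^ (H.natDegree + s) ∈ Submodule.span F
      {b | ∃ i j : ℕ, i + c * j ≤ c * (H.natDegree + s) ∧ j < H.natDegree + s ∧
        b = x ^ i * y ^ j} := by
  rw [ev2_eq H hm] at h0
  rw [pow_add, eq_neg_of_add_eq_zero_left h0, neg_mul, Finset.sum_mul]
  refine Submodule.neg_mem _ (Submodule.sum_mem _ fun j hj => ?_)
  rw [mul_assoc, ← pow_add]
  have hj' := Finset.mem_range.mp hj
  apply aeval_mem
  intro i hi
  refine ⟨i, j + s, ?_, by omega, rfl⟩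
  have := hc j hj'
  have : c * (j + 1) ≤ c * H.natDegree := Nat.mul_le_mul_left _ hj'
  simp only [mul_add] at *
  omega

lemma redZ (H : F[X][X]) (hm : H.Monic) (hd : 0 < H.natDegree)
    (hc : ∀ i < H.natDegree, (H.coeff i).natDegree ≤ c)
    (h0 : ∑ i ∈ Finset.range H.natDegree, z ^ i * y ^ (H.natDegree - 1 - i) +
      ∑ j ∈ Finset.range H.natDegree, aeval x (H.coeff j) *
        ∑ i ∈ Finset.range j, z ^ i * y ^ (j - 1 - i) = 0) (s : ℕ) :
    z ^ (H.natDegree - 1 + s) ∈ Submodule.span F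
      {b | ∃ i j k : ℕ, i + c * (j + k) ≤ c * (H.natDegree - 1 + s) ∧ k < H.natDegree - 1 + s ∧
        b = x ^ i * y ^ j * z ^ k} := by
  obtain ⟨n, hn⟩ : ∃ n, H.natDegree = n + 1 := ⟨H.natDegree - 1, by omega⟩
  rw [hn] at hc h0 ⊢
  simp only [Nat.add_sub_cancel] at hc h0 ⊢
  rw [Finset.sum_range_succ (fun i => z ^ i * y ^ (n - i))] at h0
  simp only [Nat.sub_self, pow_zero, mul_one] at h0
  have h1 : z ^ n = -(∑ i ∈ Finset.range n, z ^ i * y ^ (n - i) +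
    ∑ j ∈ Finset.range (n + 1), aeval x (H.coeff j) *
        ∑ i ∈ Finset.range j, z ^ i * y ^ (j - 1 - i)) := by
    linear_combination h0
  rw [pow_add, h1, neg_mul, add_mul, Finset.sum_mul, Finset.sum_mul]
  refine Submodule.neg_mem _ (add_mem (Submodule.sum_mem _ fun i hi => ?_)
    (Submodule.sum_mem _ fun j hj => ?_))
  · apply Submodule.subset_span
    have := Finset.mem_range.mp hi
    refine ⟨0, n - i, i + s, ?_, by omega, by ring⟩
    rw [zero_add]; apply Nat.mul_le_mul_left; omega
  · rw [mul_assoc, Finset.sum_mul, Finset.mul_sum]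
    refine Submodule.sum_mem _ fun i hi => ?_
    apply aeval_mem
    intro a ha
    have hj' := Finset.mem_range.mp hj
    have hi' := Finset.mem_range.mp hi
    refine ⟨a, j - 1 - i, i + s, ?_, by omega, by ring⟩
    have h2 := hc j hj'
    have h3 : c * (j - 1 - i + (i + s) + 1) ≤ c * (n + s) := Nat.mul_le_mul_left _ (by omega)
    rw [mul_add _ _ 1] at h3
    omega

end
end Step
end

section
open Polynomial

namespace Step
section
variable {F : Type*} {B : Type*} [Field F] [CommRing B] [Algebra F B] {x y z : B} {c d e : ℕ}

/-- filtration -/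
abbrev Fl (F : Type*) {B : Type*} [Field F] [CommRing B] [Algebra F B] (x y : B) (c d m : ℕ) :
    Submodule F B := Sp F x y 0 c d 1 m

lemma mono_mem_Fl (H : F[X][X]) (hm : H.Monic) (hc : ∀ i < H.natDegree, (H.coeff i).natDegree ≤ c)
    (h0 : ev2 F x y H = 0) (m i j : ℕ) (h : i + c * j ≤ m) :
    x ^ i * y ^ j ∈ Fl F x y c H.natDegree m := by
  have := mono_mem_Sp (F := F) (x := x) (y := y) (z := 0) (c := c) (d := H.natDegree) (e := 1)
    (redY H hm hc h0) (fun s => by simp) m i j 0 (by simpa using h)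
  simpa using this

lemma Fl_mul (H : F[X][X]) (hm : H.Monic) (hc : ∀ i < H.natDegree, (H.coeff i).natDegree ≤ c)
    (h0 : ev2 F x y H = 0) {m n : ℕ} {a b : B} (ha : a ∈ Fl F x y c H.natDegree m)
    (hb : b ∈ Fl F x y c H.natDegree n) : a * b ∈ Fl F x y c H.natDegree (m + n) := by
  have : Fl F x y c H.natDegree m * Fl F x y c H.natDegree n ≤ Fl F x y c H.natDegree (m + n) := by
    unfold Fl Sp
    rw [Submodule.span_mul_span, Submodule.span_le]
    rintro _ ⟨_, ⟨i, j, k, h1, h2, h3, rfl⟩, _, ⟨i', j', k', h1', h2', h3', rfl⟩, rfl⟩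
    obtain rfl : k = 0 := by omega
    obtain rfl : k' = 0 := by omega
    have := mono_mem_Fl (F := F) H hm hc h0 (m + n) (i + i') (j + j')
      (by simp only [mul_add] at *; omega)
    have h5 : x ^ i * y ^ j * 0 ^ 0 * (x ^ i' * y ^ j' * 0 ^ 0) = x ^ (i + i') * y ^ (j + j') := by
      ring
    rw [← h5] at this; exact this
  exact this (Submodule.mul_mem_mul ha hb)

lemma Fl_prod (H : F[X][X]) (hm : H.Monic) (hc : ∀ i < H.natDegree, (H.coeff i).natDegree ≤ c)
    (h0 : ev2 F x y H = 0) {ι : Type*} (s : Finset ι) (f : ι → B) (n : ℕ)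
    (hf : ∀ i ∈ s, f i ∈ Fl F x y c H.natDegree n) :
    ∏ i ∈ s, f i ∈ Fl F x y c H.natDegree (s.card * n) := by
  classical
  induction s using Finset.induction_on with
  | empty => simpa using mono_mem_Fl (F := F) H hm hc h0 0 0 0 (by simp)
  | insert a s ha ih =>
    rw [Finset.prod_insert ha, Finset.card_insert_of_notMem ha, add_mul, one_mul, add_comm]
    exact Fl_mul H hm hc h0 (hf _ (Finset.mem_insert_self _ _))
      (ih fun i hi => hf i (Finset.mem_insert_of_mem hi))

lemma li_mono (H : F[X][X]) (hli : ∀ G : F[X][X], G.degree < H.natDegree → ev2 F x y G = 0 → G = 0)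
    (n : ℕ) :
    LinearIndependent F (fun a : Fin H.natDegree × Fin n => x ^ (a.2 : ℕ) * y ^ (a.1 : ℕ)) := by
  rw [Fintype.linearIndependent_iff]
  intro g hg
  obtain ⟨h, hh⟩ : ∃ h : Fin H.natDegree → F[X],
      h = fun j => ∑ i : Fin n, C (g (j, i)) * X ^ (i : ℕ) := ⟨_, rfl⟩
  have hh1 : ∀ j (i : Fin n), (h j).coeff i = g (j, i) := by
    intro j i
    simp [hh, finsetSum_coeff, coeff_X_pow, Fin.val_inj]
  have hh2 : ∀ j, aeval x (h j) = ∑ i : Fin n, g (j, i) • x ^ (i : ℕ) := by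
    intro j
    simp [hh, Algebra.smul_def]
  let G : F[X][X] := ∑ j : Fin H.natDegree, C (h j) * X ^ (j : ℕ)
  have hG : G = 0 := by
    apply hli
    · apply degree_sum_fin_lt
    · rw [← hg, Fintype.sum_prod_type]
      simp [G, ev2, eval₂_finsetSum, hh2, Finset.sum_mul, smul_mul_assoc]
  rintro ⟨j, i⟩
  have h1 := congrArg (fun G : F[X][X] => G.coeff j) hG
  have h2 : h j = 0 := by
    simpa [G, finsetSum_coeff, coeff_X_pow, Fin.val_inj] using h1
  rw [← hh1, h2, coeff_zero]

lemma Fl_lower (H : F[X][X]) (hli : ∀ G : F[X][X], G.degree < H.natDegree → ev2 F x y G = 0 → G = 0)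
    (n : ℕ) :
    H.natDegree * (n + 1) ≤
      Module.finrank F (Fl F x y c H.natDegree (n + c * H.natDegree)) := by
  have h := li_mono (F := F) (x := x) (y := y) H hli (n + 1)
  have h2 := finrank_span_eq_card h
  simp only [Fintype.card_prod, Fintype.card_fin] at h2
  rw [← h2]
  have := (Sp_finrank (F := F) (x := x) (y := y) (z := (0 : B)) (c := c) (d := H.natDegree) (e := 1)
    (n + c * H.natDegree)).1
  apply Submodule.finrank_mono
  apply Submodule.span_mono
  rintro _ ⟨⟨j, i⟩, rfl⟩
  refine ⟨i, j, 0, ?_, j.2, by simp, by simp⟩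
  have : c * (j : ℕ) ≤ c * H.natDegree := Nat.mul_le_mul_left _ j.2.le
  have := i.2
  simp only [add_zero]
  omega

lemma zero_count [IsDomain B] (H : F[X][X]) (hm : H.Monic)
    (hc : ∀ i < H.natDegree, (H.coeff i).natDegree ≤ c)
    (h0 : ev2 F x y H = 0)
    (hli : ∀ G : F[X][X], G.degree < H.natDegree → ev2 F x y G = 0 → G = 0)
    (T : B) (hT : T ≠ 0) (m : ℕ) (hTm : T ∈ Fl F x y c H.natDegree m) (s : Finset (F × F))
    (φ : F × F → B →ₐ[F] F) (hφx : ∀ a ∈ s, φ a x = a.1) (hφy : ∀ a ∈ s, φ a y = a.2)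
    (hφT : ∀ a ∈ s, φ a T = 0) : s.card ≤ H.natDegree * (m + c * H.natDegree) := by
  classical
  set d := H.natDegree with hd
  set n := s.card * (c + 1) with hn
  let N := n + c * d + m
  have : Module.Finite F (Fl F x y c d N) := (Sp_finrank _).1
  let ev : Fl F x y c d N →ₗ[F] (s → F) :=
    (LinearMap.pi fun a : s => (φ a).toLinearMap) ∘ₗ (Fl F x y c d N).subtype
  have hev : ∀ (v : Fl F x y c d N) (a : s), ev v a = φ a v := fun v a => rfl
  -- surjectivity
  have hsurj : Function.Surjective ev := by
    rw [← LinearMap.range_eq_top, eq_top_iff, ← (Pi.basisFun F s).span_eq, Submodule.span_le]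
    rintro _ ⟨a, rfl⟩
    let g : F × F → B := fun b =>
      if b.1 = a.1.1 then y - algebraMap F B b.2 else x - algebraMap F B b.1
    let w : B := ∏ b ∈ s.erase a, g b
    have hone : (1 : B) ∈ Fl F x y c d (c + 1) := by
      simpa using mono_mem_Fl (F := F) H hm hc h0 (c + 1) 0 0 (by simp)
    have hw : w ∈ Fl F x y c d N := by
      have h1 : w ∈ Fl F x y c d ((s.erase a).card * (c + 1)) := by
        apply Fl_prod H hm hc h0
        intro b _
        simp only [g]
        split_ifs
        · refine sub_mem ?_ ?_
          · simpa using mono_mem_Fl (F := F) H hm hc h0 (c + 1) 0 1 (by simp)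
          · rw [Algebra.algebraMap_eq_smul_one]; exact Submodule.smul_mem _ _ hone
        · refine sub_mem ?_ ?_
          · simpa using mono_mem_Fl (F := F) H hm hc h0 (c + 1) 1 0 (by simp)
          · rw [Algebra.algebraMap_eq_smul_one]; exact Submodule.smul_mem _ _ hone
      refine Sp_mono ?_ h1
      have : (s.erase a).card * (c + 1) ≤ n := Nat.mul_le_mul_right _ (Finset.card_erase_le)
      simp only [N]; omega
    have hwb : ∀ b ∈ s, b ≠ a.1 → φ b w = 0 := by
      intro b hb hba
      simp only [w, map_prod]
      apply Finset.prod_eq_zero (Finset.mem_erase.mpr ⟨hba, hb⟩)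
      simp only [g]
      split_ifs <;> simp [hφx b hb, hφy b hb]
    have hwa : φ a w ≠ 0 := by
      simp only [w, map_prod]
      apply Finset.prod_ne_zero_iff.mpr
      intro b hb
      have hb' := Finset.mem_erase.mp hb
      simp only [g]
      split_ifs with h
      · simp only [map_sub, hφy a a.2, AlgHom.commutes, Algebra.algebraMap_self, RingHom.id_apply]
        intro h2
        exact hb'.1 (Prod.ext h (sub_eq_zero.mp h2).symm)
      · simp only [map_sub, hφx a a.2, AlgHom.commutes, Algebra.algebraMap_self, RingHom.id_apply]
        intro h2
        exact h (sub_eq_zero.mp h2).symm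
    refine ⟨(φ a w)⁻¹ • ⟨w, hw⟩, ?_⟩
    ext b
    rw [map_smul, Pi.smul_apply, hev]
    by_cases hba : b = a
    · subst hba; simp [hwa]
    · have : b.1 ≠ a.1 := fun h => hba (Subtype.ext h)
      simp [hwb b b.2 this, Pi.single_apply, hba]
  have hrn := LinearMap.finrank_range_add_finrank_ker ev
  rw [LinearMap.range_eq_top.mpr hsurj, finrank_top, Module.finrank_fintype_fun_eq_card,
    Fintype.card_coe] at hrn
  have hup := (Sp_finrank (F := F) (x := x) (y := y) (z := (0 : B)) (c := c) (d := d) (e := 1) N).2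
  have hlow := Fl_lower (F := F) (x := x) (y := y) (c := c) H hli n
  have hker : Module.finrank F (Fl F x y c d (n + c * d)) ≤ Module.finrank F (LinearMap.ker ev) := by
    let mulT : Fl F x y c d (n + c * d) →ₗ[F] LinearMap.ker ev :=
      LinearMap.codRestrict _ (LinearMap.codRestrict _ ((LinearMap.mulLeft F T) ∘ₗ
        (Fl F x y c d (n + c * d)).subtype) (by
          intro v
          have := Fl_mul H hm hc h0 v.2 hTm
          rw [mul_comm (v : B)] at this
          exact this)) (by
          intro v
          rw [LinearMap.mem_ker]
          ext a
          rw [hev]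
          change φ a (T * (v : B)) = 0
          rw [map_mul, hφT a a.2, zero_mul])
    apply LinearMap.finrank_le_finrank_of_injective (f := mulT)
    intro u v huv
    have : T * (u : B) = T * (v : B) :=
      congrArg (fun k : LinearMap.ker ev => ((k : Fl F x y c d N) : B)) huv
    exact Subtype.ext (mul_left_cancel₀ hT this)
  have h3 : Module.finrank F (Fl F x y c d N) ≤ d * 1 * (N + 1) := hup
  have : d * (n + 1) + s.card ≤ d * (N + 1) := by
    have : d * (n + 1) ≤ _ := le_trans hlow hker
    rw [mul_one] at h3
    omega
  have h4 : d * (N + 1) = d * (n + 1) + d * (m + c * d) := by simp only [N]; ring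
  omega

end
end Step
end

section
open Polynomial

namespace Step
section
variable {F : Type*} [Field F]

lemma ps_bound (W : Submodule F (PowerSeries F)) [FiniteDimensional F W] :
    ∃ B0 : ℕ, ∀ B ≥ B0, ∀ w ∈ W, (PowerSeries.X : PowerSeries F) ^ B ∣ w → w = 0 := by
  let N : ℕ → Submodule F W := fun n =>
    { carrier := {w | (PowerSeries.X : PowerSeries F) ^ n ∣ (w : PowerSeries F)}
      add_mem' := fun ha hb => dvd_add ha hb
      zero_mem' := dvd_zero _
      smul_mem' := fun c a ha => by
        change (PowerSeries.X : PowerSeries F) ^ n ∣ c • (a : PowerSeries F)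
        rw [PowerSeries.smul_eq_C_mul]; exact Dvd.dvd.mul_left ha _ }
  have hanti : ∀ m n, m ≤ n → N n ≤ N m := fun m n h w hw => (pow_dvd_pow _ h).trans hw
  obtain ⟨n, hn⟩ := monotone_stabilizes_iff_artinian.mpr (inferInstance : IsArtinian F W)
    (⟨fun n => OrderDual.toDual (N n), fun a b h => hanti a b h⟩ : ℕ →o (Submodule F W)ᵒᵈ)
  refine ⟨n, fun B hB w hw hd => ?_⟩
  have h1 : (⟨w, hw⟩ : W) ∈ N n := (pow_dvd_pow _ hB).trans hd
  ext k
  have h2 : N n = N (max n (k + 1)) := hn (max n (k + 1)) (le_max_left _ _)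
  rw [h2] at h1
  have h3 : (PowerSeries.X : PowerSeries F) ^ (k + 1) ∣ w :=
    (pow_dvd_pow _ (le_max_right _ _)).trans h1
  simpa using PowerSeries.X_pow_dvd_iff.mp h3 k (by omega)

lemma frob_indep (p : ℕ) [Fact p.Prime] [CharP F p] {R : Type*} [CommRing R] [Algebra F R]
    (ψ : R →ₐ[F] PowerSeries F) (hψ : Function.Injective ψ) {ι : Type*} [Fintype ι] (f : ι → R)
    (hf : LinearIndependent F f) :
    ∃ B0 : ℕ, ∀ b : ℕ, B0 ≤ p ^ b → ∀ u : ι → R, ∑ i, f i * u i ^ p ^ b = 0 → ∀ i, u i = 0 := by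
  classical
  have hf' : LinearIndependent F (fun i => ψ (f i)) :=
    hf.map' ψ.toLinearMap (LinearMap.ker_eq_bot.mpr hψ)
  have : FiniteDimensional F (Submodule.span F (Set.range fun i => ψ (f i))) :=
    Module.Finite.span_of_finite F (Set.finite_range _)
  obtain ⟨B0, hB0⟩ := ps_bound (Submodule.span F (Set.range fun i => ψ (f i)))
  have : CharP (PowerSeries F) p := charP_of_injective_algebraMap
    (algebraMap F (PowerSeries F)).injective p
  refine ⟨B0, fun b hb u hu => ?_⟩
  have hu' : ∑ i, ψ (f i) * ψ (u i) ^ p ^ b = 0 := by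
    have := congrArg ψ hu
    simpa using this
  by_contra hne
  push Not at hne
  obtain ⟨i0, hi0⟩ := hne
  have hv0 : ψ (u i0) ≠ 0 := fun h => hi0 (hψ (by rw [h, map_zero]))
  -- minimal order
  have hex : ∃ k : ℕ, ∃ i, ¬ (PowerSeries.X : PowerSeries F) ^ (k + 1) ∣ ψ (u i) := by
    by_contra hcon
    push Not at hcon
    apply hv0
    ext k
    simpa using PowerSeries.X_pow_dvd_iff.mp (hcon k i0) k (by omega)
  set k := Nat.find hex with hk
  have hdvd : ∀ i, (PowerSeries.X : PowerSeries F) ^ k ∣ ψ (u i) := by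
    intro i
    rcases Nat.eq_zero_or_pos k with h | h
    · rw [h]; simp
    · have := Nat.find_min hex (m := k - 1) (by omega)
      push Not at this
      have := this i
      rwa [Nat.sub_add_cancel h] at this
  choose v hv using hdvd
  obtain ⟨i1, hi1⟩ := Nat.find_spec hex
  have hv1 : PowerSeries.constantCoeff (v i1) ≠ 0 := by
    intro h
    apply hi1
    rw [hv i1, ← hk, pow_succ]
    exact mul_dvd_mul_left _ (PowerSeries.X_dvd_iff.mpr h)
  have hsum : ∑ i, ψ (f i) * v i ^ p ^ b = 0 := by
    have h1 : ((PowerSeries.X : PowerSeries F) ^ k) ^ p ^ b * ∑ i, ψ (f i) * v i ^ p ^ b = 0 := by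
      rw [← hu', Finset.mul_sum]
      refine Finset.sum_congr rfl fun i _ => ?_
      conv_rhs => rw [hv i]
      ring
    rcases mul_eq_zero.mp h1 with h | h
    · exact absurd h (pow_ne_zero _ (pow_ne_zero _ PowerSeries.X_ne_zero))
    · exact h
  let a : ι → F := fun i => PowerSeries.constantCoeff (v i)
  have hmod : ∀ i, (PowerSeries.X : PowerSeries F) ^ p ^ b ∣
      v i ^ p ^ b - PowerSeries.C (a i ^ p ^ b) := by
    intro i
    rw [map_pow, ← sub_pow_char_pow]
    apply pow_dvd_pow_of_dvd
    rw [PowerSeries.X_dvd_iff]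
    simp [a]
  have hz : ∑ i, (a i ^ p ^ b) • ψ (f i) = 0 := by
    apply hB0 (p ^ b) hb
    · exact Submodule.sum_mem _ fun i _ => Submodule.smul_mem _ _ (Submodule.subset_span ⟨i, rfl⟩)
    · have : ∑ i, (a i ^ p ^ b) • ψ (f i) =
          - ∑ i, ψ (f i) * (v i ^ p ^ b - PowerSeries.C (a i ^ p ^ b)) := by
        simp only [mul_sub, Finset.sum_sub_distrib, hsum, zero_sub, neg_neg]
        refine Finset.sum_congr rfl fun i _ => ?_
        rw [PowerSeries.smul_eq_C_mul, mul_comm]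
      rw [this, dvd_neg]
      exact Finset.dvd_sum fun i _ => Dvd.dvd.mul_left (hmod i) _
  have := Fintype.linearIndependent_iff.mp hf' _ hz i1
  exact hv1 (eq_zero_of_pow_eq_zero this)

end
end Step
end

section
open Polynomial

namespace Step
section
variable {F : Type*} [Field F]

lemma exists_psi (H : F[X][X]) (hm : H.Monic) [IsDomain (AdjoinRoot H)] (x0 y0 : F)
    (hroot : (H.map (evalRingHom x0)).eval y0 = 0)
    (hder : (H.map (evalRingHom x0)).derivative.eval y0 ≠ 0) :
    ∃ ψ : AdjoinRoot H →ₐ[F] PowerSeries F, Function.Injective ψ := by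
  let i : F[X] →ₐ[F] PowerSeries F := (coeToPowerSeries.algHom F).comp (taylorAlgHom x0)
  have hi : ∀ g, i g = ((taylor x0 g : F[X]) : PowerSeries F) := by
    intro g; simp [i, coeToPowerSeries.algHom_apply]
  have hinj : Function.Injective i := by
    intro a b hab
    rw [hi, hi] at hab
    exact taylor_injective x0 (Polynomial.coe_injective F hab)
  have hcc : (PowerSeries.constantCoeff (R := F)).comp (i : F[X] →+* PowerSeries F) =
      evalRingHom x0 := by
    ext g
    · simp [hi]
    · simp [hi]
  let G := H.map (i : F[X] →+* PowerSeries F)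
  have hGm : G.Monic := hm.map _
  have hcc2 : G.map (PowerSeries.constantCoeff (R := F)) = H.map (evalRingHom x0) := by
    simp only [G, map_map, hcc]
  have hmem : ∀ a : PowerSeries F, a ∈ (Ideal.span {PowerSeries.X} : Ideal (PowerSeries F)) ↔
      PowerSeries.constantCoeff a = 0 := by
    intro a
    rw [Ideal.mem_span_singleton, PowerSeries.X_dvd_iff]
  have hev : ∀ P : (PowerSeries F)[X], PowerSeries.constantCoeff (P.eval (PowerSeries.C y0)) =
      (P.map (PowerSeries.constantCoeff (R := F))).eval y0 := by
    intro P
    rw [eval_map, ← eval₂_hom]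
    simp
  obtain ⟨a, ha, -⟩ := HenselianRing.is_henselian (I := (Ideal.span {PowerSeries.X} :
      Ideal (PowerSeries F))) G hGm (PowerSeries.C y0) (by rw [hmem, hev, hcc2, hroot]) (by
        apply IsUnit.map
        rw [PowerSeries.isUnit_iff_constantCoeff, hev, ← derivative_map, hcc2]
        exact isUnit_iff_ne_zero.mpr hder)
  let ψ : AdjoinRoot H →ₐ[F] PowerSeries F := AdjoinRoot.liftAlgHom H i a (by
    rw [← eval_map]; exact ha)
  refine ⟨ψ, ?_⟩
  have : Module.Finite F[X] (AdjoinRoot H) := hm.finite_adjoinRoot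
  have : (RingHom.ker ψ) = ⊥ := by
    apply Ideal.eq_bot_of_comap_eq_bot (R := F[X])
    rw [eq_bot_iff]
    intro g hg
    rw [Ideal.mem_comap, RingHom.mem_ker] at hg
    have : i g = 0 := by
      rw [← hg]
      change _ = ψ (AdjoinRoot.of H g)
      exact (AdjoinRoot.liftAlgHom_of (p := H) i a _ g).symm
    exact hinj (by rw [this, map_zero])
  exact (RingHom.injective_iff_ker_eq_bot _).mpr this

end
end Step
end

section
open Polynomial

namespace Step
section
variable {F : Type*} [Field F]

lemma ev2_map {B C : Type*} [CommRing B] [Algebra F B] [CommRing C] [Algebra F C] (φ : B →ₐ[F] C)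
    (x y : B) (G : F[X][X]) : φ (ev2 F x y G) = ev2 F (φ x) (φ y) G := by
  have : (φ : B →+* C).comp (ev2 F x y) = ev2 F (φ x) (φ y) := by
    ext <;> simp [ev2]
  exact congrArg (fun g : F[X][X] →+* C => g G) this

lemma ev2_self (x y : F) (G : F[X][X]) : ev2 F x y G = (G.map (evalRingHom x)).eval y := by
  rw [eval_map]
  simp only [ev2, coe_eval₂RingHom]
  congr 1

lemma aux_coeffs (H : F[X][X]) (hm : H.Monic) (hd : 0 < H.natDegree) (c : ℕ)
    (hc : ∀ i < H.natDegree, (H.coeff i).natDegree ≤ c) (S l m : ℕ)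
    (hcount : (H.natDegree - 1) * ((l + c * H.natDegree) * S + m + c * H.natDegree + 1) <
      (H.natDegree * (l + 1)) * (m + 1)) :
    ∃ a : (Fin H.natDegree × Fin (l + 1)) → (Fin H.natDegree × Fin (m + 1)) → F, a ≠ 0 ∧
      ∀ x y z : F, ev2 F x y H = 0 → ev2 F x z H = 0 → y ≠ z →
        ∑ i, ∑ j, a i j * ((x ^ (i.2 : ℕ) * y ^ (i.1 : ℕ)) ^ S * (x ^ (j.2 : ℕ) * z ^ (j.1 : ℕ))) = 0 := by
  classical
  let Z := {v : F × F × F // ev2 F v.1 v.2.1 H = 0 ∧ ev2 F v.1 v.2.2 H = 0 ∧ v.2.1 ≠ v.2.2}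
  let x : Z → F := fun v => v.1.1
  let y : Z → F := fun v => v.1.2.1
  let z : Z → F := fun v => v.1.2.2
  have hev : ∀ (u : Z → F) (g : F[X]) (v : Z), (aeval u g) v = aeval (u v) g := by
    intro u g v
    exact (aeval_algHom_apply (Pi.evalAlgHom F (fun _ : Z => F) v) u g).symm
  have h0 : ev2 F x y H = 0 := by
    funext v
    have := ev2_map (F := F) (Pi.evalAlgHom F (fun _ : Z => F) v) x y H
    exact this.trans v.2.1
  have hz0 : ∑ i ∈ Finset.range H.natDegree, z ^ i * y ^ (H.natDegree - 1 - i) +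
      ∑ j ∈ Finset.range H.natDegree, aeval x (H.coeff j) *
        ∑ i ∈ Finset.range j, z ^ i * y ^ (j - 1 - i) = 0 := by
    funext v
    have h1 := v.2.1
    have h2 := v.2.2.1
    rw [ev2_eq H hm] at h1 h2
    have hne : v.1.2.2 - v.1.2.1 ≠ 0 := sub_ne_zero.mpr (Ne.symm v.2.2.2)
    simp only [Pi.add_apply, Finset.sum_apply, Pi.mul_apply, Pi.pow_apply, hev, Pi.zero_apply]
    apply mul_right_cancel₀ hne
    rw [zero_mul, add_mul, Finset.sum_mul]
    have e1 : ∀ n, (∑ i ∈ Finset.range n, z v ^ i * y v ^ (n - 1 - i)) * (v.1.2.2 - v.1.2.1) =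
      v.1.2.2 ^ n - v.1.2.1 ^ n := fun n => (Commute.all _ _).geom_sum₂_mul n
    rw [← Finset.sum_mul, e1, Finset.sum_mul]
    simp only [mul_assoc, e1]
    simp only [mul_sub, Finset.sum_sub_distrib]
    have hx : x v = v.1.1 := rfl
    rw [hx]
    linear_combination h2 - h1
  let N := (l + c * H.natDegree) * S + m + c * H.natDegree
  have hmem := mono_mem_Sp (F := F) (x := x) (y := y) (z := z) (c := c) (d := H.natDegree)
    (e := H.natDegree - 1) (redY H hm hc h0) (redZ H hm hd hc hz0) N
  have hfin := Sp_finrank (F := F) (x := x) (y := y) (z := z) (c := c) (d := H.natDegree)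
    (e := H.natDegree - 1) N
  have := hfin.1
  let I := Fin H.natDegree × Fin (l + 1)
  let J := Fin H.natDegree × Fin (m + 1)
  let w : I × J → (Z → F) := fun k =>
    ((x ^ (k.1.2 : ℕ) * y ^ (k.1.1 : ℕ)) ^ S * (x ^ (k.2.2 : ℕ) * z ^ (k.2.1 : ℕ)))
  have hw : ∀ k, w k ∈ Sp F x y z c H.natDegree (H.natDegree - 1) N := by
    intro k
    have h5 := hmem (k.1.2 * S + k.2.2) (k.1.1 * S) k.2.1 (by
      have a1 := k.1.1.2
      have a2 := k.1.2.2
      have a3 := k.2.1.2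
      have a4 := k.2.2.2
      have b1 : (k.1.2 : ℕ) * S ≤ l * S := Nat.mul_le_mul_right _ (by omega)
      have b2 : c * ((k.1.1 : ℕ) * S) ≤ c * (H.natDegree * S) :=
        Nat.mul_le_mul_left _ (Nat.mul_le_mul_right _ a1.le)
      have b3 : c * (k.2.1 : ℕ) ≤ c * H.natDegree := Nat.mul_le_mul_left _ a3.le
      simp only [N, mul_add, add_mul, mul_assoc] at *
      omega)
    convert h5 using 1
    simp only [w]
    ring
  let L : (I × J → F) →ₗ[F] Sp F x y z c H.natDegree (H.natDegree - 1) N :=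
    Fintype.linearCombination F (fun k => ⟨w k, hw k⟩)
  have hker : LinearMap.ker L ≠ ⊥ := by
    apply LinearMap.ker_ne_bot_of_finrank_lt
    rw [Module.finrank_fintype_fun_eq_card]
    refine hfin.2.trans_lt ?_
    simp only [I, J, Fintype.card_prod, Fintype.card_fin]
    have := Nat.mul_lt_mul_of_pos_left hcount hd
    calc _ = H.natDegree * ((H.natDegree - 1) * ((l + c * H.natDegree) * S + m + c * H.natDegree + 1)) := by
          simp only [N]; ring
      _ < _ := this
      _ = _ := by ring
  obtain ⟨a, ha, hane⟩ := (Submodule.ne_bot_iff _).mp hker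
  refine ⟨fun i j => a (i, j), fun h => hane (funext fun k => congrFun (congrFun h k.1) k.2), ?_⟩
  intro x1 y1 z1 h1 h2 h3
  have h4 : (L a : Z → F) ⟨(x1, y1, z1), h1, h2, h3⟩ = 0 := by
    rw [LinearMap.mem_ker.mp ha]; rfl
  simp only [L, Fintype.linearCombination_apply, AddSubmonoidClass.coe_finsetSum,
    Submodule.coe_smul, Finset.sum_apply, Pi.smul_apply, smul_eq_mul, Fintype.sum_prod_type (α₁ := I)] at h4
  exact h4

end
end Step
end

section
open Polynomial

namespace Step
section
variable {F : Type*} [Field F]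

lemma ev2_adjoin (H G : F[X][X]) :
    ev2 F (AdjoinRoot.of H X) (AdjoinRoot.root H) G = AdjoinRoot.mk H G := by
  have : ev2 F (AdjoinRoot.of H X) (AdjoinRoot.root H) = AdjoinRoot.mk H := by
    ext a
    · simp [ev2]; rfl
    · simp [ev2]
    · simp [ev2]
  rw [this]

lemma main_step [IsAlgClosed F] (p : ℕ) [Fact p.Prime] [CharP F p] (H : F[X][X]) (hm : H.Monic)
    (hd : 0 < H.natDegree) (hirr : Irreducible H) (x0 : F)
    (hsep : (H.map (evalRingHom x0)).Separable) (c : ℕ)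
    (hc : ∀ i < H.natDegree, (H.coeff i).natDegree ≤ c) (l : ℕ) :
    ∃ B0 : ℕ, ∀ s b m : ℕ, B0 ≤ p ^ b →
      ((H.natDegree - 1) * ((l + c * H.natDegree) * p ^ s + m + c * H.natDegree + 1) <
        (H.natDegree * (l + 1)) * (m + 1)) →
      ∀ pts : Finset (F × F), (∀ v ∈ pts, v.1 ^ p ^ (s + b) = v.1 ∧ ev2 F v.1 v.2 H = 0 ∧
        v.2 ^ p ^ (s + b) ≠ v.2 ∧ ev2 F v.1 (v.2 ^ p ^ (s + b)) H = 0) →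
      pts.card ≤ H.natDegree * (l + c * H.natDegree + p ^ b * (m + c * H.natDegree) +
        c * H.natDegree) := by
  classical
  have : IsDomain (AdjoinRoot H) := AdjoinRoot.isDomain_of_prime hirr.prime
  obtain ⟨y0, hy0⟩ : ∃ y0, (H.map (evalRingHom x0)).IsRoot y0 := by
    apply IsAlgClosed.exists_root
    rw [hm.degree_map, degree_eq_natDegree hm.ne_zero]
    exact_mod_cast hd.ne'
  have hder : (H.map (evalRingHom x0)).derivative.eval y0 ≠ 0 := by
    have := hsep.aeval_derivative_ne_zero (x := y0) (by simpa using hy0)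
    simpa using this
  obtain ⟨ψ, hψ⟩ := exists_psi H hm x0 y0 hy0 hder
  let x : AdjoinRoot H := AdjoinRoot.of H X
  let y : AdjoinRoot H := AdjoinRoot.root H
  have h0 : ev2 F x y H = 0 := by rw [ev2_adjoin]; exact AdjoinRoot.mk_self
  have hli : ∀ G : F[X][X], G.degree < H.natDegree → ev2 F x y G = 0 → G = 0 := by
    intro G hG h
    rw [ev2_adjoin] at h
    by_contra hne
    exact AdjoinRoot.mk_ne_zero_of_degree_lt hm hne
      (by rwa [degree_eq_natDegree hm.ne_zero]) h
  obtain ⟨B0, hB0⟩ := frob_indep p ψ hψ _ (li_mono (F := F) (x := x) (y := y) H hli (l + 1))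
  refine ⟨B0, fun s b m hb hcount pts hpts => ?_⟩
  obtain ⟨a, hane, ha⟩ := aux_coeffs H hm hd c hc (p ^ s) l m hcount
  have hroot : ∀ u : F, ∃ w : F, w ^ p ^ (s + b) = u := fun u =>
    IsAlgClosed.exists_pow_nat_eq u (pow_pos (Fact.out (p := p.Prime)).pos _)
  choose ρ hρ using hroot
  let f : Fin H.natDegree × Fin (l + 1) → AdjoinRoot H := fun i => x ^ (i.2 : ℕ) * y ^ (i.1 : ℕ)
  let g : Fin H.natDegree × Fin (m + 1) → AdjoinRoot H := fun i => x ^ (i.2 : ℕ) * y ^ (i.1 : ℕ)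
  let u : Fin H.natDegree × Fin (l + 1) → AdjoinRoot H := fun i => ∑ j, ρ (a i j) • g j
  let T := ∑ i, f i * u i ^ p ^ b
  have hT : T ≠ 0 := by
    intro h
    have h1 := hB0 b hb u h
    apply hane
    funext i j
    have h2 := Fintype.linearIndependent_iff.mp (li_mono (F := F) (x := x) (y := y) H hli (m + 1))
      (fun j => ρ (a i j)) (h1 i) j
    rw [← hρ (a i j), h2, zero_pow (pow_pos (Fact.out (p := p.Prime)).pos _).ne']
    rfl
  have hTm : T ∈ Fl F x y c H.natDegree
      (l + c * H.natDegree + p ^ b * (m + c * H.natDegree)) := by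
    refine Submodule.sum_mem _ fun i _ => Fl_mul H hm hc h0 ?_ ?_
    · refine mono_mem_Fl H hm hc h0 _ _ _ ?_
      have := i.2.2
      have : c * (i.1 : ℕ) ≤ c * H.natDegree := Nat.mul_le_mul_left _ i.1.2.le
      omega
    · have h3 : ∏ _k ∈ Finset.range (p ^ b), u i ∈ Fl F x y c H.natDegree
          ((Finset.range (p ^ b)).card * (m + c * H.natDegree)) := by
        apply Fl_prod H hm hc h0
        intro _ _
        refine Submodule.sum_mem _ fun j _ => Submodule.smul_mem _ _ ?_
        refine mono_mem_Fl H hm hc h0 _ _ _ ?_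
        have := j.2.2
        have : c * (j.1 : ℕ) ≤ c * H.natDegree := Nat.mul_le_mul_left _ j.1.2.le
        omega
      simpa using h3
  let φ : F × F → AdjoinRoot H →ₐ[F] F := fun v =>
    if h : ev2 F v.1 v.2 H = 0 then AdjoinRoot.liftAlgHom H (aeval v.1 : F[X] →ₐ[F] F) v.2 h
    else AdjoinRoot.liftAlgHom H (aeval x0 : F[X] →ₐ[F] F) y0
      ((ev2_self x0 y0 H).trans hy0)
  have hφ : ∀ v ∈ pts, φ v x = v.1 ∧ φ v y = v.2 := by
    intro v hv
    have h := (hpts v hv).2.1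
    simp only [φ, h, dif_pos]
    constructor
    · exact (AdjoinRoot.liftAlgHom_of (p := H) _ _ _ X).trans (aeval_X _)
    · exact AdjoinRoot.liftAlgHom_root (p := H) _ _ _
  refine zero_count H hm hc h0 hli T hT _ hTm pts φ (fun v hv => (hφ v hv).1)
    (fun v hv => (hφ v hv).2) ?_
  intro v hv
  obtain ⟨hx, hy⟩ := hφ v hv
  obtain ⟨e1, e2, e3, e4⟩ := hpts v hv
  have key : (φ v T) ^ p ^ s = 0 := by
    rw [← ha v.1 v.2 (v.2 ^ p ^ (s + b)) e2 e4 (Ne.symm e3)]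
    simp only [T, map_sum, map_mul, map_pow, sum_pow_char_pow]
    refine Finset.sum_congr rfl fun i _ => ?_
    rw [mul_pow, ← pow_mul, ← pow_add, add_comm b s]
    simp only [u, map_sum, map_smul, sum_pow_char_pow, Finset.mul_sum]
    refine Finset.sum_congr rfl fun j _ => ?_
    simp only [f, g, map_mul, map_pow, hx, hy, smul_eq_mul, mul_pow (ρ (a i j)), hρ]
    rw [mul_pow (v.1 ^ (j.2 : ℕ)), pow_right_comm v.1 (j.2 : ℕ), e1, pow_right_comm v.2 (j.1 : ℕ)]
    ring
  exact eq_zero_of_pow_eq_zero key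


end
end Step
end

section
open Polynomial

namespace Step
section
variable {F : Type*} [Field F]

lemma card_frob_fixed [IsAlgClosed F] (p : ℕ) [Fact p.Prime] [CharP F p] (n : ℕ) (hn : 0 < n) :
    ∃ s : Finset F, s.card = p ^ n ∧ ∀ x, x ∈ s ↔ x ^ p ^ n = x := by
  classical
  have hp := (Fact.out (p := p.Prime))
  have h1 : 1 < p ^ n := Nat.one_lt_pow hn.ne' hp.one_lt
  have hsep : (X ^ p ^ n - X : F[X]).Separable :=
    galois_poly_separable p (p ^ n) (dvd_pow_self p hn.ne')
  have hne : (X ^ p ^ n - X : F[X]) ≠ 0 := FiniteField.X_pow_card_sub_X_ne_zero F h1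
  refine ⟨(X ^ p ^ n - X : F[X]).roots.toFinset, ?_, ?_⟩
  · rw [Multiset.toFinset_card_of_nodup (nodup_roots hsep),
      ← (IsAlgClosed.splits _).natDegree_eq_card_roots,
      FiniteField.X_pow_card_sub_X_natDegree_eq F h1]
  · intro x
    rw [Multiset.mem_toFinset, mem_roots hne]
    simp [sub_eq_zero]

lemma arith (p d c C k : ℕ) (hp : 2 ≤ p) (hd : 0 < d) :
    ∃ s0 : ℕ, ∀ s b : ℕ, s0 ≤ s → s ≤ b → b ≤ s + 1 → ∃ m : ℕ,
      ((d - 1) * ((4 * c * d * d + 1 + c * d) * p ^ s + m + c * d + 1) <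
        (d * (4 * c * d * d + 1 + 1)) * (m + 1)) ∧
      d * (4 * c * d * d + 1 + c * d + p ^ b * (m + c * d) + c * d) + C ≤ d * (p ^ (s + b) - k) := by
  set K := 4 * c * d * d + 1 + 2 * (c * d) + k + C with hK
  refine ⟨2 * d * (c * d + K), fun s b hs hsb _ => ?_⟩
  set S := p ^ s with hS
  set B := p ^ b with hB
  have hSs : s < S := Nat.lt_pow_self (by omega)
  have hB1 : 1 ≤ B := Nat.one_le_pow _ _ (by omega)
  set k1 := S / (2 * d) with hk1
  have e1 : 2 * d * k1 ≤ S := Nat.mul_div_le _ _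
  have e2 : c * d + K ≤ k1 := by
    rw [hk1, Nat.le_div_iff_mul_le (by omega), mul_comm]; omega
  have e3 : k1 < S := Nat.div_lt_self (by omega) (by omega)
  obtain ⟨m, hm⟩ : ∃ m, S = m + 1 + k1 := ⟨S - k1 - 1, by omega⟩
  refine ⟨m, ?_, ?_⟩
  · obtain ⟨d', rfl⟩ : ∃ d', d = d' + 1 := ⟨d - 1, by omega⟩
    simp only [Nat.add_sub_cancel]
    have f1 : (2 * (d' + 1) - 1) * S ≤ 2 * (d' + 1) * (m + 1) := by
      have : 2 * (d' + 1) - 1 = 2 * d' + 1 := by omega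
      rw [this]
      nlinarith
    have f2 : 2 * (d' + 1) - 1 = 2 * d' + 1 := by omega
    rw [f2] at f1
    have f3 := Nat.mul_le_mul_left (4 * c * (d' + 1) * (d' + 1) + 1) f1
    have f4 : c * (d' + 1) * d' ≤ c * (d' + 1) * d' * S := Nat.le_mul_of_pos_right _ (by omega)
    have f5 : 0 ≤ c * d' * S := Nat.zero_le _
    have f6 : 0 ≤ c * S := Nat.zero_le _
    have f7 : 0 < S := by omega
    clear hm e2 hs hK e1 f1
    by_contra hcon
    push Not at hcon
    ring_nf at hcon f3 f4 f5 f6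
    linarith
  · rw [pow_add, ← hS, ← hB]
    have f1 : K ≤ B * K := Nat.le_mul_of_pos_left _ hB1
    have f2 : B * (c * d + K) ≤ B * k1 := Nat.mul_le_mul_left _ e2
    have f3 : 4 * c * d * d + 1 + c * d + B * (m + c * d) + c * d + C ≤ S * B - k := by
      apply Nat.le_sub_of_add_le
      rw [hm]
      nlinarith
    calc _ ≤ d * (4 * c * d * d + 1 + c * d + B * (m + c * d) + c * d) + d * C := by
          gcongr; exact Nat.le_mul_of_pos_left _ hd
      _ = d * (4 * c * d * d + 1 + c * d + B * (m + c * d) + c * d + C) := by ring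
      _ ≤ _ := Nat.mul_le_mul_left _ f3

theorem stepanov [IsAlgClosed F] (p : ℕ) [Fact p.Prime] [CharP F p] (H : F[X][X]) (hm : H.Monic)
    (hd : 0 < H.natDegree) (hirr : Irreducible H) (bad : Finset F)
    (hsep : ∀ x ∉ bad, (H.map (evalRingHom x)).Separable) (C : ℕ) :
    ∃ n0 : ℕ, ∀ n ≥ n0, H.map (mapRingHom (iterateFrobenius F p n)) = H →
      ∃ pts : Finset (F × F), C ≤ pts.card ∧ ∀ v ∈ pts, v.1 ^ p ^ n = v.1 ∧ v.2 ^ p ^ n = v.2 ∧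
        (H.map (evalRingHom v.1)).eval v.2 = 0 := by
  classical
  have hp := (Fact.out (p := p.Prime))
  obtain ⟨c, hc⟩ : ∃ c, ∀ i < H.natDegree, (H.coeff i).natDegree ≤ c :=
    ⟨(Finset.range H.natDegree).sup fun i => (H.coeff i).natDegree, fun i hi =>
      Finset.le_sup (f := fun i => (H.coeff i).natDegree) (Finset.mem_range.mpr hi)⟩
  obtain ⟨x0, hx0⟩ : ∃ x0, x0 ∉ bad := by
    have : Infinite F := IsAlgClosed.instInfinite
    exact Infinite.exists_notMem_finset bad
  obtain ⟨B0, hB0⟩ := main_step p H hm hd hirr x0 (hsep x0 hx0) c hc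
    (4 * c * H.natDegree * H.natDegree + 1)
  obtain ⟨s0, hs0⟩ := arith p H.natDegree c C bad.card hp.two_le hd
  refine ⟨2 * (s0 + B0) + 2, fun n hn hfix => ?_⟩
  obtain ⟨s, b, rfl, h1, h2⟩ : ∃ s b, n = s + b ∧ s ≤ b ∧ b ≤ s + 1 :=
    ⟨n / 2, n - n / 2, by omega, by omega, by omega⟩
  obtain ⟨m, hm1, hm2⟩ := hs0 s b (by omega) h1 h2
  have hb : B0 ≤ p ^ b := by
    have : b < p ^ b := Nat.lt_pow_self hp.one_lt
    omega
  have hmain := hB0 s b m hb hm1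
  obtain ⟨FQ, hFQ, hFQ'⟩ := card_frob_fixed (F := F) p (s + b) (by omega)
  -- all points
  let good := FQ \ bad
  let P : Finset (F × F) := good.biUnion fun x =>
    ((H.map (evalRingHom x)).roots.toFinset).image fun y => (x, y)
  have hP : ∀ v, v ∈ P ↔ v.1 ∈ good ∧ (H.map (evalRingHom v.1)).eval v.2 = 0 := by
    rintro ⟨x, y⟩
    have hne : H.map (evalRingHom x) ≠ 0 := (hm.map _).ne_zero
    simp only [P, Finset.mem_biUnion, Finset.mem_image, Multiset.mem_toFinset, Prod.mk.injEq]
    constructor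
    · rintro ⟨x', h1, y', h2, rfl, rfl⟩
      exact ⟨h1, (mem_roots hne).mp h2⟩
    · rintro ⟨h1, h2⟩
      exact ⟨x, h1, y, (mem_roots hne).mpr h2, rfl, rfl⟩
  have hcard : P.card = good.card * H.natDegree := by
    rw [Finset.card_biUnion]
    · rw [Finset.sum_const_nat]
      intro x hx
      rw [Finset.card_image_of_injective _ (fun a b h => (Prod.mk.inj h).2),
        Multiset.toFinset_card_of_nodup (nodup_roots (hsep x (Finset.mem_sdiff.mp hx).2)),
        ← (IsAlgClosed.splits _).natDegree_eq_card_roots, hm.natDegree_map]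
    · intro x _ x' _ hne
      rw [Function.onFun, Finset.disjoint_left]
      intro v hv hv'
      obtain ⟨y, _, rfl⟩ := Finset.mem_image.mp hv
      obtain ⟨y', _, h⟩ := Finset.mem_image.mp hv'
      exact hne (Prod.mk.inj h).1.symm
  have hgood : p ^ (s + b) - bad.card ≤ good.card := by
    rw [← hFQ]; exact Finset.le_card_sdiff _ _
  have hfrob : ∀ x y : F, x ^ p ^ (s + b) = x → (H.map (evalRingHom x)).eval y = 0 →
      (H.map (evalRingHom x)).eval (y ^ p ^ (s + b)) = 0 := by
    intro x y hx hy
    have h3 : (evalRingHom x).comp (mapRingHom (iterateFrobenius F p (s + b))) =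
        (iterateFrobenius F p (s + b)).comp (evalRingHom x) := by
      ext a
      · simp
      · simp [iterateFrobenius_def, hx]
    have h4 : H.map (evalRingHom x) = (H.map (evalRingHom x)).map (iterateFrobenius F p (s + b)) := by
      conv_lhs => rw [← hfix, map_map, h3]
      rw [map_map]
    have h5 : y ^ p ^ (s + b) = iterateFrobenius F p (s + b) y := by rw [iterateFrobenius_def]
    rw [h4, h5, eval_map, eval₂_at_apply, hy, map_zero]
  refine ⟨P.filter fun v => v.2 ^ p ^ (s + b) = v.2, ?_, ?_⟩
  · have h6 := hmain (P.filter fun v => ¬ v.2 ^ p ^ (s + b) = v.2) (by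
      intro v hv
      obtain ⟨hv1, hv2⟩ := Finset.mem_filter.mp hv
      obtain ⟨hv3, hv4⟩ := (hP v).mp hv1
      have hv5 := (hFQ' _).mp (Finset.mem_sdiff.mp hv3).1
      exact ⟨hv5, by rwa [ev2_self], hv2, by rw [ev2_self]; exact hfrob _ _ hv5 hv4⟩)
    have h7 := Finset.card_filter_add_card_filter_not (s := P) (fun v => v.2 ^ p ^ (s + b) = v.2)
    have h8 : H.natDegree * (p ^ (s + b) - bad.card) ≤ good.card * H.natDegree := by
      rw [mul_comm]; exact Nat.mul_le_mul_right _ hgood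
    omega
  · intro v hv
    obtain ⟨hv1, hv2⟩ := Finset.mem_filter.mp hv
    obtain ⟨hv3, hv4⟩ := (hP v).mp hv1
    exact ⟨(hFQ' _).mp (Finset.mem_sdiff.mp hv3).1, hv2, hv4⟩

end
end Step
end

section
open Polynomial

namespace Step

structure Place (E : Type*) {F Ω : Type*} [Field E] [Field F] [Field Ω] [Algebra E Ω] (c : F →+* Ω) where
  v : AbsoluteValue Ω ℝ
  ultra : ∀ a b, v (a + b) ≤ max (v a) (v b)
  D : Subgroup (Ω ≃ₐ[E] Ω)
  iso : ∀ d ∈ D, ∀ y, v (d y) = v y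
  const : ∀ a : F, a ≠ 0 → v (c a) = 1
  res : ∀ y, v y ≤ 1 → ∃ a : F, v (y - c a) < 1
  ρ : ℝ
  hρ0 : 0 < ρ
  hρ1 : ρ < 1
  orb : ∀ y, y ≠ 0 → IsSeparable E y → ∃ k : ℤ, v y ^ Nat.card (MulAction.orbit D y) = ρ ^ k

section
variable {k : Type*} [NontriviallyNormedField k] [IsUltrametricDist k] [CompleteSpace k]
  {L : Type*} [Field L] [Algebra k L] [Algebra.IsAlgebraic k L]

noncomputable def specAbs (k : Type*) [NontriviallyNormedField k] [IsUltrametricDist k] [CompleteSpace k]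
  (L : Type*) [Field L] [Algebra k L] [Algebra.IsAlgebraic k L] : AbsoluteValue L ℝ where
  toFun y := spectralNorm k L y
  map_mul' a b := by
    exact map_mul (spectralMulAlgNorm k L) a b
  nonneg' y := spectralNorm_nonneg y
  eq_zero' y := by
    constructor
    · intro h
      exact eq_zero_of_map_spectralNorm_eq_zero h (Algebra.IsAlgebraic.isAlgebraic y)
    · rintro rfl; exact spectralNorm_zero
  add_le' a b := by
    refine (isNonarchimedean_spectralNorm a b).trans ?_
    exact max_le_add_of_nonneg (spectralNorm_nonneg _) (spectralNorm_nonneg _)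

lemma specAbs_apply (y : L) : specAbs k L y = spectralNorm k L y := rfl

lemma specAbs_ultra (a b : L) : specAbs k L (a + b) ≤ max (specAbs k L a) (specAbs k L b) :=
  isNonarchimedean_spectralNorm a b

lemma abs_sum_lt {Ω : Type*} [Field Ω] (v : AbsoluteValue Ω ℝ)
    (hu : ∀ a b, v (a + b) ≤ max (v a) (v b)) {ι : Type*} (s : Finset ι) (g : ι → Ω) (B : ℝ) (hB : 0 < B)
    (h : ∀ i ∈ s, v (g i) < B) : v (∑ i ∈ s, g i) < B := by
  classical
  induction s using Finset.induction_on with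
  | empty => simpa using hB
  | insert a s ha ih =>
    rw [Finset.sum_insert ha]
    refine (hu _ _).trans_lt (max_lt (h _ (by simp)) (ih fun i hi => h i (by simp [hi])))

lemma multiset_one_le_prod (s : Multiset ℝ) (h : ∀ x ∈ s, 1 ≤ x) : 1 ≤ s.prod := by
  induction s using Multiset.induction_on with
  | empty => simp
  | cons a s ih =>
    rw [Multiset.prod_cons]
    exact one_le_mul_of_one_le_of_one_le (h a (by simp)) (ih fun x hx => h x (by simp [hx]))

lemma spec_res {F : Type*} [Field F] [IsAlgClosed F] (c : F →+* k)
    (hres : ∀ y : k, ‖y‖ ≤ 1 → ∃ a : F, ‖y - c a‖ < 1) (y : L) (hy : specAbs k L y ≤ 1) :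
    ∃ a : F, specAbs k L (y - algebraMap k L (c a)) < 1 := by
  have hIntg : IsIntegral k y := Algebra.IsIntegral.isIntegral y
  set P := minpoly k y with hP
  have hPm : P.Monic := minpoly.monic hIntg
  have hco : ∀ i, ‖P.coeff i‖ ≤ 1 := (spectralValue_le_one_iff hPm).1 hy
  choose a ha using fun i => hres _ (hco i)
  set N := P.natDegree with hN
  let R : F[X] := X ^ N + ∑ i ∈ Finset.range N, C (a i) * X ^ i
  have hRm : R.Monic := monic_X_pow_add (by
    refine (Polynomial.degree_sum_le _ _).trans_lt ?_
    rw [Finset.sup_lt_iff (by exact WithBot.bot_lt_coe N)]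
    intro i hi
    exact (degree_C_mul_X_pow_le _ _).trans_lt (by exact_mod_cast Finset.mem_range.1 hi))
  have hev : aeval y P = y ^ N + ∑ i ∈ Finset.range N, algebraMap k L (P.coeff i) * y ^ i := by
    rw [aeval_eq_sum_range, Finset.sum_range_succ, add_comm]
    simp [Algebra.smul_def, ← hN, show P.coeff N = 1 from hPm]
  have hP0 : aeval y P = 0 := minpoly.aeval k y
  let φ : F →+* L := (algebraMap k L).comp c
  have hRev : R.eval₂ φ y = y ^ N + ∑ i ∈ Finset.range N, φ (a i) * y ^ i := by
    simp [R, eval₂_finsetSum]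
  have hlt : specAbs k L (R.eval₂ φ y) < 1 := by
    have : R.eval₂ φ y = ∑ i ∈ Finset.range N, -(algebraMap k L (P.coeff i - c (a i)) * y ^ i) := by
      rw [← sub_zero (R.eval₂ φ y), ← hP0, hev, hRev]
      simp only [Finset.sum_neg_distrib, map_sub, sub_mul, Finset.sum_sub_distrib, φ, RingHom.comp_apply]
      ring
    rw [this]
    refine abs_sum_lt _ specAbs_ultra _ _ _ one_pos fun i _ => ?_
    rw [AbsoluteValue.map_neg, map_mul, map_pow, specAbs_apply, spectralNorm_extends]
    calc _ ≤ ‖P.coeff i - c (a i)‖ * 1 := by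
          gcongr
          exact pow_le_one₀ (AbsoluteValue.nonneg _ _) hy
      _ < 1 := by rw [mul_one]; exact ha i
  by_contra! hcon
  have hs := (IsAlgClosed.splits R).eq_prod_roots_of_monic hRm
  rw [hs, ← Polynomial.coe_eval₂RingHom, map_multiset_prod, map_multiset_prod, Multiset.map_map,
    Multiset.map_map] at hlt
  refine absurd hlt (not_lt.2 ?_)
  apply multiset_one_le_prod
  intro x hx
  rw [Multiset.mem_map] at hx
  obtain ⟨b, hb, rfl⟩ := hx
  simpa [φ] using hcon b

end
end Step
end

section
open Polynomial

namespace Step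
section
variable {k : Type*} [NontriviallyNormedField k] [IsUltrametricDist k] [CompleteSpace k]

theorem exists_place_aux (L : Type*) [Field L] [Algebra k L] [IsAlgClosed L] [Algebra.IsAlgebraic k L] {E F Ω : Type*} [Field E] [Field F] [IsAlgClosed F] [Field Ω] [Algebra E Ω]
    [IsAlgClosure E Ω] (c0 : F →+* E) (j : E →+* k) (T : k) (hT0 : 0 < ‖T‖) (hT1 : ‖T‖ < 1)
    (hval : ∀ f : k, f ≠ 0 → ∃ s : ℤ, ‖f‖ = ‖T‖ ^ s)
    (hres : ∀ y : k, ‖y‖ ≤ 1 → ∃ a : F, ‖y - j (c0 a)‖ < 1)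
    (hconst : ∀ a : F, a ≠ 0 → ‖j (c0 a)‖ = 1) :
    ∃ P : Place E ((algebraMap E Ω).comp c0), P.ρ = ‖T‖ ∧ ∀ z : E, P.v (algebraMap E Ω z) = ‖j z‖ := by
  let : Algebra E k := j.toAlgebra
  let : Algebra E L := ((algebraMap k L).comp j).toAlgebra
  have : IsScalarTower E k L := IsScalarTower.of_algebraMap_eq fun _ => rfl
  have : IsAlgClosed Ω := IsAlgClosure.isAlgClosed E
  have : Algebra.IsAlgebraic E Ω := IsAlgClosure.isAlgebraic
  let ψ : Ω →ₐ[E] L := IsAlgClosed.lift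
  let : Algebra Ω L := ψ.toRingHom.toAlgebra
  have hψ : ∀ y, algebraMap Ω L y = ψ y := fun _ => rfl
  have : IsScalarTower E Ω L := IsScalarTower.of_algebraMap_eq fun z => (ψ.commutes z).symm
  have : Normal E Ω := inferInstance
  have : IsAlgClosure k L := ⟨inferInstance, inferInstance⟩
  have : Normal k L := IsAlgClosure.normal k L
  let R : (L ≃ₐ[k] L) → (Ω ≃ₐ[E] Ω) := fun σ => (σ.restrictScalars E).restrictNormal Ω
  have hR : ∀ σ y, ψ (R σ y) = σ (ψ y) := fun σ y =>
    AlgEquiv.restrictNormal_commutes (σ.restrictScalars E) Ω y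
  have hinj : Function.Injective ψ := ψ.injective
  let D : Subgroup (Ω ≃ₐ[E] Ω) :=
    { carrier := Set.range R
      one_mem' := ⟨1, by ext y; apply hinj; rw [hR]; rfl⟩
      mul_mem' := by
        rintro _ _ ⟨a, rfl⟩ ⟨b, rfl⟩
        refine ⟨a * b, ?_⟩
        ext y; apply hinj; simp [hR]
      inv_mem' := by
        rintro _ ⟨a, rfl⟩
        refine ⟨a⁻¹, ?_⟩
        ext y; apply hinj; rw [hR]
        obtain ⟨z, rfl⟩ := (R a).surjective y
        rw [hR]
        change a.symm (a (ψ z)) = ψ ((R a).symm (R a z))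
        simp }
  let v : AbsoluteValue Ω ℝ := (specAbs k L).comp hinj
  have hv : ∀ y, v y = specAbs k L (ψ y) := fun _ => rfl
  have hvE : ∀ z : E, v (algebraMap E Ω z) = ‖j z‖ := by
    intro z
    rw [hv, ψ.commutes, specAbs_apply]
    exact spectralNorm_extends (L := L) (j z)
  refine ⟨{ v := v, ultra := fun a b => ?_, D := D, iso := ?_, const := ?_, res := ?_, ρ := ‖T‖, hρ0 := hT0, hρ1 := hT1, orb := ?_ }, rfl, hvE⟩
  · rw [hv, hv, hv, map_add]; exact specAbs_ultra _ _
  · rintro _ ⟨σ, rfl⟩ y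
    rw [hv, hv, hR, specAbs_apply, specAbs_apply]
    exact (spectralNorm_eq_of_equiv σ (ψ y)).symm
  · intro a ha
    exact (hvE _).trans (hconst a ha)
  · intro y hy
    obtain ⟨a, ha⟩ := spec_res (L := L) (j.comp c0) hres (ψ y) hy
    refine ⟨a, ?_⟩
    rw [hv, map_sub]
    rw [RingHom.comp_apply, ψ.commutes]
    exact ha
  · intro y hy hsep
    classical
    have hIntg : IsIntegral k (ψ y) := Algebra.IsIntegral.isIntegral _
    set P := minpoly k (ψ y) with hP
    have hPs : P.Separable := by
      have h1 : ((minpoly E y).map (algebraMap E k)).Separable := Separable.map hsep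
      refine h1.of_dvd (minpoly.dvd _ _ ?_)
      rw [aeval_map_algebraMap, aeval_algHom_apply, minpoly.aeval, map_zero]
    have hcard : Nat.card (MulAction.orbit D y) = P.natDegree := by
      have : (MulAction.orbit D y) ≃ P.rootSet L := by
        refine Equiv.ofBijective (fun z => ⟨ψ z.1, ?_⟩) ⟨?_, ?_⟩
        · obtain ⟨_, ⟨⟨_, σ, rfl⟩, rfl⟩⟩ := z
          rw [mem_rootSet]
          refine ⟨minpoly.ne_zero hIntg, ?_⟩
          change aeval (ψ (R σ y)) P = 0
          rw [hR]
          change aeval (σ.toAlgHom (ψ y)) P = 0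
          rw [aeval_algHom_apply, minpoly.aeval, map_zero]
        · intro a b hab
          exact Subtype.ext (hinj (Subtype.ext_iff.1 hab))
        · rintro ⟨z, hz⟩
          rw [mem_rootSet] at hz
          obtain ⟨σ, hσ⟩ := minpoly.exists_algEquiv_of_root' (K := k) (x := z) (y := ψ y) (Algebra.IsAlgebraic.isAlgebraic _) hz.2
          refine ⟨⟨R σ y, ⟨⟨R σ, σ, rfl⟩, rfl⟩⟩, ?_⟩
          apply Subtype.ext
          change ψ (R σ y) = z
          rw [hR, hσ]
      rw [Nat.card_congr this, Nat.card_eq_fintype_card, card_rootSet_eq_natDegree hPs (IsAlgClosed.splits _)]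
    rw [hcard]
    have hpos : P.natDegree ≠ 0 := (minpoly.natDegree_pos hIntg).ne'
    have := spectralNorm.spectralNorm_eq_norm_coeff_zero_rpow k L (ψ y)
    have h2 : v y ^ P.natDegree = ‖P.coeff 0‖ := by
      rw [hv, specAbs_apply, this, ← Real.rpow_natCast, ← Real.rpow_mul (norm_nonneg _)]
      rw [one_div, inv_mul_cancel₀ (by exact_mod_cast hpos), Real.rpow_one]
    rw [h2]
    apply hval
    apply minpoly.coeff_zero_ne_zero hIntg
    exact (map_ne_zero ψ).2 hy

theorem exists_place {E F Ω : Type*} [Field E] [Field F] [IsAlgClosed F] [Field Ω] [Algebra E Ω]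
    [IsAlgClosure E Ω] (c0 : F →+* E) (j : E →+* k) (T : k) (hT0 : 0 < ‖T‖) (hT1 : ‖T‖ < 1)
    (hval : ∀ f : k, f ≠ 0 → ∃ s : ℤ, ‖f‖ = ‖T‖ ^ s)
    (hres : ∀ y : k, ‖y‖ ≤ 1 → ∃ a : F, ‖y - j (c0 a)‖ < 1)
    (hconst : ∀ a : F, a ≠ 0 → ‖j (c0 a)‖ = 1) :
    ∃ P : Place E ((algebraMap E Ω).comp c0), P.ρ = ‖T‖ ∧ ∀ z : E, P.v (algebraMap E Ω z) = ‖j z‖ :=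
  exists_place_aux (AlgebraicClosure k) c0 j T hT0 hT1 hval hres hconst

end
end Step
end

section
open Polynomial

namespace Step
section
open scoped Valued LaurentSeries WithZero
variable {F : Type*} [Field F]

lemma laurent_rankOne (F : Type*) [Field F] : Nonempty (Valuation.RankOne (Valued.v : Valuation F⸨X⸩ ℤᵐ⁰)) := by
  have : (Valued.v : Valuation F⸨X⸩ ℤᵐ⁰).IsNontrivial := by
    refine ⟨⟨HahnSeries.single 1 (1:F), ?_, ?_⟩⟩
    · simp
    · rw [LaurentSeries.valuation_single_zpow]
      rw [← WithZero.exp_zero]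
      intro h
      simp at h
  rw [Valuation.nonempty_rankOne_iff_mulArchimedean]
  infer_instance

theorem laurent_place {E Ω : Type*} [Field E] [IsAlgClosed F] [Field Ω] [Algebra E Ω]
    [IsAlgClosure E Ω] (c0 : F →+* E) (j : E →+* F⸨X⸩) (hj : ∀ a, j (c0 a) = HahnSeries.C a) (s0 : ℤ)
    (x : E) (hx : j x = HahnSeries.single s0 1) :
    ∃ P : Place E ((algebraMap E Ω).comp c0), P.v (algebraMap E Ω x) = P.ρ ^ s0 := by
  obtain ⟨hrk⟩ := laurent_rankOne F
  let T : F⸨X⸩ := HahnSeries.single 1 1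
  have hTz : ∀ s : ℤ, T ^ s = HahnSeries.single s 1 := by
    intro s
    exact (RatFunc.single_zpow s).symm
  have hT : T ≠ 0 := by simp [T]
  have hval : ∀ f : F⸨X⸩, f ≠ 0 → ∃ s : ℤ, ‖f‖ = ‖T‖ ^ s := by
    intro f hf
    have hf' : (Valued.v f : ℤᵐ⁰) ≠ 0 := by simpa using hf
    refine ⟨- WithZero.log (Valued.v f), ?_⟩
    have : Valued.v f = Valued.v (T ^ (- WithZero.log (Valued.v f))) := by
      rw [hTz, LaurentSeries.valuation_single_zpow, neg_neg, WithZero.exp_log hf']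
    rw [← norm_zpow]
    exact le_antisymm (Valued.toNormedField.norm_le_iff.2 this.le)
      (Valued.toNormedField.norm_le_iff.2 this.ge)
  have hC : ∀ a : F, a ≠ 0 → ‖(HahnSeries.C a : F⸨X⸩)‖ = 1 := by
    intro a ha
    have h1 : ∀ b : F, ‖(HahnSeries.C b : F⸨X⸩)‖ ≤ 1 := by
      intro b
      rw [Valued.toNormedField.norm_le_one_iff, LaurentSeries.val_le_one_iff_eq_coe]
      exact ⟨PowerSeries.C b, by simp⟩
    refine le_antisymm (h1 a) ?_
    have h2 := h1 a⁻¹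
    have h3 : ‖(HahnSeries.C a : F⸨X⸩)‖ * ‖(HahnSeries.C a⁻¹ : F⸨X⸩)‖ = 1 := by
      rw [← norm_mul, ← map_mul, mul_inv_cancel₀ ha, map_one, norm_one]
    nlinarith [norm_nonneg (HahnSeries.C a : F⸨X⸩)]
  have hT1 : ‖T‖ < 1 := by
    rw [Valued.toNormedField.norm_lt_one_iff, LaurentSeries.valuation_single_zpow, ← WithZero.exp_zero,
      WithZero.exp_lt_exp]
    norm_num
  have hres : ∀ y : F⸨X⸩, ‖y‖ ≤ 1 → ∃ a : F, ‖y - j (c0 a)‖ < 1 := by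
    intro y hy
    rw [Valued.toNormedField.norm_le_one_iff, LaurentSeries.val_le_one_iff_eq_coe] at hy
    obtain ⟨g, rfl⟩ := hy
    refine ⟨PowerSeries.constantCoeff g, ?_⟩
    rw [hj]
    obtain ⟨h, hh⟩ := PowerSeries.X_dvd_iff.2 (show PowerSeries.constantCoeff (g - PowerSeries.C (PowerSeries.constantCoeff g)) = 0 by simp)
    have : ((g : F⸨X⸩) - HahnSeries.C (PowerSeries.constantCoeff g)) = T * (h : F⸨X⸩) := by
      have := congrArg (fun z : PowerSeries F => (z : F⸨X⸩)) hh
      simpa [T] using this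
    rw [this, norm_mul]
    have : ‖(h : F⸨X⸩)‖ ≤ 1 := by
      rw [Valued.toNormedField.norm_le_one_iff, LaurentSeries.val_le_one_iff_eq_coe]
      exact ⟨h, rfl⟩
    nlinarith [norm_nonneg T]
  obtain ⟨P, hP, hP2⟩ := exists_place (Ω := Ω) c0 j T (norm_pos_iff.2 hT) hT1 hval hres
    (fun a ha => by rw [hj]; exact hC a ha)
  refine ⟨P, ?_⟩
  rw [hP2, hP, hx, ← hTz, norm_zpow]

/-- The two places of `F(X)` at `0` and `∞`. -/
theorem two_places {E Ω : Type*} [Field E] [IsAlgClosed F] [Field Ω] [Algebra F[X] E] [IsFractionRing F[X] E]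
    [Algebra E Ω] [IsAlgClosure E Ω] (s0 : ℤ) (hs0 : s0 ≠ 0) :
    ∃ P : Place E ((algebraMap E Ω).comp ((algebraMap F[X] E).comp C)),
      P.v (algebraMap E Ω (algebraMap F[X] E X)) = P.ρ ^ s0 := by
  let φ : F[X] →+* F⸨X⸩ := eval₂RingHom HahnSeries.C (HahnSeries.single s0 1)
  have hφ : Function.Injective φ := by
    rw [injective_iff_map_eq_zero]
    intro g hg
    ext n
    have h1 : φ g = ∑ i ∈ Finset.range (g.natDegree + 1), HahnSeries.single (i * s0) (g.coeff i) := by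
      simp only [φ, coe_eval₂RingHom]
      rw [eval₂_eq_sum_range]
      refine Finset.sum_congr rfl fun i _ => ?_
      rw [HahnSeries.single_pow, HahnSeries.C_apply, HahnSeries.single_mul_single]
      simp
    by_cases hn : n ≤ g.natDegree
    · have h2 := congrArg (fun z => HahnSeries.coeff z (n * s0)) (h1.symm.trans hg)
      simp only [HahnSeries.coeff_sum, HahnSeries.coeff_zero] at h2
      rw [Finset.sum_eq_single n] at h2
      · simpa using h2
      · intro b _ hb
        apply HahnSeries.coeff_single_of_ne
        intro h
        have := mul_right_cancel₀ hs0 h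
        exact hb (by exact_mod_cast this.symm)
      · intro h
        simp at h; omega
    · rw [coeff_zero, coeff_eq_zero_of_natDegree_lt (by omega)]
  refine laurent_place _ (IsFractionRing.lift hφ) (fun a => ?_) s0 _ ?_
  · rw [RingHom.comp_apply, IsFractionRing.lift_algebraMap]
    simp [φ]
  · rw [IsFractionRing.lift_algebraMap]
    simp [φ]

end
end Step
end

section
open Polynomial

namespace Step
namespace Place
section
variable {E F Ω : Type*} [Field E] [Field F] [Field Ω] [Algebra E Ω] {c : F →+* Ω} (P : Place E c)

lemma v_sub (a b : Ω) : P.v (a - b) ≤ max (P.v a) (P.v b) := by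
  have := P.ultra a (-b)
  rwa [AbsoluteValue.map_neg, ← sub_eq_add_neg] at this

lemma v_add_eq {a b : Ω} (h : P.v b < P.v a) : P.v (a + b) = P.v a := by
  refine le_antisymm ((P.ultra a b).trans (max_le le_rfl h.le)) ?_
  have := P.v_sub (a + b) b
  rw [add_sub_cancel_right] at this
  rcases le_max_iff.1 this with h' | h'
  · exact h'
  · exact absurd h (not_lt.2 h')

lemma v_c_le (a : F) : P.v (c a) ≤ 1 := by
  by_cases h : a = 0
  · simp [h]
  · exact (P.const a h).le

lemma res_unique {y : Ω} {a b : F} (ha : P.v (y - c a) < 1) (hb : P.v (y - c b) < 1) : a = b := by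
  by_contra hab
  have h1 : P.v (c (a - b)) = 1 := P.const _ (sub_ne_zero.2 hab)
  have h2 : c (a - b) = (y - c b) - (y - c a) := by rw [map_sub]; ring
  have h3 := P.v_sub (y - c b) (y - c a)
  rw [← h2, h1] at h3
  exact absurd h3 (not_le.2 (max_lt hb ha))

lemma res_add {y z : Ω} {a b : F} (ha : P.v (y - c a) < 1) (hb : P.v (z - c b) < 1) :
    P.v (y + z - c (a + b)) < 1 := by
  have : y + z - c (a + b) = (y - c a) + (z - c b) := by rw [map_add]; ring
  rw [this]; exact (P.ultra _ _).trans_lt (max_lt ha hb)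

lemma v_le_of_res {y : Ω} {a : F} (ha : P.v (y - c a) < 1) : P.v y ≤ 1 := by
  have := P.ultra (y - c a) (c a)
  rw [sub_add_cancel] at this
  exact this.trans (max_le ha.le (P.v_c_le a))

lemma res_mul {y z : Ω} {a b : F} (ha : P.v (y - c a) < 1) (hb : P.v (z - c b) < 1) :
    P.v (y * z - c (a * b)) < 1 := by
  have : y * z - c (a * b) = (y - c a) * z + c a * (z - c b) := by rw [map_mul]; ring
  rw [this]
  refine (P.ultra _ _).trans_lt (max_lt ?_ ?_)
  · rw [map_mul]
    exact (mul_le_of_le_one_right (P.v.nonneg _) (P.v_le_of_res hb)).trans_lt ha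
  · rw [map_mul]
    exact (mul_le_of_le_one_left (P.v.nonneg _) (P.v_c_le a)).trans_lt hb

lemma res_pow {y : Ω} {a : F} (ha : P.v (y - c a) < 1) (n : ℕ) :
    P.v (y ^ n - c (a ^ n)) < 1 := by
  induction n with
  | zero => simp
  | succ n ih => rw [pow_succ, pow_succ]; exact P.res_mul ih ha

lemma v_eq_one_of_res {y : Ω} {a : F} (ha : P.v (y - c a) < 1) (h0 : a ≠ 0) : P.v y = 1 := by
  have := P.v_add_eq (a := c a) (b := y - c a) (by rwa [P.const a h0])
  rwa [P.const a h0, add_sub_cancel] at this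

lemma res_ne_zero {y : Ω} {a : F} (ha : P.v (y - c a) < 1) (h0 : P.v y = 1) : a ≠ 0 := by
  rintro rfl
  simp [h0] at ha

lemma res_close {y z : Ω} {a : F} (ha : P.v (y - c a) < 1) (hz : P.v (z - y) < 1) :
    P.v (z - c a) < 1 := by
  have : z - c a = (z - y) + (y - c a) := by ring
  rw [this]; exact (P.ultra _ _).trans_lt (max_lt hz ha)

end

section
variable {k F E Ω : Type*} [Field k] [Field F] [Field E] [Field Ω]
  [Algebra k F] [Algebra k Ω] [Algebra F Ω] [Algebra E Ω] [IsScalarTower k F Ω]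
  (P : Place E (algebraMap F Ω))

lemma v_smul (l : k) (hl : l ≠ 0) (y : Ω) : P.v (l • y) = P.v y := by
  rw [Algebra.smul_def, IsScalarTower.algebraMap_apply k F Ω, map_mul, P.const, one_mul]
  exact (_root_.map_ne_zero _).2 hl

theorem res_lin (W : Submodule k Ω) (w0 : Ω) (h0 : w0 ≠ 0) (hW : ∀ y ∈ W, P.v y ≤ P.v w0) :
    ∃ l : W →ₗ[k] F, ∀ y : W, P.v (y / w0 - algebraMap F Ω (l y)) < 1 := by
  have h1 : ∀ y : W, ∃ a : F, P.v (y / w0 - algebraMap F Ω a) < 1 := by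
    intro y
    apply P.res
    rw [map_div₀]
    exact div_le_one_of_le₀ (hW y y.2) (P.v.nonneg _)
  choose g hg using h1
  refine ⟨{ toFun := g, map_add' := fun y z => ?_, map_smul' := fun l y => ?_ }, hg⟩
  · refine P.res_unique (hg _) ?_
    have := P.res_add (hg y) (hg z)
    rwa [← add_div] at this
  · refine P.res_unique (hg _) ?_
    have := P.res_mul (y := algebraMap F Ω (algebraMap k F l)) (a := algebraMap k F l) (by simp) (hg y)
    rw [RingHom.id_apply, Algebra.smul_def]
    convert this using 2
    rw [Submodule.coe_smul, Algebra.smul_def, IsScalarTower.algebraMap_apply k F Ω, mul_div_assoc]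

lemma res_lin_ker {W : Submodule k Ω} {w0 : Ω} (h0 : w0 ≠ 0) {l : W →ₗ[k] F}
    (hl : ∀ y : W, P.v (y / w0 - algebraMap F Ω (l y)) < 1) (y : W) : l y = 0 ↔ P.v y < P.v w0 := by
  have hpos : 0 < P.v w0 := P.v.pos h0
  have h2 : P.v (y / w0) < 1 ↔ P.v y < P.v w0 := by rw [map_div₀, div_lt_one hpos]
  constructor
  · intro h
    have := hl y
    rw [h, map_zero, sub_zero] at this
    exact h2.1 this
  · intro h
    refine P.res_unique (hl y) ?_
    rw [map_zero, sub_zero]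
    exact h2.2 h

/-- elements of value `< B` (together with zero) -/
def ball (B : ℝ) (hB : 0 < B) : Submodule k Ω where
  carrier := {y | P.v y < B}
  add_mem' := fun {a b} ha hb => (P.ultra a b).trans_lt (max_lt ha hb)
  zero_mem' := by simpa using hB
  smul_mem' := fun l y hy => by
    by_cases hl : l = 0
    · simpa [hl] using hB
    · change P.v (l • y) < B
      rw [P.v_smul l hl]; exact hy

lemma mem_ball {B : ℝ} {hB : 0 < B} {y : Ω} : y ∈ (P.ball B hB : Submodule k Ω) ↔ P.v y < B := Iff.rfl

end
end Place
end Step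
end

section
open Polynomial

namespace Step
section
variable {k F Ω : Type*} [Field k] [Fintype k] [Field F] [Field Ω]
  [Algebra k F] [Algebra k Ω] [Algebra F Ω] [IsScalarTower k F Ω]

noncomputable def Fr (k : Type*) {Ω : Type*} [Field k] [Fintype k] [Field Ω] [Algebra k Ω] (n : ℕ) : Ω →ₗ[k] Ω :=
  (FiniteField.frobeniusAlgHom k Ω ^ n).toLinearMap

lemma Fr_apply (n : ℕ) (y : Ω) : Fr k n y = y ^ Fintype.card k ^ n := by
  change (FiniteField.frobeniusAlgHom k Ω ^ n) y = _
  rw [AlgHom.coe_pow, FiniteField.coe_frobeniusAlgHom, pow_iterate]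

lemma pow_card_sub (n : ℕ) (y z : Ω) (_h : k = k := rfl) :
    (y - z) ^ Fintype.card k ^ n = y ^ Fintype.card k ^ n - z ^ Fintype.card k ^ n := by
  rw [← Fr_apply, ← Fr_apply, ← Fr_apply, map_sub]

lemma pow_card_add (n : ℕ) (y z : Ω) (_h : k = k := rfl) :
    (y + z) ^ Fintype.card k ^ n = y ^ Fintype.card k ^ n + z ^ Fintype.card k ^ n := by
  rw [← Fr_apply, ← Fr_apply, ← Fr_apply, map_add]

lemma pow_card_inj (k : Type*) [Field k] [Fintype k] [Algebra k Ω] {n : ℕ} {y z : Ω} (h : y ^ Fintype.card k ^ n = z ^ Fintype.card k ^ n) :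
    y = z := by
  rw [← sub_eq_zero, ← pow_card_sub (k := k)] at h
  exact sub_eq_zero.1 (pow_eq_zero_iff (pow_pos Fintype.card_pos _).ne' |>.1 h)

noncomputable def fL (k : Type*) {F Ω : Type*} [Field k] [Fintype k] [Field F] [Field Ω]
    [Algebra k F] [Algebra k Ω] [Algebra F Ω] [IsScalarTower k F Ω] {M : ℕ} (A : Fin (M + 1) → F) (ks : Fin (M + 1) → ℕ) : Ω →ₗ[k] Ω :=
  ∑ i, LinearMap.mulLeft k (algebraMap F Ω (A i)) ∘ₗ Fr k (ks i)

lemma fL_apply {M : ℕ} (A : Fin (M + 1) → F) (ks : Fin (M + 1) → ℕ) (y : Ω) :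
    fL k A ks y = ∑ i, algebraMap F Ω (A i) * y ^ Fintype.card k ^ ks i := by
  simp [fL, LinearMap.sum_apply, Fr_apply]

noncomputable def VV (k : Type*) {F Ω : Type*} [Field k] [Fintype k] [Field F] [Field Ω]
    [Algebra k F] [Algebra k Ω] [Algebra F Ω] [IsScalarTower k F Ω] {M : ℕ} (A : Fin (M + 1) → F) (ks : Fin (M + 1) → ℕ) (t : ℕ) (a : Ω) :
    Submodule k Ω :=
  LinearMap.ker (fL k A ks - LinearMap.mulLeft k a ∘ₗ Fr k t)

lemma mem_VV {M : ℕ} {A : Fin (M + 1) → F} {ks : Fin (M + 1) → ℕ} {t : ℕ} {a y : Ω} :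
    y ∈ VV k A ks t a ↔ fL k A ks y = a * y ^ Fintype.card k ^ t := by
  simp [VV, LinearMap.mem_ker, Fr_apply, sub_eq_zero]

lemma card_fix_le (Q : ℕ) (hQ : 1 < Q) : ∃ s : Finset F, s.card ≤ Q ∧ ∀ z, z ^ Q = z → z ∈ s := by
  classical
  refine ⟨(X ^ Q - X : F[X]).roots.toFinset, ?_, ?_⟩
  · refine (Multiset.toFinset_card_le _).trans ((card_roots' _).trans ?_)
    rw [FiniteField.X_pow_card_sub_X_natDegree_eq F hQ]
  · intro z hz
    rw [Multiset.mem_toFinset, mem_roots (FiniteField.X_pow_card_sub_X_ne_zero F hQ)]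
    simp [hz]

end

section
variable {k F E Ω : Type*} [Field k] [Fintype k] [Field F] [Field E] [Field Ω]
  [Algebra k F] [Algebra k Ω] [Algebra F Ω] [Algebra E Ω] [IsScalarTower k F Ω]
  (P : Place E (algebraMap F Ω)) {M : ℕ} {A : Fin (M + 1) → F} {ks : Fin (M + 1) → ℕ} {t : ℕ} {a : Ω}

local notation "qq" => Fintype.card k

lemma one_lt_qq : 1 < qq := Fintype.one_lt_card

lemma f_small (hks0 : ks 0 = 0) (hmono : StrictMono ks) {y : Ω} (hy0 : y ≠ 0) (hy : P.v y < 1) :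
    P.v (fL k A ks y - algebraMap F Ω (A 0) * y) < P.v y := by
  rw [fL_apply, Fin.sum_univ_succ, hks0, pow_zero, pow_one, add_sub_cancel_left]
  refine abs_sum_lt _ P.ultra _ _ _ (P.v.pos hy0) fun i _ => ?_
  rw [map_mul, map_pow]
  have h1 : 0 < ks i.succ := by rw [← hks0]; exact hmono i.succ_pos
  calc _ ≤ 1 * P.v y ^ qq ^ ks i.succ := by
        gcongr
        exact P.v_c_le _
    _ < P.v y := by
        rw [one_mul]
        exact pow_lt_self_of_lt_one₀ (P.v.pos hy0) hy (Nat.one_lt_pow h1.ne' (one_lt_qq (k := k)))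

lemma f_large (hmono : StrictMono ks) (hAM : A (Fin.last M) = 1) {y : Ω} (hy : 1 < P.v y) :
    P.v (fL k A ks y - y ^ qq ^ ks (Fin.last M)) < P.v y ^ qq ^ ks (Fin.last M) := by
  rw [fL_apply, Fin.sum_univ_castSucc, hAM, map_one, one_mul, add_sub_cancel_right]
  refine abs_sum_lt _ P.ultra _ _ _ (by positivity) fun i _ => ?_
  rw [map_mul, map_pow]
  have h1 : ks i.castSucc < ks (Fin.last M) := hmono i.castSucc_lt_last
  calc _ ≤ 1 * P.v y ^ qq ^ ks i.castSucc := by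
        gcongr
        exact P.v_c_le _
    _ < _ := by
        rw [one_mul]
        exact pow_lt_pow_right₀ hy (Nat.pow_lt_pow_right (one_lt_qq (k := k)) h1)

lemma f_le_one {y : Ω} (hy : P.v y ≤ 1) : P.v (fL k A ks y) ≤ 1 := by
  by_contra! h
  refine absurd (abs_sum_lt P.v P.ultra Finset.univ (fun i => algebraMap F Ω (A i) * y ^ qq ^ ks i) _ (by positivity : 0 < P.v (fL k A ks y)) ?_) ?_
  · intro i _
    refine lt_of_le_of_lt ?_ h
    rw [map_mul, map_pow]
    exact mul_le_one₀ (P.v_c_le _) (by positivity) (pow_le_one₀ (P.v.nonneg _) hy)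
  · rw [fL_apply]; exact lt_irrefl _

lemma root_ne_one (ha : 1 < P.v a) {y : Ω} (hy : y ∈ VV k A ks t a) : P.v y ≠ 1 := by
  intro h
  rw [mem_VV] at hy
  have := f_le_one P (k := k) (A := A) (ks := ks) h.le
  rw [hy, map_mul, map_pow, h, one_pow, mul_one] at this
  linarith

lemma root_small (hks0 : ks 0 = 0) (hmono : StrictMono ks) (hA0 : A 0 ≠ 0) {y : Ω} (hy : y ∈ VV k A ks t a) (hy0 : y ≠ 0) (h1 : P.v y < 1) :
    P.v a * P.v y ^ qq ^ t = P.v y := by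
  have h2 := f_small P (k := k) (A := A) hks0 hmono hy0 h1
  have h3 : P.v (algebraMap F Ω (A 0) * y) = P.v y := by rw [map_mul, P.const _ hA0, one_mul]
  have := P.v_add_eq (a := algebraMap F Ω (A 0) * y) (b := fL k A ks y - algebraMap F Ω (A 0) * y) (by rwa [h3])
  rw [add_sub_cancel, h3, mem_VV.1 hy, map_mul, map_pow] at this
  exact this

lemma root_large (hmono : StrictMono ks) (hAM : A (Fin.last M) = 1) {y : Ω} (hy : y ∈ VV k A ks t a) (h1 : 1 < P.v y) :
    P.v a * P.v y ^ qq ^ t = P.v y ^ qq ^ ks (Fin.last M) := by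
  have h2 := f_large P (k := k) (A := A) hmono hAM h1
  have := P.v_add_eq (a := y ^ qq ^ ks (Fin.last M)) (b := fL k A ks y - y ^ qq ^ ks (Fin.last M)) (by rwa [map_pow])
  rw [add_sub_cancel, mem_VV.1 hy, map_mul, map_pow, map_pow] at this
  exact this

lemma small_eq (ht : 0 < t) (hks0 : ks 0 = 0) (hmono : StrictMono ks) (hA0 : A 0 ≠ 0) {y z : Ω}
    (hy : y ∈ VV k A ks t a) (hy0 : y ≠ 0) (h1 : P.v y < 1)
    (hz : z ∈ VV k A ks t a) (hz0 : z ≠ 0) (h2 : P.v z < 1) : P.v y = P.v z := by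
  have e1 := root_small P hks0 hmono hA0 hy hy0 h1
  have e2 := root_small P hks0 hmono hA0 hz hz0 h2
  have hQ : 1 < qq ^ t := Nat.one_lt_pow ht.ne' (one_lt_qq (k := k))
  obtain ⟨n, hn⟩ : ∃ n, qq ^ t = n + 1 := ⟨qq ^ t - 1, by omega⟩
  have hn0 : n ≠ 0 := by omega
  rw [hn, pow_succ] at e1 e2
  have py := P.v.pos hy0
  have pz := P.v.pos hz0
  have f1 : P.v a * P.v y ^ n = 1 := by
    apply mul_right_cancel₀ py.ne'; linarith
  have f2 : P.v a * P.v z ^ n = 1 := by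
    apply mul_right_cancel₀ pz.ne'; linarith
  have hane : P.v a ≠ 0 := by rintro h; simp [h] at f1
  exact (pow_left_inj₀ py.le pz.le hn0).1 (mul_left_cancel₀ hane (f1.trans f2.symm))

lemma large_pow (htK : t < ks (Fin.last M)) (hmono : StrictMono ks) (hAM : A (Fin.last M) = 1) {y : Ω}
    (hy : y ∈ VV k A ks t a) (h1 : 1 < P.v y) : P.v y ^ (qq ^ t * (qq ^ (ks (Fin.last M) - t) - 1)) = P.v a := by
  have e1 := root_large P hmono hAM hy h1
  have : qq ^ ks (Fin.last M) = qq ^ t * (qq ^ (ks (Fin.last M) - t) - 1) + qq ^ t := by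
    have h2 : qq ^ ks (Fin.last M) = qq ^ t * qq ^ (ks (Fin.last M) - t) := by rw [← pow_add]; congr 1; omega
    have h3 : 0 < qq ^ (ks (Fin.last M) - t) := pow_pos Fintype.card_pos _
    rw [h2, ← Nat.mul_add_one]; congr 1; omega
  rw [this, pow_add] at e1
  exact (mul_right_cancel₀ (by positivity) e1).symm

lemma large_eq (htK : t < ks (Fin.last M)) (hmono : StrictMono ks) (hAM : A (Fin.last M) = 1) {y z : Ω}
    (hy : y ∈ VV k A ks t a) (h1 : 1 < P.v y)
    (hz : z ∈ VV k A ks t a) (h2 : 1 < P.v z) : P.v y = P.v z := by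
  have e1 := large_pow P htK hmono hAM hy h1
  have e2 := large_pow P htK hmono hAM hz h2
  refine (pow_left_inj₀ (P.v.nonneg _) (P.v.nonneg _) ?_).1 (e1.trans e2.symm)
  have := Nat.one_lt_pow (n := ks (Fin.last M) - t) (by omega) (one_lt_qq (k := k))
  exact Nat.mul_ne_zero (pow_pos Fintype.card_pos _).ne' (by omega)

/-- the small roots -/
noncomputable def UU (k : Type*) {F E Ω : Type*} [Field k] [Fintype k] [Field F] [Field E] [Field Ω]
    [Algebra k F] [Algebra k Ω] [Algebra F Ω] [Algebra E Ω] [IsScalarTower k F Ω]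
    (P : Place E (algebraMap F Ω)) {M : ℕ} (A : Fin (M + 1) → F) (ks : Fin (M + 1) → ℕ) (t : ℕ) (a : Ω) :
    Submodule k Ω := VV k A ks t a ⊓ P.ball 1 one_pos

lemma mem_UU {y : Ω} : y ∈ UU k P A ks t a ↔ y ∈ VV k A ks t a ∧ P.v y < 1 := Iff.rfl

/-- residues of ratios of small roots lie in `F_{q^t}` -/
lemma small_res (hks0 : ks 0 = 0) (hmono : StrictMono ks) (hA0 : A 0 ≠ 0) {u u0 : Ω}
    (ht : 0 < t)
    (hu0 : u0 ∈ UU k P A ks t a) (h0 : u0 ≠ 0) (hu : u ∈ UU k P A ks t a) {z : F}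
    (hz : P.v (u / u0 - algebraMap F Ω z) < 1) : z ^ qq ^ t = z := by
  have key : ∀ w ∈ UU k P A ks t a, P.v (a * w ^ qq ^ t / (algebraMap F Ω (A 0) * u0) - w / u0) < 1 := by
    intro w hw
    by_cases hw0 : w = 0
    · simp [hw0, Fintype.card_ne_zero]
    have h1 := f_small P (k := k) (A := A) hks0 hmono hw0 hw.2
    rw [mem_VV.1 hw.1] at h1
    have hc : algebraMap F Ω (A 0) ≠ 0 := (_root_.map_ne_zero _).2 hA0
    have : a * w ^ qq ^ t / (algebraMap F Ω (A 0) * u0) - w / u0 =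
      (a * w ^ qq ^ t - algebraMap F Ω (A 0) * w) / (algebraMap F Ω (A 0) * u0) := by
      field_simp
    rw [this, map_div₀, map_mul, P.const _ hA0, one_mul, div_lt_one (P.v.pos h0)]
    exact h1.trans_le (small_eq P ht hks0 hmono hA0 hw.1 hw0 hw.2 hu0.1 h0 hu0.2).le
  have k1 := key u0 hu0
  rw [div_self h0] at k1
  have k2 := P.res_close hz (key u hu)
  have k3 := P.res_pow hz (qq ^ t)
  have k4 := P.res_mul (a := 1) (by simpa using k1) k3
  refine P.res_unique (a := z ^ qq ^ t) (b := z) (by simpa using k4) ?_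
  convert k2 using 3
  rw [div_pow]
  have := pow_ne_zero (qq ^ t) h0
  field_simp

lemma large_res (htK : t < ks (Fin.last M)) (hmono : StrictMono ks) (hAM : A (Fin.last M) = 1) {w w0 : Ω}
    (hw0 : w0 ∈ VV k A ks t a) (h0 : 1 < P.v w0) (hw : w ∈ VV k A ks t a) (hw1 : 1 < P.v w) {z : F}
    (hz : P.v (w / w0 - algebraMap F Ω z) < 1) : z ^ qq ^ (ks (Fin.last M) - t) = z := by
  have hw00 : w0 ≠ 0 := by rintro rfl; simp at h0; linarith
  have key : ∀ w ∈ VV k A ks t a, 1 < P.v w → P.v (a * w ^ qq ^ t / w0 ^ qq ^ ks (Fin.last M) - (w / w0) ^ qq ^ ks (Fin.last M)) < 1 := by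
    intro w hw hw1
    have h1 := f_large P (k := k) (A := A) hmono hAM hw1
    rw [mem_VV.1 hw] at h1
    rw [div_pow, ← sub_div, map_div₀, map_pow, div_lt_one (by positivity), large_eq P htK hmono hAM hw0 h0 hw hw1]
    exact h1
  have k1 := key w0 hw0 h0
  rw [div_self hw00, one_pow] at k1
  have k2 := P.res_close (P.res_pow hz _) (key w hw hw1)
  have k3 := P.res_pow hz (qq ^ t)
  have k4 := P.res_mul (a := 1) (by simpa using k1) k3
  have : z ^ qq ^ t = z ^ qq ^ ks (Fin.last M) := by
    refine P.res_unique (by simpa using k4) ?_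
    convert k2 using 3
    rw [div_pow]
    have := pow_ne_zero (qq ^ t) hw00
    field_simp
  apply pow_card_inj k (n := t)
  rw [this, ← pow_mul, ← pow_add]
  congr 2; omega

end
end Step
end

section
open Polynomial

namespace Step
section
variable {k F E Ω : Type*} [Field k] [Fintype k] [Field F] [Field E] [Field Ω]
  [Algebra k F] [Algebra k Ω] [Algebra F Ω] [Algebra E Ω] [IsScalarTower k F Ω]
  (P : Place E (algebraMap F Ω)) {M : ℕ} {A : Fin (M + 1) → F} {ks : Fin (M + 1) → ℕ} {t : ℕ} {a : Ω}

local notation "qq" => Fintype.card k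

lemma UU_le : UU k P A ks t a ≤ VV k A ks t a := inf_le_left

lemma large_of_not_small (ha : 1 < P.v a) {y : Ω} (hy : y ∈ VV k A ks t a) (h : y ∉ UU k P A ks t a) : 1 < P.v y := by
  rcases lt_trichotomy (P.v y) 1 with h1 | h1 | h1
  · exact absurd ⟨hy, h1⟩ h
  · exact absurd h1 (root_ne_one P ha hy)
  · exact h1

lemma le_large (ha : 1 < P.v a) (htK : t < ks (Fin.last M)) (hmono : StrictMono ks) (hAM : A (Fin.last M) = 1)
    {w : Ω} (hw : w ∈ VV k A ks t a) (hw1 : 1 < P.v w) {y : Ω} (hy : y ∈ VV k A ks t a) :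
    P.v y ≤ P.v w ∧ (P.v y < P.v w ↔ y ∈ UU k P A ks t a) := by
  by_cases h : y ∈ UU k P A ks t a
  · have := h.2.trans hw1
    exact ⟨this.le, by simp [h, this]⟩
  · have := large_eq P htK hmono hAM hy (large_of_not_small P ha hy h) hw hw1
    exact ⟨this.le, by simp [h, this]⟩

lemma card_of_inj {W : Submodule k Ω} {Q : ℕ} (hQ : 1 < Q) (l : W →ₗ[k] F) (hl : ∀ y, (l y) ^ Q = l y)  :
    Finite (LinearMap.range l) ∧ Nat.card (LinearMap.range l) ≤ Q := by
  obtain ⟨s, hs, hs2⟩ := card_fix_le (F := F) Q hQ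
  have hsub : (LinearMap.range l : Set F) ⊆ s := by
    rintro _ ⟨y, rfl⟩
    exact hs2 _ (hl y)
  refine ⟨Set.Finite.subset s.finite_toSet hsub, ?_⟩
  refine (Nat.card_mono s.finite_toSet hsub).trans ?_
  simpa using hs

theorem card_UU_le (ht : 0 < t) (hks0 : ks 0 = 0) (hmono : StrictMono ks) (hA0 : A 0 ≠ 0) :
    Finite (UU k P A ks t a) ∧ Nat.card (UU k P A ks t a) ≤ qq ^ t := by
  have hQ : 1 < qq ^ t := Nat.one_lt_pow ht.ne' (one_lt_qq (k := k))
  by_cases h : ∃ u0 ∈ UU k P A ks t a, u0 ≠ 0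
  · obtain ⟨u0, hu0, h0⟩ := h
    obtain ⟨l, hl⟩ := P.res_lin (UU k P A ks t a) u0 h0 (by
      intro y hy
      by_cases hy0 : y = 0
      · simp [hy0]
      · exact (small_eq P ht hks0 hmono hA0 hy.1 hy0 hy.2 hu0.1 h0 hu0.2).le)
    have hinj : Function.Injective l := by
      rw [← LinearMap.ker_eq_bot, LinearMap.ker_eq_bot']
      intro y hy
      rw [P.res_lin_ker h0 hl] at hy
      by_contra hy0
      have hy0' : (y : Ω) ≠ 0 := by simpa using hy0
      exact hy.ne (small_eq P ht hks0 hmono hA0 y.2.1 hy0' y.2.2 hu0.1 h0 hu0.2)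
    obtain ⟨h1, h2⟩ := card_of_inj hQ l (fun y => small_res P hks0 hmono hA0 ht hu0 h0 y.2 (hl y))
    let e := LinearEquiv.ofInjective l hinj
    exact ⟨Finite.of_equiv _ e.symm.toEquiv, (Nat.card_congr e.toEquiv).trans_le h2⟩
  · have : UU k P A ks t a = ⊥ := by
      rw [eq_bot_iff]; intro y hy
      by_contra hy0
      exact h ⟨y, hy, by simpa using hy0⟩
    rw [this]
    refine ⟨inferInstance, ?_⟩
    simp
    omega

theorem card_UU (ht : 0 < t) (hks0 : ks 0 = 0) (hmono : StrictMono ks) (hA0 : A 0 ≠ 0) (hAM : A (Fin.last M) = 1)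
    (htK : t < ks (Fin.last M)) (ha : 1 < P.v a) (hV : Nat.card (VV k A ks t a) = qq ^ ks (Fin.last M)) :
    Nat.card (UU k P A ks t a) = qq ^ t ∧ (∃ w ∈ VV k A ks t a, w ∉ UU k P A ks t a) := by
  have hq := one_lt_qq (k := k)
  obtain ⟨hfin, hU⟩ := card_UU_le P (k := k) (a := a) ht hks0 hmono hA0
  have hlt : qq ^ t < qq ^ ks (Fin.last M) := Nat.pow_lt_pow_right hq htK
  have hex : ∃ w ∈ VV k A ks t a, w ∉ UU k P A ks t a := by
    by_contra! hcon
    have : UU k P A ks t a = VV k A ks t a := le_antisymm (UU_le P) hcon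
    rw [this, hV] at hU
    omega
  refine ⟨?_, hex⟩
  obtain ⟨w, hw, hwU⟩ := hex
  have hw1 := large_of_not_small P ha hw hwU
  have hw0 : w ≠ 0 := by rintro rfl; simp at hw1; linarith
  obtain ⟨l, hl⟩ := P.res_lin (VV k A ks t a) w hw0 (fun y hy => (le_large P ha htK hmono hAM hw hw1 hy).1)
  have hker : ∀ y : VV k A ks t a, l y = 0 ↔ (y : Ω) ∈ UU k P A ks t a := by
    intro y
    rw [P.res_lin_ker hw0 hl, (le_large P ha htK hmono hAM hw hw1 y.2).2]
  obtain ⟨h1, h2⟩ := card_of_inj (k := k) (Q := qq ^ (ks (Fin.last M) - t)) (Nat.one_lt_pow (by omega) hq) l (by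
    intro y
    by_cases hy : (y : Ω) ∈ UU k P A ks t a
    · rw [(hker y).2 hy, zero_pow (pow_pos Fintype.card_pos _).ne']
    · exact large_res P htK hmono hAM hw hw1 y.2 (large_of_not_small P ha y.2 hy) (hl y))
  have h3 : Nat.card (VV k A ks t a) = Nat.card (LinearMap.ker l) * Nat.card (LinearMap.range l) := by
    rw [Submodule.card_eq_card_quotient_mul_card (LinearMap.ker l), Nat.card_congr l.quotKerEquivRange.toEquiv, mul_comm]
  have h4 : Nat.card (LinearMap.ker l) = Nat.card (UU k P A ks t a) := by
    have : LinearMap.ker l = (UU k P A ks t a).comap (VV k A ks t a).subtype := by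
      ext y; simp [hker]
    rw [this]
    exact Nat.card_congr (Submodule.comapSubtypeEquivOfLe (UU_le P)).toEquiv
  rw [hV, h4, show ks (Fin.last M) = t + (ks (Fin.last M) - t) by omega, pow_add] at h3
  refine le_antisymm hU ?_
  have hpos : 0 < qq ^ (ks (Fin.last M) - t) := pow_pos Fintype.card_pos _
  by_contra! hcon
  have : Nat.card (UU k P A ks t a) * Nat.card (LinearMap.range l) < qq ^ t * qq ^ (ks (Fin.last M) - t) :=
    (Nat.mul_le_mul_left _ h2).trans_lt (Nat.mul_lt_mul_of_pos_right hcon hpos)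
  omega

end
end Step
end

section
open Polynomial Pointwise

namespace Step
section
variable {k G W : Type*} [Field k] [AddCommGroup W] [Module k W] [Group G] [DistribMulAction G W]
  [SMulCommClass G k W]

def Good (G : Type*) {k W : Type*} [Field k] [AddCommGroup W] [Module k W] [Group G] [DistribMulAction G W]
    (V S : Submodule k W) : Prop :=
  S ≤ V ∧ ∀ w ∈ V, w ∉ S → ∀ s ∈ S, ∃ g : G, g • w = w + s

lemma Good.smul {V S : Submodule k W} (hV : ∀ g : G, ∀ w ∈ V, g • w ∈ V) (h : Good G V S) (g : G) :
    Good G V (g • S) := by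
  refine ⟨?_, ?_⟩
  · intro y hy
    obtain ⟨z, hz, rfl⟩ := (Submodule.mem_smul_pointwise_iff_exists _ _ _).1 hy
    exact hV _ _ (h.1 hz)
  · intro w hw hwS s hs
    obtain ⟨z, hz, rfl⟩ := (Submodule.mem_smul_pointwise_iff_exists _ _ _).1 hs
    obtain ⟨g', hg'⟩ := h.2 (g⁻¹ • w) (hV _ _ hw) (fun h' => hwS
      ((Submodule.mem_smul_pointwise_iff_exists _ _ _).2 ⟨_, h', by simp⟩)) z hz
    refine ⟨g * g' * g⁻¹, ?_⟩
    rw [mul_smul, mul_smul, hg', smul_add, smul_inv_smul]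

lemma Good.sup {V S T : Submodule k W} (h : Good G V S) (h' : Good G V T) : Good G V (S ⊔ T) := by
  refine ⟨sup_le h.1 h'.1, ?_⟩
  intro w hw hwS s hs
  obtain ⟨s, hs1, u, hu, rfl⟩ := Submodule.mem_sup.1 hs
  clear hs; rename' hs1 => hs
  have h1 : w ∉ S := fun h => hwS (Submodule.mem_sup_left h)
  obtain ⟨g, hg⟩ := h.2 w hw h1 s hs
  have h2 : w + s ∉ T := fun h => hwS (by
    rw [← add_sub_cancel_right w s]
    exact Submodule.sub_mem _ (Submodule.mem_sup_right h) (Submodule.mem_sup_left hs))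
  obtain ⟨g', hg'⟩ := h'.2 (w + s) (V.add_mem hw (h.1 hs)) h2 u hu
  exact ⟨g' * g, by rw [mul_smul, hg, hg', add_assoc]⟩

lemma card_half {A B : Submodule k W} [Finite B] (h : A < B) : 2 * Nat.card A ≤ Nat.card B := by
  have h1 := Submodule.card_eq_card_quotient_mul_card (A.comap B.subtype)
  rw [Nat.card_congr (Submodule.comapSubtypeEquivOfLe h.le).toEquiv] at h1
  have h2 : Nontrivial (B ⧸ A.comap B.subtype) := by
    rw [Submodule.Quotient.nontrivial_iff]
    intro h3
    rw [Submodule.comap_subtype_eq_top] at h3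
    exact h.not_ge h3
  have : Finite (B ⧸ A.comap B.subtype) := Finite.of_surjective _ (Submodule.mkQ_surjective (A.comap B.subtype))
  have h3 : 1 < Nat.card (B ⧸ A.comap B.subtype) := Finite.one_lt_card
  rw [h1]
  rw [mul_comm]
  first
    | exact Nat.mul_le_mul_right _ h3
    | exact Nat.mul_le_mul_left _ h3

theorem good_conclusion {V S0 : Submodule k W} [Finite V] (hV : ∀ g : G, ∀ w ∈ V, g • w ∈ V)
    (hS0 : Good G V S0) (hne : S0 ≠ V)
    (hirr : ∀ S : Submodule k W, S0 ≤ S → S ≤ V → (∀ g : G, ∀ w ∈ S, g • w ∈ S) → S = V) :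
    ∃ w ∈ V, Nat.card V < 2 * (MulAction.orbit G w).ncard := by
  classical
  have hfinV : (V : Set W).Finite := Set.toFinite _
  -- maximal good
  have hfin : {S : Submodule k W | Good G V S ∧ S0 ≤ S ∧ S ≠ V}.Finite := by
    refine Set.Finite.of_finite_image (f := fun S : Submodule k W => (S : Set W)) ?_ (SetLike.coe_injective.injOn)
    refine hfinV.finite_subsets.subset ?_
    rintro _ ⟨S, hS, rfl⟩
    exact hS.1.1
  obtain ⟨S, hSm⟩ := hfin.exists_maximal ⟨S0, hS0, le_rfl, hne⟩
  obtain ⟨⟨hS, hS0S, hSV⟩, hmax⟩ := hSm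
  have : ∃ g : G, ¬ g • S ≤ S := by
    by_contra! hcon
    refine hSV (hirr S hS0S hS.1 fun g w hw => hcon g ?_)
    exact (Submodule.mem_smul_pointwise_iff_exists _ _ _).2 ⟨w, hw, rfl⟩
  obtain ⟨g, hg⟩ := this
  set T := g • S with hT
  have hTg : Good G V T := hS.smul hV g
  have hsup : S ⊔ T = V := by
    by_contra hne
    have := hmax ⟨hS.sup hTg, hS0S.trans le_sup_left, hne⟩ le_sup_left
    exact hg (le_sup_right.trans this)
  have hTV : T ≠ V := by
    intro h
    have : V ≤ S := by
      intro w hw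
      have : g • w ∈ T := by rw [h]; exact hV _ _ hw
      rw [hT] at this
      obtain ⟨z, hz, hz2⟩ := (Submodule.mem_smul_pointwise_iff_exists _ _ _).1 this
      rwa [← smul_left_cancel _ hz2]
    exact hSV (le_antisymm hS.1 this)
  have hST : ¬ S ≤ T := fun h => hTV (by rw [← hsup, sup_eq_right.2 h])
  obtain ⟨e, he, heT⟩ := Set.not_subset.1 hST
  obtain ⟨e', he', heS⟩ := Set.not_subset.1 hg
  have hee : e + e' ∈ V := V.add_mem (hS.1 he) (hTg.1 he')
  refine ⟨e + e', hee, ?_⟩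
  have key : ∀ w ∈ V, w ∉ S ⊓ T → ∃ γ : G, γ • w = e + e' := by
    intro w hw hwI
    obtain ⟨s, hs, u, hu, rfl⟩ := Submodule.mem_sup.1 (hsup.symm ▸ hw : w ∈ S ⊔ T)
    by_cases h : s + u ∈ S
    · have h2 : s + u ∉ T := fun h2 => hwI ⟨h, h2⟩
      obtain ⟨g1, h1⟩ := hTg.2 _ hw h2 (e' - u) (T.sub_mem he' hu)
      have h3 : s + u + (e' - u) ∉ S := by
        intro h3
        have : s + u + (e' - u) - s = e' := by abel
        exact heS (this ▸ S.sub_mem h3 hs)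
      obtain ⟨g2, h4⟩ := hS.2 _ (by rw [← h1]; exact hV _ _ hw) h3 (e - s) (S.sub_mem he hs)
      exact ⟨g2 * g1, by rw [mul_smul, h1, h4]; abel⟩
    · obtain ⟨g1, h1⟩ := hS.2 _ hw h (e - s) (S.sub_mem he hs)
      have h3 : s + u + (e - s) ∉ T := by
        intro h3
        have : s + u + (e - s) - u = e := by abel
        exact heT (this ▸ T.sub_mem h3 hu)
      obtain ⟨g2, h4⟩ := hTg.2 _ (by rw [← h1]; exact hV _ _ hw) h3 (e' - u) (T.sub_mem he' hu)
      exact ⟨g2 * g1, by rw [mul_smul, h1, h4]; abel⟩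
  have hsub : (V : Set W) \ (S ⊓ T : Submodule k W) ⊆ MulAction.orbit G (e + e') := by
    rintro w ⟨hw, hw2⟩
    obtain ⟨γ, hγ⟩ := key w hw hw2
    exact ⟨γ⁻¹, by simp [← hγ]⟩
  have horb : (MulAction.orbit G (e + e')).Finite := hfinV.subset (by rintro _ ⟨γ, rfl⟩; exact hV _ _ hee)
  have h1 := Set.ncard_le_ncard hsub horb
  have hI : S ⊓ T < S := inf_lt_left.2 hST
  have hSlt : S < V := lt_of_le_of_ne hS.1 hSV
  have : Finite S := Set.Finite.subset hfinV hS.1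
  have h2 := card_half hI
  have h3 := card_half hSlt
  have h4 := Set.ncard_sdiff_add_ncard_of_subset (s := ((S ⊓ T : Submodule k W) : Set W)) (t := (V : Set W)) (hI.le.trans hS.1) hfinV
  have h5 : 0 < Nat.card V := Nat.card_pos
  change 2 * Set.ncard ((S ⊓ T : Submodule k W) : Set W) ≤ Set.ncard (S : Set W) at h2
  change 2 * Set.ncard (S : Set W) ≤ Set.ncard (V : Set W) at h3
  change 0 < Set.ncard (V : Set W) at h5
  change Set.ncard (V : Set W) < _
  omega

end
end Step
end

section
open Polynomial

namespace Step
section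

lemma num_lem {q n j t c : ℕ} (hq : 2 ≤ q) (hn : 0 < n) (hj0 : 0 < j) (hj : j ≤ n) (hnt : n = 1 ∨ ¬ n ∣ t)
    (h1 : (q ^ n - 1) ∣ (q ^ t - 1) * c) (h2 : c ∣ q ^ n - 1) (h3 : c ∣ q ^ j - 1) : j = n := by
  rcases hnt with rfl | hnt
  · omega
  by_contra hjn
  have hb : Nat.gcd j n ∣ n := Nat.gcd_dvd_right _ _
  have hbn : Nat.gcd j n < n := (Nat.le_of_dvd hj0 (Nat.gcd_dvd_left _ _)).trans_lt (by omega)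
  have hg : Nat.gcd t n ∣ n := Nat.gcd_dvd_right _ _
  have hgn : Nat.gcd t n < n := by
    refine lt_of_le_of_ne (Nat.le_of_dvd hn hg) fun h => hnt ?_
    rw [← h]; exact Nat.gcd_dvd_left _ _
  have hc : c ∣ q ^ (Nat.gcd j n) - 1 := by
    rw [← Nat.pow_sub_one_gcd_pow_sub_one]
    exact Nat.dvd_gcd h3 h2
  have h4 : (q ^ n - 1) ∣ (q ^ (Nat.gcd t n) - 1) * c := by
    rw [← Nat.pow_sub_one_gcd_pow_sub_one, ← Nat.gcd_mul_right]
    exact Nat.dvd_gcd h1 (Dvd.intro _ rfl)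
  have h5 := h4.trans (Nat.mul_dvd_mul_left _ hc)
  have half : ∀ d, d ∣ n → d < n → 2 * d ≤ n := by
    rintro d ⟨m, rfl⟩ hd
    have : 2 ≤ m := by
      by_contra! h
      interval_cases m <;> omega
    nlinarith
  have e1 := half _ hb hbn
  have e2 := half _ hg hgn
  have hb0 : 0 < Nat.gcd j n := Nat.gcd_pos_of_pos_right _ hn
  have hg0 : 0 < Nat.gcd t n := Nat.gcd_pos_of_pos_right _ hn
  have p1 : 2 ≤ q ^ Nat.gcd j n := hq.trans (Nat.le_self_pow hb0.ne' _)
  have p2 : 2 ≤ q ^ Nat.gcd t n := hq.trans (Nat.le_self_pow hg0.ne' _)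
  have p3 : q ^ Nat.gcd t n * q ^ Nat.gcd j n ≤ q ^ n := by
    rw [← pow_add]; exact Nat.pow_le_pow_right (by omega) (by omega)
  obtain ⟨u, hu⟩ : ∃ u, q ^ Nat.gcd j n = u + 2 := ⟨_ , (Nat.sub_add_cancel p1).symm⟩
  obtain ⟨v, hv⟩ : ∃ u, q ^ Nat.gcd t n = u + 2 := ⟨_ , (Nat.sub_add_cancel p2).symm⟩
  rw [hu, hv] at p3 h5
  have h6 := Nat.le_of_dvd (by simp) h5
  simp at h6
  nlinarith

lemma root_of_stable {F : Type*} [Field F] (R : Set F) (hR : R.Finite) (h0 : (0 : F) ∈ R) {z : F} (hz : z ≠ 0)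
    (h : ∀ y ∈ R, z * y ∈ R) : z ^ (R.ncard - 1) = 1 := by
  classical
  lift R to Finset F using hR
  rw [Set.ncard_coe_finset]
  have h0' : (0 : F) ∈ R := h0
  have e1 : ((R.erase 0).image (fun y => z * y)) = R.erase 0 := by
    apply Finset.eq_of_subset_of_card_le
    · intro y hy
      simp only [Finset.mem_image, Finset.mem_erase] at hy ⊢
      obtain ⟨a, ha, rfl⟩ := hy
      exact ⟨mul_ne_zero hz ha.1, h _ ha.2⟩
    · rw [Finset.card_image_of_injective _ (mul_right_injective₀ hz)]
  have e2 : ∏ y ∈ R.erase 0, y = z ^ (R.card - 1) * ∏ y ∈ R.erase 0, y := by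
    conv_lhs => rw [← e1, Finset.prod_image (fun a _ b _ h => mul_right_injective₀ hz h)]
    rw [Finset.prod_mul_distrib, Finset.prod_const, Finset.card_erase_of_mem h0']
  have e3 : ∏ y ∈ R.erase 0, y ≠ 0 := Finset.prod_ne_zero_iff.2 fun y hy => Finset.ne_of_mem_erase hy
  exact (mul_right_cancel₀ e3 (by rw [one_mul]; exact e2)).symm

lemma card_dvd_of_pow {F : Type*} [Field F] (C : Subgroup Fˣ) [Finite C] (N : ℕ) (h : ∀ z ∈ C, z ^ N = 1) :
    Nat.card C ∣ N := by
  rw [← IsCyclic.exponent_eq_card]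
  exact Monoid.exponent_dvd_of_forall_pow_eq_one fun z => Subtype.ext (h z.1 z.2)

end

section
variable {k F E Ω : Type*} [Field k] [Fintype k] [Field F] [Field E] [Field Ω]
  [Algebra k F] [Algebra k Ω] [Algebra F Ω] [Algebra E Ω] [IsScalarTower k F Ω]
  [Algebra F E] [IsScalarTower F E Ω]
  (P : Place E (algebraMap F Ω)) {M : ℕ} {A : Fin (M + 1) → F} {ks : Fin (M + 1) → ℕ} {t : ℕ} {a : E}

local notation "qq" => Fintype.card k

lemma gal_c (γ : Ω ≃ₐ[E] Ω) (c : F) : γ (algebraMap F Ω c) = algebraMap F Ω c := by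
  rw [IsScalarTower.algebraMap_apply F E Ω, γ.commutes]

lemma VV_stable (γ : Ω ≃ₐ[E] Ω) {y : Ω} (hy : y ∈ VV k A ks t (algebraMap E Ω a)) :
    γ y ∈ VV k A ks t (algebraMap E Ω a) := by
  rw [mem_VV] at hy ⊢
  rw [← γ.commutes, ← map_pow, ← map_mul, ← hy, fL_apply, fL_apply, map_sum]
  simp [gal_c]

lemma UU_stable {γ : Ω ≃ₐ[E] Ω} (hγ : γ ∈ P.D) {y : Ω} (hy : y ∈ UU k P A ks t (algebraMap E Ω a)) :
    γ y ∈ UU k P A ks t (algebraMap E Ω a) :=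
  ⟨VV_stable γ hy.1, by
    have := hy.2
    change P.v (γ y) < 1
    rw [P.iso _ hγ]; exact this⟩

/-- twisting residues -/
lemma res_gal {γ : Ω ≃ₐ[E] Ω} (hγ : γ ∈ P.D) {y w : Ω} {b c : F} (hw : w ≠ 0)
    (h1 : P.v (y / w - algebraMap F Ω b) < 1) (h2 : P.v (γ w / w - algebraMap F Ω c) < 1) :
    P.v (γ y / w - algebraMap F Ω (c * b)) < 1 := by
  have h3 : P.v (γ (y / w) - algebraMap F Ω b) < 1 := by
    rw [← gal_c (E := E) γ b, ← map_sub, P.iso _ hγ]; exact h1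
  have := P.res_mul h2 h3
  convert this using 3
  have : γ w ≠ 0 := (map_ne_zero_iff γ γ.injective).2 hw
  rw [map_div₀]; field_simp

lemma UU_fixed {x : E} (ht : 0 < t) (hks0 : ks 0 = 0) (hmono : StrictMono ks) (hA0 : A 0 ≠ 0)
    (hx : algebraMap E Ω x ∈ UU k P A ks t (algebraMap E Ω a)) (hx0 : x ≠ 0)
    {γ : Ω ≃ₐ[E] Ω} (hγ : γ ∈ P.D) {u : Ω} (hu : u ∈ UU k P A ks t (algebraMap E Ω a)) : γ u = u := by
  have hx0' : algebraMap E Ω x ≠ 0 := (_root_.map_ne_zero _).2 hx0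
  by_contra hne
  have hd : γ u - u ∈ UU k P A ks t (algebraMap E Ω a) := Submodule.sub_mem _ (UU_stable P hγ hu) hu
  have hd0 : γ u - u ≠ 0 := sub_ne_zero.2 hne
  have h1 := small_eq P ht hks0 hmono hA0 hd.1 hd0 hd.2 hx.1 hx0' hx.2
  have hle : P.v (u / algebraMap E Ω x) ≤ 1 := by
    rw [map_div₀, div_le_one (P.v.pos hx0')]
    by_cases hu0 : u = 0
    · simp [hu0]
    · exact (small_eq P ht hks0 hmono hA0 hu.1 hu0 hu.2 hx.1 hx0' hx.2).le
  obtain ⟨b, hb⟩ := P.res _ hle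
  have h2 := res_gal P hγ (c := 1) hx0' hb (by simp [div_self hx0'])
  rw [one_mul] at h2
  have h3 : P.v (γ u / algebraMap E Ω x - u / algebraMap E Ω x) < 1 := by
    have : γ u / algebraMap E Ω x - u / algebraMap E Ω x = (γ u / algebraMap E Ω x - algebraMap F Ω b) -
      (u / algebraMap E Ω x - algebraMap F Ω b) := by ring
    rw [this]
    exact (P.v_sub _ _).trans_lt (max_lt h2 hb)
  rw [← sub_div, map_div₀, h1, div_self (P.v.pos hx0').ne'] at h3
  exact lt_irrefl _ h3

end
end Step
end

section
open Polynomial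

namespace Step
section
variable {k F E Ω : Type*} [Field k] [Fintype k] [Field F] [Field E] [Field Ω]
  [Algebra k F] [Algebra k Ω] [Algebra F Ω] [Algebra E Ω] [IsScalarTower k F Ω]
  [Algebra F E] [IsScalarTower F E Ω]
  (P : Place E (algebraMap F Ω)) {M : ℕ} {A : Fin (M + 1) → F} {ks : Fin (M + 1) → ℕ} {t : ℕ} {a : E}

local notation "qq" => Fintype.card k

lemma zpow_arith {ρ va vw : ℝ} (h0 : 0 < ρ) (h1 : ρ < 1) {Q n N : ℕ} {m : ℤ} (hQ : va * ρ ^ Q = ρ)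
    (hw : vw ^ (Q * n) = va) (hm : vw ^ N = ρ ^ m) : m * (Q * n : ℕ) = (1 - (Q : ℤ)) * N := by
  have e1 : va = ρ ^ (1 - (Q : ℤ)) := by
    rw [zpow_sub₀ h0.ne', zpow_one, zpow_natCast, eq_div_iff (by positivity)]; exact hQ
  have e2 : ρ ^ (m * (Q * n : ℕ)) = ρ ^ ((1 - (Q : ℤ)) * N) := by
    rw [zpow_mul, zpow_mul, ← hm, ← e1, ← hw, zpow_natCast, zpow_natCast, ← pow_mul, ← pow_mul, mul_comm]
  exact zpow_right_injective₀ h0 h1.ne e2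

lemma num2 {Q n N C T : ℕ} {m : ℤ} (hQ : 0 < Q) (h : m * (Q * n : ℕ) = (1 - (Q : ℤ)) * N) (hN : N = T * C)
    (hC : Nat.Coprime Q C) (hT : T ≤ Q) (hT0 : 0 < T) : T = Q ∧ n ∣ (Q - 1) * C := by
  have h1 : (Q : ℤ) ∣ N := by
    have : (N : ℤ) = Q * (m * n + N) := by push_cast at h; linarith
    exact ⟨_, this⟩
  have h2 : Q ∣ N := by exact_mod_cast h1
  rw [hN] at h2
  have h3 := Nat.le_of_dvd hT0 (hC.dvd_of_dvd_mul_right h2)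
  have h4 : T = Q := le_antisymm hT h3
  refine ⟨h4, ?_⟩
  subst h4
  have h5 : ((T : ℤ) - 1) * C = n * (-m) := by
    have : (T : ℤ) ≠ 0 := by exact_mod_cast hQ.ne'
    apply mul_left_cancel₀ this
    rw [hN] at h; push_cast at h; linarith
  have h6 : (n : ℤ) ∣ (((T - 1) * C : ℕ) : ℤ) := by
    rw [Nat.cast_mul, Nat.cast_sub (by omega)]; push_cast
    exact ⟨_, h5⟩
  exact_mod_cast h6

theorem L0_core {x : E} (ht : 0 < t) (hks0 : ks 0 = 0) (hmono : StrictMono ks) (hA0 : A 0 ≠ 0)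
    (hAM : A (Fin.last M) = 1) (htK : t < ks (Fin.last M)) (ha : 1 < P.v (algebraMap E Ω a))
    (hV : Nat.card (VV k A ks t (algebraMap E Ω a)) = qq ^ ks (Fin.last M))
    (hsep : ∀ y ∈ VV k A ks t (algebraMap E Ω a), IsSeparable E y)
    (hx : algebraMap E Ω x ∈ UU k P A ks t (algebraMap E Ω a)) (hx0 : x ≠ 0) (hxv : P.v (algebraMap E Ω x) = P.ρ)
    {w : Ω} (hw : w ∈ VV k A ks t (algebraMap E Ω a)) (hwU : w ∉ UU k P A ks t (algebraMap E Ω a)) :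
    (∀ u ∈ UU k P A ks t (algebraMap E Ω a), ∃ δ ∈ P.D, δ w = w + u) ∧
    ∃ C : ℕ, (qq ^ (ks (Fin.last M) - t) - 1) ∣ (qq ^ t - 1) * C ∧
      ∀ S : Submodule k Ω, S ≤ VV k A ks t (algebraMap E Ω a) → UU k P A ks t (algebraMap E Ω a) ≤ S → w ∈ S →
        (∀ δ ∈ P.D, ∀ s ∈ S, δ s ∈ S) → ∃ j, 0 < j ∧ Nat.card S = qq ^ t * qq ^ j ∧ C ∣ qq ^ j - 1 := by
  classical
  have hq := one_lt_qq (k := k)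
  obtain ⟨hcU, -⟩ := card_UU P ht hks0 hmono hA0 hAM htK ha hV
  have hfinV : Finite (VV k A ks t (algebraMap E Ω a)) := Nat.finite_of_card_ne_zero (by rw [hV]; positivity)
  have hfinU : Finite (UU k P A ks t (algebraMap E Ω a)) := Nat.finite_of_card_ne_zero (by rw [hcU]; positivity)
  have hw1 := large_of_not_small P ha hw hwU
  have hw0 : w ≠ 0 := by rintro rfl; simp at hw1; linarith
  obtain ⟨l, hl⟩ := P.res_lin (VV k A ks t (algebraMap E Ω a)) w hw0 (fun y hy => (le_large P ha htK hmono hAM hw hw1 hy).1)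
  have hker : ∀ y : VV k A ks t (algebraMap E Ω a), l y = 0 ↔ (y : Ω) ∈ UU k P A ks t (algebraMap E Ω a) := by
    intro y
    rw [P.res_lin_ker hw0 hl, (le_large P ha htK hmono hAM hw hw1 y.2).2]
  have hlw : l ⟨w, hw⟩ = 1 := P.res_unique (hl ⟨w, hw⟩) (by simp [div_self hw0])
  have hmul : ∀ (δ : P.D) (y : VV k A ks t (algebraMap E Ω a)),
      l ⟨δ.1 y, VV_stable δ.1 y.2⟩ = l ⟨δ.1 w, VV_stable δ.1 hw⟩ * l y := fun δ y =>
    P.res_unique (hl ⟨δ.1 y, VV_stable δ.1 y.2⟩) (res_gal P δ.2 hw0 (hl y) (hl ⟨δ.1 w, VV_stable δ.1 hw⟩))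
  let c0 : P.D →* F :=
    { toFun := fun δ => l ⟨δ.1 w, VV_stable δ.1 hw⟩
      map_one' := hlw
      map_mul' := fun δ δ' => hmul δ ⟨δ'.1 w, VV_stable δ'.1 hw⟩ }
  let c : P.D →* Fˣ := c0.toHomUnits
  have hc : ∀ δ, ((c δ : Fˣ) : F) = l ⟨δ.1 w, VV_stable δ.1 hw⟩ := fun δ => rfl
  have hfinR : Finite (LinearMap.range l) := Finite.of_surjective _ l.surjective_rangeRestrict
  have hfinC : Finite c.range := by
    refine Finite.of_injective (β := LinearMap.range l) (fun z => ⟨(z : Fˣ), ?_⟩) ?_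
    · obtain ⟨_, δ, rfl⟩ := z
      exact ⟨_, (hc δ).symm⟩
    · intro z z' h
      exact Subtype.ext (Units.ext (congrArg Subtype.val h))
  have hS : ∀ S : Submodule k Ω, S ≤ VV k A ks t (algebraMap E Ω a) → UU k P A ks t (algebraMap E Ω a) ≤ S → w ∈ S →
        (∀ δ ∈ P.D, ∀ s ∈ S, δ s ∈ S) → ∃ j, 0 < j ∧ Nat.card S = qq ^ t * qq ^ j ∧ Nat.card c.range ∣ qq ^ j - 1 := by
    intro S hSV hUS hwS hSD
    let l' : S →ₗ[k] F := l ∘ₗ Submodule.inclusion hSV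
    have hfinS : Finite S := Set.Finite.subset (s := (VV k A ks t (algebraMap E Ω a) : Set Ω)) (Set.toFinite _) hSV
    have hfinR' : Finite (LinearMap.range l') := Finite.of_surjective _ l'.surjective_rangeRestrict
    have hcard : Nat.card (LinearMap.range l') = qq ^ Module.finrank k (LinearMap.range l') := by
      rw [Module.natCard_eq_pow_finrank (K := k), Nat.card_eq_fintype_card]
    have h3 : Nat.card S = Nat.card (LinearMap.ker l') * Nat.card (LinearMap.range l') := by
      rw [Submodule.card_eq_card_quotient_mul_card (LinearMap.ker l'), Nat.card_congr l'.quotKerEquivRange.toEquiv, mul_comm]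
    have h4 : Nat.card (LinearMap.ker l') = Nat.card (UU k P A ks t (algebraMap E Ω a)) := by
      have : LinearMap.ker l' = (UU k P A ks t (algebraMap E Ω a)).comap S.subtype := by
        ext y; simp [l', hker]
      rw [this]
      exact Nat.card_congr (Submodule.comapSubtypeEquivOfLe hUS).toEquiv
    refine ⟨Module.finrank k (LinearMap.range l'), ?_, ?_, ?_⟩
    · rw [Nat.pos_iff_ne_zero]
      intro h0
      rw [h0, pow_zero, Nat.card_eq_one_iff_unique] at hcard
      have h1 : (⟨1, ⟨⟨w, hwS⟩, hlw⟩⟩ : LinearMap.range l') = 0 := hcard.1.elim _ _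
      exact one_ne_zero (congrArg Subtype.val h1)
    · rw [h3, h4, hcU, hcard]
    · apply card_dvd_of_pow
      rintro _ ⟨δ, rfl⟩
      have := root_of_stable (LinearMap.range l' : Set F) (Set.toFinite _) (Submodule.zero_mem _) (z := (c δ : F))
        (Units.ne_zero _) (by
          rintro _ ⟨y, rfl⟩
          exact ⟨⟨δ.1 y, hSD _ δ.2 _ y.2⟩, hmul δ ⟨y, hSV y.2⟩⟩)
      rw [← hcard]
      exact Units.ext (by push_cast; exact this)
  -- coprimality
  have hcop : Nat.Coprime (qq ^ t) (Nat.card c.range) := by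
    obtain ⟨j, hj0, hj, hd⟩ := hS _ le_rfl (UU_le P) hw (fun δ _ s hs => VV_stable δ hs)
    apply Nat.Coprime.pow_left
    refine Nat.Coprime.coprime_dvd_right hd ?_
    obtain ⟨i, rfl⟩ : ∃ i, j = i + 1 := ⟨j - 1, by omega⟩
    have h1 : 0 < qq ^ (i + 1) := by positivity
    refine Nat.Coprime.coprime_dvd_left (Dvd.intro_left (qq ^ i) (pow_succ (qq) i).symm : qq ∣ qq ^ (i + 1)) ?_
    rw [Nat.coprime_self_sub_right h1]
    simp
  -- the orbit
  set K : Subgroup P.D := c.ker with hK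
  have hstab : MulAction.stabilizer P.D w ≤ K := by
    intro δ hδ
    have h1 : δ.1 w = w := hδ
    rw [hK, MonoidHom.mem_ker]
    apply Units.ext
    rw [hc]; simp only [h1]; exact hlw
  have hN : Nat.card (MulAction.orbit P.D w) = (MulAction.orbit K w).ncard * Nat.card c.range := by
    have h1 := Subgroup.relIndex_mul_index hstab
    rw [MulAction.index_stabilizer, hK, Subgroup.index_ker] at h1
    rw [Nat.card_coe_set_eq, ← h1, ← MulAction.index_stabilizer]
    rfl
  have hsub : MulAction.orbit K w ⊆ (fun u => w + u) '' (UU k P A ks t (algebraMap E Ω a) : Set Ω) := by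
    rintro _ ⟨δ, rfl⟩
    refine ⟨δ.1.1 w - w, ?_, by simp; rfl⟩
    have h1 : l ⟨δ.1.1 w, VV_stable δ.1.1 hw⟩ = 1 := by
      rw [← hc, (MonoidHom.mem_ker.1 δ.2 : c δ.1 = 1)]; rfl
    have h2 : l (⟨δ.1.1 w, VV_stable δ.1.1 hw⟩ - ⟨w, hw⟩) = 0 := by rw [map_sub, h1, hlw, sub_self]
    exact (hker _).1 h2
  have himg : ((fun u => w + u) '' (UU k P A ks t (algebraMap E Ω a) : Set Ω)).Finite := Set.toFinite _
  have hcimg : ((fun u => w + u) '' (UU k P A ks t (algebraMap E Ω a) : Set Ω)).ncard = qq ^ t := by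
    rw [Set.ncard_image_of_injective _ (add_right_injective w), ← hcU]; rfl
  have hTle : (MulAction.orbit K w).ncard ≤ qq ^ t := by
    rw [← hcimg]; exact Set.ncard_le_ncard hsub himg
  have hT0 : 0 < (MulAction.orbit K w).ncard := by
    rw [Set.ncard_pos (himg.subset hsub)]
    exact MulAction.nonempty_orbit _
  obtain ⟨m, hm⟩ := P.orb w hw0 (hsep w hw)
  have hx0' : algebraMap E Ω x ≠ 0 := (_root_.map_ne_zero _).2 hx0
  have e1 := root_small P hks0 hmono hA0 hx.1 hx0' hx.2
  rw [hxv] at e1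
  have e2 := large_pow P htK hmono hAM hw hw1
  obtain ⟨f1, f2⟩ := num2 (by positivity) (zpow_arith P.hρ0 P.hρ1 e1 e2 hm) hN hcop hTle hT0
  refine ⟨?_, _, f2, hS⟩
  intro u hu
  have : MulAction.orbit K w = (fun u => w + u) '' (UU k P A ks t (algebraMap E Ω a) : Set Ω) :=
    Set.eq_of_subset_of_ncard_le hsub (by rw [hcimg, f1]) himg
  obtain ⟨δ, hδ⟩ := (this.symm ▸ ⟨u, hu, rfl⟩ : w + u ∈ MulAction.orbit K w)
  exact ⟨δ.1.1, δ.1.2, hδ⟩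

end
end Step
end

section
open Polynomial

namespace Step
section
variable {k F E Ω : Type*} [Field k] [Fintype k] [Field F] [Field E] [Field Ω]
  [Algebra k F] [Algebra k Ω] [Algebra F Ω] [Algebra E Ω] [IsScalarTower k F Ω]
  [Algebra F E] [IsScalarTower F E Ω]
  (P : Place E (algebraMap F Ω)) {M : ℕ} {A : Fin (M + 1) → F} {ks : Fin (M + 1) → ℕ} {t : ℕ} {a : E}

local notation "qq" => Fintype.card k

theorem L0_irr {x : E} (ht : 0 < t) (hks0 : ks 0 = 0) (hmono : StrictMono ks) (hA0 : A 0 ≠ 0)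
    (hAM : A (Fin.last M) = 1) (htK : t < ks (Fin.last M)) (ha : 1 < P.v (algebraMap E Ω a))
    (hV : Nat.card (VV k A ks t (algebraMap E Ω a)) = qq ^ ks (Fin.last M))
    (hsep : ∀ y ∈ VV k A ks t (algebraMap E Ω a), IsSeparable E y)
    (hx : algebraMap E Ω x ∈ UU k P A ks t (algebraMap E Ω a)) (hx0 : x ≠ 0) (hxv : P.v (algebraMap E Ω x) = P.ρ)
    (hnt : ks (Fin.last M) - t = 1 ∨ ¬ (ks (Fin.last M) - t) ∣ t)
    (S : Submodule k Ω) (hS : S ≤ VV k A ks t (algebraMap E Ω a)) (hUS : UU k P A ks t (algebraMap E Ω a) ≤ S)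
    (hst : ∀ δ : Ω ≃ₐ[E] Ω, ∀ s ∈ S, δ s ∈ S) (hne : S ≠ UU k P A ks t (algebraMap E Ω a)) :
    S = VV k A ks t (algebraMap E Ω a) := by
  have hq := one_lt_qq (k := k)
  have hfinV : Finite (VV k A ks t (algebraMap E Ω a)) := Nat.finite_of_card_ne_zero (by rw [hV]; positivity)
  have : ¬ S ≤ UU k P A ks t (algebraMap E Ω a) := fun h => hne (le_antisymm h hUS)
  obtain ⟨w, hwS, hwU⟩ := Set.not_subset.1 this
  obtain ⟨-, C, h1, h2⟩ := L0_core P ht hks0 hmono hA0 hAM htK ha hV hsep hx hx0 hxv (hS hwS) hwU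
  obtain ⟨j, hj0, hj, hd⟩ := h2 S hS hUS hwS (fun δ _ => hst δ)
  obtain ⟨j', hj0', hj', hd'⟩ := h2 _ le_rfl (UU_le P) (hS hwS) (fun δ _ s hs => VV_stable δ hs)
  have e1 : j' = ks (Fin.last M) - t := by
    rw [hV, ← pow_add] at hj'
    have := Nat.pow_right_injective hq hj'
    omega
  have hle : Nat.card S ≤ Nat.card (VV k A ks t (algebraMap E Ω a)) := 
    Nat.card_mono (Set.toFinite (VV k A ks t (algebraMap E Ω a) : Set Ω)) hS
  have e2 : j ≤ j' := by
    rw [hj, hj'] at hle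
    have := Nat.le_of_mul_le_mul_left hle (by positivity)
    exact (Nat.pow_le_pow_iff_right hq).1 this
  subst e1
  have e3 := num_lem hq hj0' hj0 e2 hnt h1 hd' hd
  apply SetLike.coe_injective
  refine Set.eq_of_subset_of_ncard_le hS ?_ (Set.toFinite _)
  change Nat.card (VV k A ks t (algebraMap E Ω a)) ≤ Nat.card S
  rw [hj, hj', e3]

lemma v_poly {x : Ω} (g : F[X]) (n : ℕ) (hn : g.coeff n ≠ 0) (hx : x ≠ 0)
    (h : ∀ i ∈ g.support, i ≠ n → P.v x ^ i < P.v x ^ n) : P.v (aeval x g) = P.v x ^ n := by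
  have hp := P.v.pos hx
  have e : aeval x g = algebraMap F Ω (g.coeff n) * x ^ n + ∑ i ∈ g.support.erase n, algebraMap F Ω (g.coeff i) * x ^ i := by
    rw [aeval_def, eval₂_eq_sum, sum_def, ← Finset.add_sum_erase _ _ (mem_support_iff.2 hn)]
  have h1 : P.v (algebraMap F Ω (g.coeff n) * x ^ n) = P.v x ^ n := by rw [map_mul, map_pow, P.const _ hn, one_mul]
  rw [e, P.v_add_eq, h1]
  rw [h1]
  refine abs_sum_lt P.v P.ultra _ _ _ (by positivity) fun i hi => ?_
  rw [Finset.mem_erase] at hi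
  refine lt_of_le_of_lt ?_ (h i hi.2 hi.1)
  rw [map_mul, map_pow]
  exact mul_le_of_le_one_left (by positivity) (P.v_c_le _)

lemma v_poly_zero {x : Ω} (g : F[X]) (hx : P.v x = P.ρ) (m : ℕ) (h : P.v (aeval x g) ≤ P.ρ ^ m) (i : ℕ) (hi : i < m) :
    g.coeff i = 0 := by
  have hρ0 := P.hρ0
  have hρ1 := P.hρ1
  have hx0 : x ≠ 0 := by rintro rfl; rw [map_zero] at hx; linarith
  by_contra hne
  have hg : g ≠ 0 := by rintro rfl; simp at hne
  have := v_poly P g g.natTrailingDegree (by rw [← trailingCoeff]; rwa [Ne, trailingCoeff_eq_zero]) hx0 (by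
    intro i hi hne
    rw [hx]
    refine pow_lt_pow_right_of_lt_one₀ hρ0 hρ1 ?_
    exact lt_of_le_of_ne (natTrailingDegree_le_of_mem_supp _ hi) (Ne.symm hne))
  rw [this, hx, pow_le_pow_iff_right_of_lt_one₀ hρ0 hρ1] at h
  have := natTrailingDegree_le_of_ne_zero hne
  omega

lemma v_poly_inf {x : Ω} (g : F[X]) (hx : 1 < P.v x) (m : ℕ) (h : P.v (aeval x g) ≤ P.v x ^ m) (i : ℕ) (hi : m < i) :
    g.coeff i = 0 := by
  have hx0 : x ≠ 0 := by rintro rfl; simp at hx; linarith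
  by_contra hne
  have hg : g ≠ 0 := by rintro rfl; simp at hne
  have := v_poly P g g.natDegree (by rw [← leadingCoeff]; rwa [Ne, leadingCoeff_eq_zero]) hx0 (by
    intro i hi hne
    refine pow_lt_pow_right₀ hx ?_
    exact lt_of_le_of_ne (le_natDegree_of_mem_supp _ hi) (hne))
  rw [this, pow_le_pow_iff_right₀ hx] at h
  have := le_natDegree_of_ne_zero hne
  omega

lemma v_coeff_prod (s : Multiset Ω) (B : ℝ) (hB : 0 < B) (h : ∀ r ∈ s, P.v r ≤ B) (j : ℕ) :
    P.v ((s.map (fun r => X - C r)).prod.coeff j) * B ^ j ≤ B ^ s.card := by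
  induction s using Multiset.induction_on generalizing j with
  | empty =>
    simp only [Multiset.map_zero, Multiset.prod_zero, coeff_one, Multiset.card_zero, pow_zero]
    split_ifs with h
    · subst h; simp
    · simp
  | cons r s ih =>
    have ih' := ih (fun r hr => h r (Multiset.mem_cons_of_mem hr))
    have hr := h r (Multiset.mem_cons_self _ _)
    rw [Multiset.map_cons, Multiset.prod_cons, Multiset.card_cons, sub_mul, coeff_sub, coeff_C_mul]
    set PP := (s.map (fun r => X - C r)).prod
    have h2 : P.v (r * PP.coeff j) * B ^ j ≤ B ^ (s.card + 1) := by
      rw [map_mul, mul_assoc, pow_succ', ]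
      exact mul_le_mul hr (ih' j) (by positivity) hB.le
    have h1 : P.v ((X * PP).coeff j) * B ^ j ≤ B ^ (s.card + 1) := by
      cases j with
      | zero => simp; positivity
      | succ j =>
        rw [coeff_X_mul, pow_succ, ← mul_assoc, pow_succ]
        exact mul_le_mul_of_nonneg_right (ih' j) hB.le
    rcases le_max_iff.1 (P.v_sub ((X * PP).coeff j) (r * PP.coeff j)) with h3 | h3
    · exact (mul_le_mul_of_nonneg_right h3 (by positivity)).trans h1
    · exact (mul_le_mul_of_nonneg_right h3 (by positivity)).trans h2

end
end Step
end

section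
open Polynomial

namespace Step
section
variable {F E Ω : Type*} [Field F] [Field E] [Field Ω]
  [Algebra F Ω] [Algebra E Ω]
  [Algebra F E] [IsScalarTower F E Ω]
  [Algebra F[X] E] [IsFractionRing F[X] E] [Algebra F[X] Ω] [IsScalarTower F[X] E Ω] [IsScalarTower F F[X] Ω]

lemma aeval_XX (g : F[X]) : aeval (algebraMap F[X] Ω X) g = algebraMap F[X] Ω g := by
  rw [aeval_algebraMap_apply, aeval_X_left_apply]

theorem const_of_two_places [IsAlgClosed F] [IsAlgClosure E Ω] (P Q : Place E (algebraMap F Ω))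
    (hP : P.v (algebraMap F[X] Ω X) = P.ρ) (hQ : 1 < Q.v (algebraMap F[X] Ω X)) {y : Ω} (hy : IsIntegral F[X] y)
    (h1 : ∀ γ : Ω ≃ₐ[E] Ω, P.v (γ y) ≤ P.ρ ^ 2)
    (h2 : ∀ γ : Ω ≃ₐ[E] Ω, Q.v (γ y) ≤ Q.v (algebraMap F[X] Ω X) ^ 2) :
    ∃ ζ : F, y = algebraMap F Ω ζ * (algebraMap F[X] Ω X) ^ 2 := by
  have : IsAlgClosed Ω := IsAlgClosure.isAlgClosed E
  have : Algebra.IsAlgebraic E Ω := IsAlgClosure.isAlgebraic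
  have hnorm : Normal E Ω := inferInstance
  set x := algebraMap F[X] Ω X with hx
  have hx0 : x ≠ 0 := by rintro h; rw [h] at hQ; simp at hQ; linarith
  have hρ := P.hρ0
  set N := minpoly F[X] y with hN
  have hNm : N.Monic := minpoly.monic hy
  set d := N.natDegree with hd
  have hroots : ∀ r ∈ (N.map (algebraMap F[X] Ω)).roots, ∃ γ : Ω ≃ₐ[E] Ω, γ y = r := by
    intro r hr
    have hr2 := isRoot_of_mem_roots hr
    obtain ⟨γ, hγ⟩ := minpoly.exists_algEquiv_of_root' (K := E) (x := r) (y := y) (Algebra.IsAlgebraic.isAlgebraic y) (by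
      rw [minpoly.isIntegrallyClosed_eq_field_fractions' E hy, aeval_map_algebraMap, ← eval_map_algebraMap]
      exact hr2)
    exact ⟨γ, hγ⟩
  have hprod := (IsAlgClosed.splits (N.map (algebraMap F[X] Ω))).eq_prod_roots_of_monic (hNm.map _)
  have hcard : (N.map (algebraMap F[X] Ω)).roots.card = d := by
    rw [← (IsAlgClosed.splits (N.map (algebraMap F[X] Ω))).natDegree_eq_card_roots, hNm.natDegree_map]
  have hcoef : ∀ j ≤ d, N.coeff j = C ((N.coeff j).coeff (2 * (d - j))) * X ^ (2 * (d - j)) := by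
    intro j hj
    have b1 := v_coeff_prod P _ (P.ρ ^ 2) (by positivity) (by
      intro r hr; obtain ⟨γ, rfl⟩ := hroots r hr; exact h1 γ) j
    have b2 := v_coeff_prod Q _ (Q.v x ^ 2) (by positivity) (by
      intro r hr; obtain ⟨γ, rfl⟩ := hroots r hr; exact h2 γ) j
    rw [← hprod, hcard, coeff_map, ← aeval_XX] at b1 b2
    obtain ⟨e, he⟩ : ∃ e, d = j + e := ⟨d - j, by omega⟩
    rw [he] at b1 b2 ⊢
    rw [Nat.add_sub_cancel_left]
    rw [pow_add, mul_comm] at b1 b2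
    have b1' := le_of_mul_le_mul_left b1 (by positivity)
    have b2' := le_of_mul_le_mul_left b2 (by positivity)
    rw [← pow_mul] at b1' b2'
    have c1 := v_poly_zero P _ hP _ b1'
    have c2 := v_poly_inf Q _ hQ _ b2'
    ext i
    rw [coeff_C_mul_X_pow]
    split_ifs with hi
    · rw [hi]
    · rcases lt_or_gt_of_ne hi with hi | hi
      · exact c1 _ hi
      · exact c2 _ hi
  let m : F[X] := ∑ j ∈ Finset.range (d + 1), C ((N.coeff j).coeff (2 * (d - j))) * X ^ j
  have hm0 : m ≠ 0 := by
    intro h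
    have : m.coeff d = 1 := by
      simp only [m, finsetSum_coeff, coeff_C_mul_X_pow]
      rw [Finset.sum_eq_single d]
      · simp [hd, hNm.coeff_natDegree]
      · intro b _ hb; rw [if_neg (Ne.symm hb)]
      · simp
    rw [h] at this; simp at this
  have hroot : (m.map (algebraMap F Ω)).IsRoot (y / x ^ 2) := by
    rw [IsRoot, eval_map_algebraMap]
    have h0 : aeval y N = 0 := minpoly.aeval _ _
    rw [aeval_eq_sum_range] at h0
    have h3 : x ^ (2 * d) * aeval (y / x ^ 2) m = 0 := by
      rw [← h0]
      simp only [m, map_sum, Finset.mul_sum]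
      refine Finset.sum_congr rfl fun j hj => ?_
      rw [Finset.mem_range] at hj
      obtain ⟨e, he⟩ : ∃ e, d = j + e := ⟨d - j, by omega⟩
      conv_rhs => rw [hcoef j (by omega), Algebra.smul_def]
      simp only [map_mul, aeval_C, map_pow, aeval_X, he, Nat.add_sub_cancel_left, ← hx]
      rw [show algebraMap F[X] Ω (C ((N.coeff j).coeff (2 * e))) = algebraMap F Ω ((N.coeff j).coeff (2 * e)) from
        (IsScalarTower.algebraMap_apply F F[X] Ω _).symm]
      rw [mul_add, pow_add, div_pow, ← pow_mul]
      field_simp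
    exact (mul_eq_zero.1 h3).resolve_left (pow_ne_zero _ hx0)
  obtain ⟨ζ, hζ⟩ := (IsAlgClosed.splits m).mem_range_of_isRoot hm0 hroot
  exact ⟨ζ, by rw [hζ]; field_simp⟩

end
end Step
end

section
open Polynomial

namespace Step
section
variable {k F : Type*} [Field k] [Fintype k] [Field F] [Algebra k F] {M : ℕ} (A : Fin (M + 1) → F) (ks : Fin (M + 1) → ℕ) (t : ℕ)

local notation "qq" => Fintype.card k

noncomputable def fX (k : Type*) [Fintype k] {F : Type*} [Field F] {M : ℕ} (A : Fin (M + 1) → F) (ks : Fin (M + 1) → ℕ) : F[X] :=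
  ∑ i, C (A i) * X ^ Fintype.card k ^ ks i

noncomputable def PhiT (k : Type*) [Fintype k] {F : Type*} [Field F] {M : ℕ} (A : Fin (M + 1) → F) (ks : Fin (M + 1) → ℕ) (t : ℕ) : F[X][X] :=
  ∑ i, C (C (A i) * X ^ (Fintype.card k ^ ks (Fin.last M) - Fintype.card k ^ ks i)) * X ^ Fintype.card k ^ ks i
    - C (fX k A ks * X ^ (Fintype.card k ^ ks (Fin.last M) - 2 * Fintype.card k ^ t)) * X ^ Fintype.card k ^ t

variable {A ks t}

lemma PhiT_eq (hmono : StrictMono ks) (hAM : A (Fin.last M) = 1) (htK : t < ks (Fin.last M)) :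
    ∃ R : F[X][X], R.degree < (qq ^ ks (Fin.last M) : ℕ) ∧ PhiT k A ks t = X ^ qq ^ ks (Fin.last M) + R := by
  have hq := one_lt_qq (k := k)
  refine ⟨∑ i : Fin M, C (C (A i.castSucc) * X ^ (Fintype.card k ^ ks (Fin.last M) - Fintype.card k ^ ks i.castSucc)) * X ^ Fintype.card k ^ ks i.castSucc
    - C (fX k A ks * X ^ (Fintype.card k ^ ks (Fin.last M) - 2 * Fintype.card k ^ t)) * X ^ Fintype.card k ^ t, ?_, ?_⟩
  · have h1 : ∀ (c : F[X]) (n : ℕ), n < ks (Fin.last M) → (C c * X ^ qq ^ n).degree < ((qq ^ ks (Fin.last M) : ℕ) : WithBot ℕ) := fun c n hn =>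
      (degree_C_mul_X_pow_le _ _).trans_lt (by exact_mod_cast Nat.pow_lt_pow_right hq hn)
    refine (degree_sub_le _ _).trans_lt (max_lt ?_ (h1 _ _ htK))
    refine (degree_sum_le _ _).trans_lt ?_
    rw [Finset.sup_lt_iff (WithBot.bot_lt_coe _)]
    intro i _
    exact h1 _ _ (hmono i.castSucc_lt_last)
  · rw [PhiT, Fin.sum_univ_castSucc, hAM]
    simp
    ring

lemma PhiT_monic (hmono : StrictMono ks) (hAM : A (Fin.last M) = 1) (htK : t < ks (Fin.last M)) :
    (PhiT k A ks t).Monic ∧ (PhiT k A ks t).natDegree = qq ^ ks (Fin.last M) := by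
  obtain ⟨R, hR, h⟩ := PhiT_eq (k := k) hmono hAM htK
  rw [h]
  refine ⟨monic_X_pow_add hR, ?_⟩
  rw [natDegree_eq_of_degree_eq_some]
  rw [degree_add_eq_left_of_degree_lt] <;> simpa using hR

lemma PhiT_sep (ht : 0 < t) (hks0 : ks 0 = 0) (hmono : StrictMono ks) (hA0 : A 0 ≠ 0)
    {L : Type*} [Field L] (φ : F[X] →+* L) (hX : φ X ≠ 0) : ((PhiT k A ks t).map φ).Separable := by
  have hq := one_lt_qq (k := k)
  have h0 : (qq : L) = 0 := by
    have := map_natCast ((φ.comp C).comp (algebraMap k F)) qq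
    rw [← this, FiniteField.cast_card_eq_zero, map_zero]
  have hpow : ∀ n, 0 < n → ((qq ^ n : ℕ) : L) = 0 := fun n hn => by
    push_cast; rw [h0, zero_pow hn.ne']
  have hder : derivative ((PhiT k A ks t).map φ) = C (φ (C (A 0)) * φ X ^ (qq ^ ks (Fin.last M) - 1)) := by
    rw [PhiT, Polynomial.map_sub, Polynomial.map_sum, derivative_sub, derivative_sum, Fin.sum_univ_succ]
    simp only [Polynomial.map_mul, Polynomial.map_pow, map_C, map_X, derivative_C_mul_X_pow]
    rw [hpow t ht, Finset.sum_eq_zero, hks0]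
    · simp
    · intro i _
      rw [hpow _ (by rw [← hks0]; exact hmono i.succ_pos)]
      simp
  have hne : φ (C (A 0)) ≠ 0 := by
    have : (φ.comp C) (A 0) ≠ 0 := (_root_.map_ne_zero (φ.comp C)).2 hA0
    exact this
  rw [Separable, hder]
  have : IsUnit (C (φ (C (A 0)) * φ X ^ (qq ^ ks (Fin.last M) - 1))) :=
    isUnit_C.2 (IsUnit.mk0 _ (mul_ne_zero hne (pow_ne_zero _ hX)))
  exact (isCoprime_one_right).of_isCoprime_of_dvd_right this.dvd

end

section
variable {k F E Ω : Type*} [Field k] [Fintype k] [Field F] [Field E] [Field Ω]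
  [Algebra k F] [Algebra k Ω] [Algebra F Ω] [Algebra E Ω] [IsScalarTower k F Ω]
  [Algebra F E] [IsScalarTower F E Ω]
  [Algebra F[X] E] [IsFractionRing F[X] E] [Algebra F[X] Ω] [IsScalarTower F[X] E Ω] [IsScalarTower F F[X] Ω]
  {M : ℕ} {A : Fin (M + 1) → F} {ks : Fin (M + 1) → ℕ} {t : ℕ}

local notation "qq" => Fintype.card k

noncomputable def aE (k E : Type*) [Fintype k] {F : Type*} [Field F] [Field E] [Algebra F[X] E] {M : ℕ} (A : Fin (M + 1) → F) (ks : Fin (M + 1) → ℕ) (t : ℕ) : E :=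
  algebraMap F[X] E (fX k A ks) / (algebraMap F[X] E X) ^ Fintype.card k ^ t

lemma algX (c : F) : algebraMap F[X] Ω (C c) = algebraMap F Ω c :=
  (IsScalarTower.algebraMap_apply F F[X] Ω _).symm

lemma inj_FX {F : Type*} (E Ω : Type*) [Field F] [Field E] [Field Ω] [Algebra E Ω] [Algebra F[X] E] [IsFractionRing F[X] E] [Algebra F[X] Ω] [IsScalarTower F[X] E Ω] : Function.Injective (algebraMap F[X] Ω) := by
  rw [IsScalarTower.algebraMap_eq F[X] E Ω]
  exact (algebraMap E Ω).injective.comp (IsFractionRing.injective F[X] E)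

lemma xx_ne {F : Type*} (E Ω : Type*) [Field F] [Field E] [Field Ω] [Algebra E Ω] [Algebra F[X] E] [IsFractionRing F[X] E] [Algebra F[X] Ω] [IsScalarTower F[X] E Ω] : algebraMap F[X] Ω X ≠ 0 := by
  rw [Ne, map_eq_zero_iff _ (inj_FX E Ω)]; exact X_ne_zero

lemma alg_fX : algebraMap F[X] Ω (fX k A ks) = fL k A ks (algebraMap F[X] Ω X) := by
  rw [fL_apply, fX, map_sum]
  simp [algX]

lemma aE_eq : algebraMap E Ω (aE k E A ks t) * (algebraMap F[X] Ω X) ^ qq ^ t = fL k A ks (algebraMap F[X] Ω X) := by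
  have hx := xx_ne (F := F) E Ω
  rw [aE, map_div₀, map_pow, ← IsScalarTower.algebraMap_apply, ← IsScalarTower.algebraMap_apply, alg_fX (k := k)]
  field_simp

lemma x_mem : algebraMap F[X] Ω X ∈ VV k A ks t (algebraMap E Ω (aE k E A ks t)) := by
  rw [mem_VV, aE_eq]

lemma PhiT_eval (hmono : StrictMono ks) (htK : t < ks (Fin.last M)) (y : Ω) :
    aeval (algebraMap F[X] Ω X * y) (PhiT k A ks t) =
      (algebraMap F[X] Ω X) ^ qq ^ ks (Fin.last M) * (fL k A ks y - algebraMap E Ω (aE k E A ks t) * y ^ qq ^ t) := by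
  have hq := one_lt_qq (k := k)
  set x := algebraMap F[X] Ω X with hx
  have h1 : ∀ i, x ^ (qq ^ ks (Fin.last M) - qq ^ ks i) * x ^ qq ^ ks i = x ^ qq ^ ks (Fin.last M) := fun i => by
    rw [← pow_add, Nat.sub_add_cancel (Nat.pow_le_pow_right hq.le (hmono.monotone (Fin.le_last i)))]
  have h2 : x ^ (qq ^ ks (Fin.last M) - 2 * qq ^ t) * x ^ (qq ^ t) * x ^ qq ^ t = x ^ qq ^ ks (Fin.last M) := by
    have : 2 * qq ^ t ≤ qq ^ ks (Fin.last M) := by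
      calc 2 * qq ^ t ≤ qq * qq ^ t := Nat.mul_le_mul_right _ hq
        _ = qq ^ (t + 1) := (pow_succ' _ _).symm
        _ ≤ _ := Nat.pow_le_pow_right hq.le htK
    rw [← pow_add, ← pow_add]; congr 1; omega
  rw [PhiT, map_sub, map_sum, mul_sub, fL_apply, Finset.mul_sum]
  simp only [map_mul, aeval_C, aeval_X, map_pow, ← hx, algX, alg_fX (k := k) (Ω := Ω)]
  have h3 := aE_eq (Ω := Ω) (k := k) (E := E) (t := t) (A := A) (ks := ks)
  rw [← hx] at h3
  rw [← h3]
  congr 1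
  · refine Finset.sum_congr rfl fun i _ => ?_
    rw [← h1 i]; ring
  · rw [← h2]; ring

lemma mem_VV_iff (hmono : StrictMono ks) (htK : t < ks (Fin.last M)) (y : Ω) :
    y ∈ VV k A ks t (algebraMap E Ω (aE k E A ks t)) ↔ aeval (algebraMap F[X] Ω X * y) (PhiT k A ks t) = 0 := by
  rw [PhiT_eval (E := E) hmono htK, mem_VV, mul_eq_zero, sub_eq_zero]
  simp [xx_ne (F := F) E Ω]

lemma int_VV (hmono : StrictMono ks) (hAM : A (Fin.last M) = 1) (htK : t < ks (Fin.last M)) {y : Ω}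
    (hy : y ∈ VV k A ks t (algebraMap E Ω (aE k E A ks t))) : IsIntegral F[X] (algebraMap F[X] Ω X * y) :=
  ⟨PhiT k A ks t, (PhiT_monic (k := k) hmono hAM htK).1, (mem_VV_iff hmono htK y).1 hy⟩

lemma card_VV [IsAlgClosed Ω] (ht : 0 < t) (hks0 : ks 0 = 0) (hA0 : A 0 ≠ 0) (hmono : StrictMono ks) (hAM : A (Fin.last M) = 1) (htK : t < ks (Fin.last M)) :
    Nat.card (VV k A ks t (algebraMap E Ω (aE k E A ks t))) = qq ^ ks (Fin.last M) := by
  have hx := xx_ne (F := F) E Ω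
  obtain ⟨h1, h2⟩ := PhiT_monic (k := k) hmono hAM htK
  have hs := PhiT_sep (k := k) ht hks0 hmono hA0 (algebraMap F[X] Ω) hx
  have h3 := card_rootSet_eq_natDegree (K := Ω) hs (IsAlgClosed.splits _)
  rw [h1.natDegree_map, h2] at h3
  rw [← h3, ← Nat.card_eq_fintype_card]
  refine Nat.card_congr ⟨fun y => ⟨algebraMap F[X] Ω X * y, ?_⟩, fun z => ⟨z / algebraMap F[X] Ω X, ?_⟩, ?_, ?_⟩
  · have := (mem_VV_iff hmono htK y.1).1 y.2
    rw [mem_rootSet]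
    exact ⟨(h1.map _).ne_zero, by simpa using this⟩
  · rw [mem_VV_iff hmono htK, mul_div_cancel₀ _ hx]
    have := (mem_rootSet.1 z.2).2
    simpa using this
  · intro y; ext; simp [hx]
  · intro y; ext; simp [mul_div_cancel₀ _ hx]

lemma sep_VV (ht : 0 < t) (hks0 : ks 0 = 0) (hA0 : A 0 ≠ 0) (hmono : StrictMono ks) (htK : t < ks (Fin.last M)) {y : Ω}
    (hy : y ∈ VV k A ks t (algebraMap E Ω (aE k E A ks t))) : IsSeparable E y := by
  have hx := xx_ne (F := F) E Ω
  have h1 : IsSeparable E (algebraMap F[X] Ω X * y) := by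
    have hs := PhiT_sep (k := k) ht hks0 hmono hA0 (algebraMap F[X] E) (by
      rw [Ne, map_eq_zero_iff _ (IsFractionRing.injective F[X] E)]; exact X_ne_zero)
    refine hs.of_dvd (minpoly.dvd _ _ ?_)
    rw [aeval_map_algebraMap]
    exact (mem_VV_iff hmono htK y).1 hy
  rw [← mem_separableClosure_iff] at h1 ⊢
  have h2 : algebraMap F[X] Ω X ∈ separableClosure E Ω := by
    rw [IsScalarTower.algebraMap_apply F[X] E Ω]; exact IntermediateField.algebraMap_mem _ _
  have := div_mem h1 h2
  rwa [mul_div_cancel_left₀ _ hx] at this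

end
end Step
end

section
open Polynomial

namespace Step
section
variable {k F E Ω : Type*} [Field k] [Fintype k] [Field F] [Field E] [Field Ω]
  [Algebra k F] [Algebra k Ω] [Algebra F Ω] [Algebra E Ω] [IsScalarTower k F Ω]
  [Algebra F E] [IsScalarTower F E Ω]
  [Algebra F[X] E] [IsFractionRing F[X] E] [Algebra F[X] Ω] [IsScalarTower F[X] E Ω] [IsScalarTower F F[X] Ω]
  {M : ℕ} {A : Fin (M + 1) → F} {ks : Fin (M + 1) → ℕ} {t : ℕ} (P Q : Place E (algebraMap F Ω))

local notation "qq" => Fintype.card k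
local notation "xx" => algebraMap F[X] Ω X
local notation "aa" => algebraMap E Ω (aE k E A ks t)

lemma va_zero (ht : 0 < t) (hks0 : ks 0 = 0) (hA0 : A 0 ≠ 0) (hmono : StrictMono ks) (hP : P.v xx = P.ρ) :
    1 < P.v aa ∧ xx ∈ UU k P A ks t aa := by
  have hx := xx_ne (F := F) E Ω
  have hρ0 := P.hρ0
  have hρ1 := P.hρ1
  have h1 : P.v xx < 1 := by rw [hP]; exact hρ1
  refine ⟨?_, x_mem, h1⟩
  have h2 := root_small P (k := k) hks0 hmono hA0 (x_mem (E := E) (t := t)) hx h1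
  have h3 : P.v xx ^ qq ^ t < P.v xx := pow_lt_self_of_lt_one₀ (P.v.pos hx) h1 (Nat.one_lt_pow ht.ne' (one_lt_qq (k := k)))
  by_contra! hcon
  have : P.v aa * P.v xx ^ qq ^ t ≤ P.v xx ^ qq ^ t := mul_le_of_le_one_left (by positivity) hcon
  linarith

lemma va_inf (hAM : A (Fin.last M) = 1) (hmono : StrictMono ks) (htK : t < ks (Fin.last M)) (hQ : 1 < Q.v xx) :
    1 < Q.v aa := by
  have h2 := root_large Q (k := k) hmono hAM (x_mem (E := E) (t := t)) hQ
  have h3 : Q.v xx ^ qq ^ t < Q.v xx ^ qq ^ ks (Fin.last M) := pow_lt_pow_right₀ hQ (Nat.pow_lt_pow_right (one_lt_qq (k := k)) htK)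
  by_contra! hcon
  have : Q.v aa * Q.v xx ^ qq ^ t ≤ Q.v xx ^ qq ^ t := mul_le_of_le_one_left (by positivity) hcon
  linarith

lemma zeta_mem (hA : ∀ i, A i ≠ 0) (hmono : StrictMono ks) (ζ : F) :
    algebraMap F Ω ζ * xx ∈ VV k A ks t aa ↔ ∀ i, ζ ^ qq ^ ks i = ζ ^ qq ^ t := by
  have hq := one_lt_qq (k := k)
  have key : fL k A ks (algebraMap F Ω ζ * xx) - aa * (algebraMap F Ω ζ * xx) ^ qq ^ t =
      algebraMap F[X] Ω (∑ i, C (A i * (ζ ^ qq ^ ks i - ζ ^ qq ^ t)) * X ^ qq ^ ks i) := by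
    rw [mul_pow, mul_left_comm, aE_eq, fL_apply, fL_apply, Finset.mul_sum, ← Finset.sum_sub_distrib, map_sum]
    refine Finset.sum_congr rfl fun i _ => ?_
    rw [map_mul, map_pow, algX]
    simp only [map_mul, map_sub, map_pow]
    ring
  rw [mem_VV, ← sub_eq_zero, key, map_eq_zero_iff _ (inj_FX E Ω)]
  constructor
  · intro h j
    have h1 := congrArg (fun g => coeff g (qq ^ ks j)) h
    simp only [finsetSum_coeff, coeff_C_mul_X_pow, coeff_zero] at h1
    rw [Finset.sum_eq_single j] at h1
    · simpa [hA j, sub_eq_zero] using h1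
    · intro b _ hb
      rw [if_neg]
      intro h2
      exact hb (hmono.injective (Nat.pow_right_injective hq h2)).symm
    · simp
  · intro h
    refine Finset.sum_eq_zero fun i _ => ?_
    rw [h i]; simp

theorem caseB_const [IsAlgClosed F] [IsAlgClosure E Ω] (ht : 0 < t) (hks0 : ks 0 = 0) (hA0 : A 0 ≠ 0) (hmono : StrictMono ks)
    (hAM : A (Fin.last M) = 1) (htK : t < ks (Fin.last M)) (hP : P.v xx = P.ρ) (hQ : 1 < Q.v xx)
    (hst : ∀ γ : Ω ≃ₐ[E] Ω, ∀ u ∈ UU k P A ks t aa, γ u ∈ UU k P A ks t aa) {u : Ω} (hu : u ∈ UU k P A ks t aa) :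
    ∃ ζ : F, u = algebraMap F Ω ζ * xx := by
  have hx := xx_ne (F := F) E Ω
  have hxγ : ∀ γ : Ω ≃ₐ[E] Ω, γ xx = xx := fun γ => by
    rw [IsScalarTower.algebraMap_apply F[X] E Ω]; exact γ.commutes _
  obtain ⟨h0, hxU⟩ := va_zero P (k := k) (t := t) ht hks0 hA0 hmono hP
  obtain ⟨ζ, hζ⟩ := const_of_two_places P Q hP hQ (int_VV hmono hAM htK hu.1) (by
      intro γ
      rw [map_mul, map_mul, hxγ, hP, pow_two]
      refine mul_le_mul_of_nonneg_left ?_ P.hρ0.le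
      by_cases hz : γ u = 0
      · rw [hz, map_zero]; exact P.hρ0.le
      · rw [← hP]
        have := hst γ u hu
        exact (small_eq P ht hks0 hmono hA0 this.1 hz this.2 hxU.1 hx hxU.2).le) (by
      intro γ
      rw [map_mul, map_mul, hxγ, pow_two]
      refine mul_le_mul_of_nonneg_left ?_ (Q.v.nonneg _)
      exact (le_large Q (va_inf Q hAM hmono htK hQ) htK hmono hAM x_mem hQ (VV_stable γ hu.1)).1)
  refine ⟨ζ, mul_left_cancel₀ hx ?_⟩
  rw [hζ]; ring

theorem caseB_dvd (ht : 0 < t) (hks0 : ks 0 = 0) (hA : ∀ i, A i ≠ 0) (hmono : StrictMono ks)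
    (hcard : Nat.card (UU k P A ks t aa) = qq ^ t)
    (hconst : ∀ u ∈ UU k P A ks t aa, ∃ ζ : F, u = algebraMap F Ω ζ * xx) (i : Fin (M + 1)) : t ∣ ks i := by
  have hq := one_lt_qq (k := k)
  have hx := xx_ne (F := F) E Ω
  choose! z hz using hconst
  obtain ⟨s, hs, hs2⟩ := card_fix_le (F := F) (qq ^ Nat.gcd t (ks i)) (Nat.one_lt_pow (Nat.gcd_pos_of_pos_left _ ht).ne' hq)
  have hmem : ∀ u : UU k P A ks t aa, z u ∈ s := by
    intro u
    apply hs2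
    have h1 : algebraMap F Ω (z u) * xx ∈ VV k A ks t aa := by
      rw [← hz u u.2]; exact u.2.1
    rw [zeta_mem hA hmono] at h1
    have h2 : z u ^ qq ^ t = z u := by rw [← h1 0, hks0, pow_zero, pow_one]
    have h3 : z u ^ qq ^ ks i = z u := by rw [h1 i, h2]
    have p1 : Function.IsPeriodicPt (fun a : F => a ^ qq) t (z u) := by
      rw [Function.IsPeriodicPt, Function.IsFixedPt, pow_iterate]; exact h2
    have p2 : Function.IsPeriodicPt (fun a : F => a ^ qq) (ks i) (z u) := by
      rw [Function.IsPeriodicPt, Function.IsFixedPt, pow_iterate]; exact h3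
    have p3 := p1.gcd p2
    rw [Function.IsPeriodicPt, Function.IsFixedPt, pow_iterate] at p3
    exact p3
  have h1 : Nat.card (UU k P A ks t aa) ≤ Nat.card s :=
    Nat.card_le_card_of_injective (fun u : UU k P A ks t aa => (⟨z u, hmem u⟩ : s)) (by
      intro u u' h
      have : z u = z u' := congrArg Subtype.val h
      apply Subtype.ext
      rw [hz u u.2, hz u' u'.2, this])
  rw [hcard, Nat.card_eq_fintype_card, Fintype.card_coe] at h1
  have h2 := (Nat.pow_le_pow_iff_right hq).1 (h1.trans hs)
  have h3 : Nat.gcd t (ks i) = t := le_antisymm (Nat.le_of_dvd ht (Nat.gcd_dvd_left _ _)) h2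
  rw [← h3]; exact Nat.gcd_dvd_right _ _

end
end Step
end

section
open Polynomial

namespace Step
section
variable {k F E Ω : Type*} [Field k] [Fintype k] [Field F] [Field E] [Field Ω]
  [Algebra k F] [Algebra k Ω] [Algebra F Ω] [Algebra E Ω] [IsScalarTower k F Ω]
  [Algebra F E] [IsScalarTower F E Ω]
  [Algebra F[X] E] [IsFractionRing F[X] E] [Algebra F[X] Ω] [IsScalarTower F[X] E Ω] [IsScalarTower F F[X] Ω]
  {M : ℕ} {A : Fin (M + 1) → F} {ks : Fin (M + 1) → ℕ} {t : ℕ} (P Q : Place E (algebraMap F Ω))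

local notation "qq" => Fintype.card k
local notation "xx" => algebraMap F[X] Ω X
local notation "aa" => algebraMap E Ω (aE k E A ks t)

/-- the auxiliary function of the case at infinity -/
def hB {M : ℕ} (q : ℕ) (Ω : Type*) [Field Ω] [Algebra F Ω] (B : Fin M → F) (js : Fin M → ℕ) (z : Ω) : Ω :=
  ∑ i, algebraMap F Ω (B i) * z ^ q ^ js i

lemma hB_gal {M : ℕ} (q : ℕ) (B : Fin M → F) (js : Fin M → ℕ) (γ : Ω ≃ₐ[E] Ω) (z : Ω) :
    γ (hB q Ω B js z) = hB q Ω B js (γ z) := by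
  simp [hB, gal_c]

lemma hB_sep {M : ℕ} (q : ℕ) (B : Fin M → F) (js : Fin M → ℕ) {z : Ω} (hz : z ∈ separableClosure E Ω) :
    hB q Ω B js z ∈ separableClosure E Ω := by
  refine sum_mem fun i _ => mul_mem ?_ (pow_mem hz _)
  rw [IsScalarTower.algebraMap_apply F E Ω]
  exact IntermediateField.algebraMap_mem _ _

lemma hB_pow {B : Fin M → F} (hks0 : ks 0 = 0) (hB' : ∀ i, B i ^ qq ^ t = A i.succ)
    (hkt : ∀ i : Fin M, t ≤ ks i.succ) (z : Ω) :
    hB (qq) Ω B (fun i => ks i.succ - t) z ^ qq ^ t = fL k A ks z - algebraMap F Ω (A 0) * z := by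
  rw [fL_apply, Fin.sum_univ_succ, hks0, pow_zero, pow_one, add_sub_cancel_left, ← Fr_apply (k := k), hB, map_sum]
  refine Finset.sum_congr rfl fun i _ => ?_
  rw [Fr_apply, mul_pow, ← map_pow, hB', ← pow_mul, ← pow_add, Nat.sub_add_cancel (hkt i)]

theorem Linf [IsAlgClosed F] (ht : 0 < t) (hks0 : ks 0 = 0) (hmono : StrictMono ks) (hA0 : A 0 ≠ 0)
    (hAM : A (Fin.last M) = 1) (htK : t < ks (Fin.last M)) (hkt : ∀ i : Fin M, t ≤ ks i.succ)
    (hV : Nat.card (VV k A ks t aa) = qq ^ ks (Fin.last M))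
    (hsep : ∀ y ∈ VV k A ks t aa, IsSeparable E y)
    (hQ : Q.v xx = Q.ρ⁻¹) {w : Ω} (hw : w ∈ VV k A ks t aa) {ζ : F} (hζ : Q.v (w / xx - algebraMap F Ω ζ) < 1)
    (hne : ζ ^ qq ^ t ≠ ζ) (u : Ω) (hu : u ∈ UU k Q A ks t aa) : ∃ δ ∈ Q.D, δ w = w + u := by
  classical
  have hq := one_lt_qq (k := k)
  have hx := xx_ne (F := F) E Ω
  have hQ1 : 1 < Q.v xx := by rw [hQ]; exact (one_lt_inv₀ Q.hρ0).2 Q.hρ1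
  have ha := va_inf Q (k := k) (A := A) (ks := ks) hAM hmono htK hQ1
  obtain ⟨hcU, -⟩ := card_UU Q ht hks0 hmono hA0 hAM htK ha hV
  have hfinU : Finite (UU k Q A ks t aa) := Nat.finite_of_card_ne_zero (by rw [hcU]; positivity)
  have hxγ : ∀ γ : Ω ≃ₐ[E] Ω, γ xx = xx := fun γ => by
    rw [IsScalarTower.algebraMap_apply F[X] E Ω]; exact γ.commutes _
  have hxm : xx ∈ VV k A ks t aa := x_mem
  choose B hB' using fun i : Fin M => IsAlgClosed.exists_pow_nat_eq (A i.succ) (n := qq ^ t) (by positivity)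
  set h := hB (qq) Ω B (fun i => ks i.succ - t) with hh
  let G : Ω → Ω := fun z => h z * xx - h xx * z
  have hGγ : ∀ (γ : Ω ≃ₐ[E] Ω) z, γ (G z) = G (γ z) := by
    intro γ z
    simp only [G, map_sub, map_mul, hxγ, hh, hB_gal]
  have hGpow : G w ^ qq ^ t = algebraMap F Ω (A 0) * (xx * w ^ qq ^ t - w * xx ^ qq ^ t) := by
    simp only [G]
    rw [pow_card_sub (k := k), mul_pow, mul_pow, hh, hB_pow hks0 hB' hkt, hB_pow hks0 hB' hkt, mem_VV.1 hw, mem_VV.1 hxm]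
    ring
  have hval : Q.v (G w) ^ qq ^ t = Q.v xx ^ (qq ^ t + 1) := by
    rw [← map_pow, hGpow, map_mul, Q.const _ hA0, one_mul]
    have e : xx * w ^ qq ^ t - w * xx ^ qq ^ t = xx ^ (qq ^ t + 1) * ((w / xx) ^ qq ^ t - w / xx) := by
      rw [div_pow, pow_succ]; field_simp
    rw [e, map_mul, map_pow]
    have h1 := Q.res_add (Q.res_pow hζ (qq ^ t)) (y := (w / xx) ^ qq ^ t) (z := - (w / xx)) (b := -ζ) (by
      have e1 : -(w / xx) - algebraMap F Ω (-ζ) = -(w / xx - algebraMap F Ω ζ) := by rw [map_neg]; ring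
      rw [e1, AbsoluteValue.map_neg]; exact hζ)
    rw [sub_eq_add_neg, Q.v_eq_one_of_res h1 (by rwa [← sub_eq_add_neg, sub_ne_zero]), mul_one]
  have hGs : G w ∈ separableClosure E Ω := by
    have e1 : w ∈ separableClosure E Ω := mem_separableClosure_iff.2 (hsep w hw)
    have e2 : xx ∈ separableClosure E Ω := mem_separableClosure_iff.2 (hsep _ hxm)
    exact sub_mem (mul_mem (hB_sep _ _ _ e1) e2) (mul_mem (hB_sep _ _ _ e2) e1)
  have hG0 : G w ≠ 0 := by
    intro h0
    rw [h0, map_zero, zero_pow (by positivity)] at hval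
    have := pow_pos (Q.v.pos hx) (qq ^ t + 1)
    linarith
  obtain ⟨m, hm⟩ := Q.orb (G w) hG0 (mem_separableClosure_iff.1 hGs)
  have himg : MulAction.orbit Q.D (G w) = G '' MulAction.orbit Q.D w := by
    ext z; constructor
    · rintro ⟨δ, rfl⟩
      exact ⟨δ.1 w, ⟨δ, rfl⟩, (hGγ δ.1 w).symm⟩
    · rintro ⟨_, ⟨δ, rfl⟩, rfl⟩
      exact ⟨δ, hGγ δ.1 w⟩
  have hsub : MulAction.orbit Q.D w ⊆ (fun u => w + u) '' (UU k Q A ks t aa : Set Ω) := by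
    rintro _ ⟨δ, rfl⟩
    refine ⟨δ.1 w - w, ?_, by simp; rfl⟩
    have h1 : δ.1 w - w ∈ VV k A ks t aa := Submodule.sub_mem _ (VV_stable δ.1 hw) hw
    refine (le_large Q ha htK hmono hAM hxm hQ1 h1).2.1 ?_
    have h2 : Q.v (δ.1 w / xx - algebraMap F Ω ζ) < 1 := by
      have := Q.iso _ δ.2 (w / xx - algebraMap F Ω ζ)
      rw [map_sub, map_div₀, hxγ, gal_c] at this
      rw [this]; exact hζ
    have h3 := (Q.v_sub _ _).trans_lt (max_lt h2 hζ)
    have h4 : δ.1 w - w = (δ.1 w / xx - algebraMap F Ω ζ - (w / xx - algebraMap F Ω ζ)) * xx := by field_simp; ring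
    rw [h4, map_mul]
    exact mul_lt_of_lt_one_left (Q.v.pos hx) h3
  have hfin : ((fun u => w + u) '' (UU k Q A ks t aa : Set Ω)).Finite := Set.toFinite _
  have hcimg : ((fun u => w + u) '' (UU k Q A ks t aa : Set Ω)).ncard = qq ^ t := by
    rw [Set.ncard_image_of_injective _ (add_right_injective w), ← hcU]; rfl
  have hfw := hfin.subset hsub
  have hle : Nat.card (MulAction.orbit Q.D (G w)) ≤ (MulAction.orbit Q.D w).ncard := by
    rw [himg, Nat.card_coe_set_eq]; exact Set.ncard_image_le hfw
  have hpos : 0 < Nat.card (MulAction.orbit Q.D (G w)) := by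
    rw [himg, Nat.card_coe_set_eq, Set.ncard_pos (hfw.image _)]
    exact (MulAction.nonempty_orbit w).image _
  have hdvd : qq ^ t ∣ Nat.card (MulAction.orbit Q.D (G w)) := by
    set N := Nat.card (MulAction.orbit Q.D (G w))
    have e1 : Q.ρ ^ (m * (qq ^ t : ℕ)) = Q.ρ ^ (-(((qq ^ t + 1) * N : ℕ) : ℤ)) := by
      rw [zpow_mul, ← hm, zpow_natCast, zpow_neg, zpow_natCast, ← inv_pow, ← hQ, ← pow_mul, mul_comm N, pow_mul, hval, ← pow_mul]
    have e2 := zpow_right_injective₀ Q.hρ0 Q.hρ1.ne e1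
    have e3 : ((qq ^ t : ℕ) : ℤ) ∣ N := by
      refine ⟨-m - N, ?_⟩
      push_cast at e2 ⊢; linarith
    exact_mod_cast e3
  have heq : MulAction.orbit Q.D w = (fun u => w + u) '' (UU k Q A ks t aa : Set Ω) :=
    Set.eq_of_subset_of_ncard_le hsub (by rw [hcimg]; exact (Nat.le_of_dvd hpos hdvd).trans hle) hfin
  obtain ⟨δ, hδ⟩ := (heq.symm ▸ ⟨u, hu, rfl⟩ : w + u ∈ MulAction.orbit Q.D w)
  exact ⟨δ.1, δ.2, hδ⟩

end
end Step
end

section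
open Polynomial

namespace Step
section
variable {k F E Ω : Type*} [Field k] [Fintype k] [Field F] [Field E] [Field Ω]
  [Algebra k F] [Algebra k Ω] [Algebra F Ω] [Algebra E Ω] [IsScalarTower k F Ω]
  [Algebra F E] [IsScalarTower F E Ω]
  [Algebra F[X] E] [IsFractionRing F[X] E] [Algebra F[X] Ω] [IsScalarTower F[X] E Ω] [IsScalarTower F F[X] Ω]
  {M : ℕ} {A : Fin (M + 1) → F} {ks : Fin (M + 1) → ℕ} {t : ℕ} (P Q : Place E (algebraMap F Ω))

local notation "qq" => Fintype.card k
local notation "xx" => algebraMap F[X] Ω X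
local notation "aa" => algebraMap E Ω (aE k E A ks t)

lemma smulComm (k F E Ω : Type*) [Field k] [Field F] [Field E] [Field Ω]
    [Algebra k F] [Algebra k Ω] [Algebra F Ω] [Algebra E Ω] [IsScalarTower k F Ω]
    [Algebra F E] [IsScalarTower F E Ω] : SMulCommClass (Ω ≃ₐ[E] Ω) k Ω := by
  refine ⟨fun γ l y => ?_⟩
  change γ (l • y) = l • γ y
  rw [Algebra.smul_def, Algebra.smul_def, map_mul, IsScalarTower.algebraMap_apply k F Ω, gal_c]

lemma card_sup_le {k W : Type*} [Field k] [AddCommGroup W] [Module k W] (S T : Submodule k W) [Finite S] [Finite T] :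
    Nat.card ↥(S ⊔ T) ≤ Nat.card S * Nat.card T := by
  rw [← Nat.card_prod]
  refine Nat.card_le_card_of_surjective (fun z : S × T => (⟨z.1.1 + z.2.1,
    Submodule.add_mem_sup z.1.2 z.2.2⟩ : ↥(S ⊔ T))) ?_
  rintro ⟨y, hy⟩
  obtain ⟨s, hs, u, hu, rfl⟩ := Submodule.mem_sup.1 hy
  exact ⟨(⟨s, hs⟩, ⟨u, hu⟩), rfl⟩

theorem big_orbit [IsAlgClosed F] [IsAlgClosure E Ω] (ht : 2 ≤ t) (hks0 : ks 0 = 0) (hA : ∀ i, A i ≠ 0) (hmono : StrictMono ks)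
    (hAM : A (Fin.last M) = 1) 
    (hyp : (t ∣ ks (Fin.last M) ∧ 3 * t ≤ ks (Fin.last M)) ∨
           (¬ t ∣ ks (Fin.last M) ∧ 2 * t - 1 ≤ ks (Fin.last M)))
    (hP : P.v xx = P.ρ) (hQ : Q.v xx = Q.ρ⁻¹) :
    ∃ w ∈ VV k A ks t aa, qq ^ ks (Fin.last M) < 2 * (MulAction.orbit (Ω ≃ₐ[E] Ω) w).ncard := by
  classical
  have := smulComm k F E Ω
  have hΩ : IsAlgClosed Ω := IsAlgClosure.isAlgClosed E
  have ht0 : 0 < t := by omega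
  have htK : t < ks (Fin.last M) := by omega
  have hnt : ks (Fin.last M) - t = 1 ∨ ¬ (ks (Fin.last M) - t) ∣ t := by
    by_contra! hcon
    obtain ⟨c1, c2⟩ := hcon
    have c3 := Nat.le_of_dvd ht0 c2
    rcases hyp with ⟨-, h⟩ | ⟨h1, h⟩
    · omega
    · have h2 : ks (Fin.last M) - t = t ∨ ks (Fin.last M) - t = t - 1 := by omega
      rcases h2 with h2 | h2
      · exact h1 ⟨2, by omega⟩
      · rw [h2] at c2
        have h3 := Nat.dvd_sub c2 (dvd_refl (t - 1))
        have h4 : t - (t - 1) = 1 := by omega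
        rw [h4, Nat.dvd_one] at h3
        omega
  have hq := one_lt_qq (k := k)
  have hx := xx_ne (F := F) E Ω
  have hA0 := hA 0
  have hV := card_VV (k := k) (E := E) (Ω := Ω) (t := t) ht0 hks0 hA0 hmono hAM htK
  have hsep : ∀ y ∈ VV k A ks t aa, IsSeparable E y := fun y hy => sep_VV ht0 hks0 hA0 hmono htK hy
  have hfinV : Finite (VV k A ks t aa) := Nat.finite_of_card_ne_zero (by rw [hV]; positivity)
  obtain ⟨ha, hxU⟩ := va_zero P (k := k) (A := A) (ks := ks) ht0 hks0 hA0 hmono hP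
  have hQ1 : 1 < Q.v xx := by rw [hQ]; exact (one_lt_inv₀ Q.hρ0).2 Q.hρ1
  have haQ := va_inf Q (k := k) (A := A) (ks := ks) hAM hmono htK hQ1
  have hxE : algebraMap E Ω (algebraMap F[X] E X) = xx := (IsScalarTower.algebraMap_apply F[X] E Ω X).symm
  have hx0 : algebraMap F[X] E X ≠ 0 := by
    intro h; rw [h, map_zero] at hxE; exact hx hxE.symm
  have core := fun (w : Ω) (hw : w ∈ VV k A ks t aa) (hwU : w ∉ UU k P A ks t aa) =>
    (L0_core P (x := algebraMap F[X] E X) ht0 hks0 hmono hA0 hAM htK ha hV hsep (by rw [hxE]; exact hxU) hx0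
      (by rw [hxE]; exact hP) hw hwU).1
  have irr := L0_irr P (x := algebraMap F[X] E X) ht0 hks0 hmono hA0 hAM htK ha hV hsep (by rw [hxE]; exact hxU) hx0
      (by rw [hxE]; exact hP) hnt
  have hVst : ∀ g : Ω ≃ₐ[E] Ω, ∀ w ∈ VV k A ks t aa, g • w ∈ VV k A ks t aa := fun g w hw => VV_stable g hw
  obtain ⟨hcU, wU, hwU1, hwU2⟩ := card_UU P ht0 hks0 hmono hA0 hAM htK ha hV
  obtain ⟨hcQ, -⟩ := card_UU Q ht0 hks0 hmono hA0 hAM htK haQ hV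
  have hfinU : Finite (UU k P A ks t aa) := Nat.finite_of_card_ne_zero (by rw [hcU]; positivity)
  have hfinQ : Finite (UU k Q A ks t aa) := Nat.finite_of_card_ne_zero (by rw [hcQ]; positivity)
  rw [← hV]
  by_cases hst : ∀ γ : Ω ≃ₐ[E] Ω, ∀ u ∈ UU k P A ks t aa, γ u ∈ UU k P A ks t aa
  · have hconst := fun (u : Ω) (hu : u ∈ UU k P A ks t aa) =>
      caseB_const P Q ht0 hks0 hA0 hmono hAM htK hP hQ1 hst hu
    have hdvd := caseB_dvd P ht0 hks0 hA hmono hcU hconst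
    have hK3 : 3 * t ≤ ks (Fin.last M) := by
      rcases hyp with h | h
      · exact h.2
      · exact absurd (hdvd _) h.1
    have hkt : ∀ i : Fin M, t ≤ ks i.succ := by
      intro i
      refine Nat.le_of_dvd ?_ (hdvd _)
      rw [← hks0]; exact hmono (Fin.succ_pos i)
    have hfix : ∀ ζ : F, ζ ^ qq ^ t = ζ → algebraMap F Ω ζ * xx ∈ UU k P A ks t aa := by
      intro ζ hζ
      refine ⟨(zeta_mem hA hmono ζ).2 fun i => ?_, ?_⟩
      · obtain ⟨d, hd⟩ := hdvd i
        rw [hζ, hd, pow_mul]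
        have p1 : Function.IsFixedPt (fun a : F => a ^ (qq ^ t)) ζ := hζ
        have p2 := p1.iterate d
        rw [Function.IsFixedPt, pow_iterate] at p2
        exact p2
      · change P.v _ < 1
        rw [map_mul]
        exact (mul_le_of_le_one_left (P.v.nonneg _) (P.v_c_le ζ)).trans_lt hxU.2
    refine good_conclusion (S0 := UU k P A ks t aa ⊔ UU k Q A ks t aa) hVst ⟨sup_le (UU_le P) (UU_le Q), ?_⟩ ?_ ?_
    · intro w hw hwS s hs
      obtain ⟨s, hs1, u, hu, rfl⟩ := Submodule.mem_sup.1 hs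
      obtain ⟨δ, -, hδ⟩ := core w hw (fun h => hwS (Submodule.mem_sup_left h)) s hs1
      have hw' : w + s ∈ VV k A ks t aa := Submodule.add_mem _ hw hs1.1
      have hwS' : w + s ∉ UU k P A ks t aa ⊔ UU k Q A ks t aa := fun h => hwS (by
        rw [← add_sub_cancel_right w s]
        exact Submodule.sub_mem _ h (Submodule.mem_sup_left hs1))
      obtain ⟨ζ, hζ⟩ := Q.res ((w + s) / xx) (by
        rw [map_div₀]
        exact div_le_one_of_le₀ (le_large Q haQ htK hmono hAM x_mem hQ1 hw').1 (Q.v.nonneg _))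
      have hne : ζ ^ qq ^ t ≠ ζ := by
        intro h
        have h1 := hfix ζ h
        apply hwS'
        rw [← sub_add_cancel (w + s) (algebraMap F Ω ζ * xx)]
        refine Submodule.add_mem _ (Submodule.mem_sup_right ?_) (Submodule.mem_sup_left h1)
        refine (le_large Q haQ htK hmono hAM x_mem hQ1 (Submodule.sub_mem _ hw' h1.1)).2.1 ?_
        have h4 : w + s - algebraMap F Ω ζ * xx = ((w + s) / xx - algebraMap F Ω ζ) * xx := by field_simp
        rw [h4, map_mul]
        exact mul_lt_of_lt_one_left (Q.v.pos hx) hζ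
      obtain ⟨δ', -, hδ'⟩ := Linf Q ht0 hks0 hmono hA0 hAM htK hkt hV hsep hQ hw' hζ hne u hu
      refine ⟨δ' * δ, ?_⟩
      change δ' (δ w) = _
      rw [hδ, hδ', add_assoc]
    · intro h
      have h1 := card_sup_le (UU k P A ks t aa) (UU k Q A ks t aa)
      rw [h, hV, hcU, hcQ, ← pow_add] at h1
      have := (Nat.pow_le_pow_iff_right hq).1 h1
      omega
    · intro S hS1 hS2 hS3
      refine irr S hS2 (le_sup_left.trans hS1) hS3 ?_
      rintro rfl
      have : ∃ u ∈ UU k Q A ks t aa, u ≠ 0 := by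
        by_contra! hcon
        have h1 : UU k Q A ks t aa = ⊥ := (Submodule.eq_bot_iff _).2 hcon
        rw [h1] at hcQ
        have h2 : 1 < qq ^ t := Nat.one_lt_pow (by omega) hq
        rw [← hcQ] at h2
        simp at h2
      obtain ⟨u, hu, hu0⟩ := this
      obtain ⟨ζ, rfl⟩ := hconst u (hS1 (Submodule.mem_sup_right hu))
      have hζ0 : ζ ≠ 0 := by rintro rfl; simp at hu0
      have h2 : Q.v _ < 1 := hu.2
      rw [map_mul, Q.const ζ hζ0, one_mul] at h2
      linarith
  · refine good_conclusion (S0 := UU k P A ks t aa) hVst ⟨UU_le P, ?_⟩ ?_ ?_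
    · intro w hw hwS s hs
      obtain ⟨δ, -, hδ⟩ := core w hw hwS s hs
      exact ⟨δ, hδ⟩
    · intro h; exact hwU2 (h ▸ hwU1)
    · intro S hS1 hS2 hS3
      refine irr S hS2 hS1 hS3 ?_
      rintro rfl
      exact hst hS3

end
end Step
end

section
open Polynomial

namespace Step
section
variable {k F : Type*} [Field k] [Fintype k] [Field F] [Algebra k F]
  {M : ℕ} {A : Fin (M + 1) → F} {ks : Fin (M + 1) → ℕ} {t : ℕ}

local notation "qq" => Fintype.card k

theorem exists_factor_aux {E Ω : Type*} [Field E] [Field Ω] [Algebra k Ω] [Algebra F Ω] [Algebra E Ω] [IsScalarTower k F Ω]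
  [Algebra F E] [IsScalarTower F E Ω] [IsAlgClosed F] [IsAlgClosure E Ω]
  [Algebra F[X] E] [IsFractionRing F[X] E] [Algebra F[X] Ω] [IsScalarTower F[X] E Ω] [IsScalarTower F F[X] Ω]
    (ht : 2 ≤ t) (hks0 : ks 0 = 0) (hA : ∀ i, A i ≠ 0) (hmono : StrictMono ks)
    (hAM : A (Fin.last M) = 1)
    (hyp : (t ∣ ks (Fin.last M) ∧ 3 * t ≤ ks (Fin.last M)) ∨
           (¬ t ∣ ks (Fin.last M) ∧ 2 * t - 1 ≤ ks (Fin.last M))) 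
    (hc : (algebraMap E Ω).comp ((algebraMap F[X] E).comp C) = algebraMap F Ω) :
    ∃ H : F[X][X], H.Monic ∧ Irreducible H ∧ H ∣ PhiT k A ks t ∧ qq ^ ks (Fin.last M) < 2 * H.natDegree := by
  classical
  have htK : t < ks (Fin.last M) := by omega
  have hx := xx_ne (F := F) E Ω
  have hpl : ∀ s0 : ℤ, s0 ≠ 0 → ∃ P : Place E (algebraMap F Ω),
      P.v (algebraMap F[X] Ω X) = P.ρ ^ s0 := by
    intro s0 hs0
    have := two_places (F := F) (E := E) (Ω := Ω) s0 hs0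
    rw [hc, ← IsScalarTower.algebraMap_apply F[X] E Ω] at this
    exact this
  obtain ⟨P, hP⟩ := hpl 1 one_ne_zero
  obtain ⟨Q, hQ⟩ := hpl (-1) (by norm_num)
  rw [zpow_one] at hP
  rw [zpow_neg, zpow_one] at hQ
  obtain ⟨w, hw, hbig⟩ := big_orbit (k := k) P Q ht hks0 hA hmono hAM hyp hP hQ
  have hIntg := int_VV hmono hAM htK hw
  have htors : Module.IsTorsionFree F[X] Ω := by
    exact (Module.isTorsionFree_iff_algebraMap_injective).2 (inj_FX E Ω)
  refine ⟨minpoly F[X] (algebraMap F[X] Ω X * w), minpoly.monic hIntg, minpoly.irreducible hIntg,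
    minpoly.isIntegrallyClosed_dvd hIntg ((mem_VV_iff hmono htK w).1 hw), hbig.trans_le (Nat.mul_le_mul_left 2 ?_)⟩
  set H := minpoly F[X] (algebraMap F[X] Ω X * w) with hH
  have hHm : (H.map (algebraMap F[X] Ω)).Monic := (minpoly.monic hIntg).map _
  have hinj : Function.Injective (fun z : Ω => algebraMap F[X] Ω X * z) := mul_right_injective₀ hx
  rw [← Set.ncard_image_of_injective _ hinj]
  have hsub : (fun z : Ω => algebraMap F[X] Ω X * z) '' MulAction.orbit (Ω ≃ₐ[E] Ω) w ⊆
      ((H.map (algebraMap F[X] Ω)).roots.toFinset : Set Ω) := by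
    rintro _ ⟨_, ⟨γ, rfl⟩, rfl⟩
    have h1 : aeval (γ (algebraMap F[X] Ω X * w)) H = γ (aeval (algebraMap F[X] Ω X * w) H) :=
      aeval_algHom_apply (γ.toAlgHom.restrictScalars F[X]) _ _
    rw [hH, minpoly.aeval, map_zero, ← hH, map_mul, IsScalarTower.algebraMap_apply F[X] E Ω, γ.commutes,
      ← IsScalarTower.algebraMap_apply] at h1
    simp only [Finset.mem_coe, Multiset.mem_toFinset, mem_roots hHm.ne_zero, IsRoot, eval_map_algebraMap]
    exact h1
  have h2 := Set.ncard_le_ncard hsub (Finset.finite_toSet _)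
  rw [Set.ncard_coe_finset] at h2
  refine h2.trans ((Multiset.toFinset_card_le _).trans ((card_roots' _).trans ?_))
  exact natDegree_map_le

theorem exists_factor [IsAlgClosed F] (ht : 2 ≤ t) (hks0 : ks 0 = 0) (hA : ∀ i, A i ≠ 0) (hmono : StrictMono ks)
    (hAM : A (Fin.last M) = 1)
    (hyp : (t ∣ ks (Fin.last M) ∧ 3 * t ≤ ks (Fin.last M)) ∨
           (¬ t ∣ ks (Fin.last M) ∧ 2 * t - 1 ≤ ks (Fin.last M))) :
    ∃ H : F[X][X], H.Monic ∧ Irreducible H ∧ H ∣ PhiT k A ks t ∧ qq ^ ks (Fin.last M) < 2 * H.natDegree := by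
  refine exists_factor_aux (E := FractionRing F[X]) (Ω := AlgebraicClosure (FractionRing F[X])) ht hks0 hA hmono hAM hyp ?_
  ext c
  simp only [RingHom.comp_apply]
  rw [IsScalarTower.algebraMap_apply F F[X] (AlgebraicClosure (FractionRing F[X])),
    IsScalarTower.algebraMap_apply F[X] (FractionRing F[X]) (AlgebraicClosure (FractionRing F[X]))]
  rfl

lemma PhiT_point (hmono : StrictMono ks) (htK : t < ks (Fin.last M)) {x y : F} (hx : x ≠ 0)
    (h : ((PhiT k A ks t).map (evalRingHom x)).eval (x * y) = 0) :
    (∑ i, A i * x ^ qq ^ ks i) * y ^ qq ^ t = (∑ i, A i * y ^ qq ^ ks i) * x ^ qq ^ t := by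
  have hq := one_lt_qq (k := k)
  have h1 : ∀ i, x ^ (qq ^ ks (Fin.last M) - qq ^ ks i) * x ^ qq ^ ks i = x ^ qq ^ ks (Fin.last M) := fun i => by
    rw [← pow_add, Nat.sub_add_cancel (Nat.pow_le_pow_right hq.le (hmono.monotone (Fin.le_last i)))]
  have h2 : x ^ (qq ^ ks (Fin.last M) - 2 * qq ^ t) * x ^ (qq ^ t) * x ^ qq ^ t = x ^ qq ^ ks (Fin.last M) := by
    have : 2 * qq ^ t ≤ qq ^ ks (Fin.last M) := by
      calc 2 * qq ^ t ≤ qq * qq ^ t := Nat.mul_le_mul_right _ hq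
        _ = qq ^ (t + 1) := (pow_succ' _ _).symm
        _ ≤ _ := Nat.pow_le_pow_right hq.le htK
    rw [← pow_add, ← pow_add]; congr 1; omega
  have h3 : x ^ (qq ^ ks (Fin.last M) - 2 * qq ^ t) ≠ 0 := pow_ne_zero _ hx
  have h4 : x ^ qq ^ t ≠ 0 := pow_ne_zero _ hx
  have h5 : (∑ i, A i * x ^ (qq ^ ks (Fin.last M) - qq ^ ks i) * (x * y) ^ qq ^ ks i) =
      (∑ i, A i * y ^ qq ^ ks i) * x ^ qq ^ ks (Fin.last M) := by
    rw [Finset.sum_mul]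
    refine Finset.sum_congr rfl fun i _ => ?_
    rw [← h1 i]; ring
  simp only [PhiT, Polynomial.map_sub, Polynomial.map_sum, Polynomial.map_mul, Polynomial.map_pow, map_C, map_X,
    eval_sub, eval_finsetSum, eval_mul, eval_C, eval_pow, eval_X, coe_evalRingHom, fX] at h
  rw [h5, sub_eq_zero, ← h2] at h
  apply mul_left_cancel₀ h3
  apply mul_left_cancel₀ h4
  linear_combination -h
end
end Step
end

section
open Polynomial

namespace Step
section
variable {k F : Type*} [Field k] [Fintype k] [Field F] [Algebra k F]
  {M : ℕ} {A : Fin (M + 1) → F} {ks : Fin (M + 1) → ℕ} {t : ℕ}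

local notation "qq" => Fintype.card k

theorem frob_fix [IsAlgClosed F] (p : ℕ) [Fact p.Prime] [CharP F p] {n : ℕ} (hn : ∀ i, A i ^ p ^ n = A i)
    {H : F[X][X]} (hm : H.Monic) (hirr : Irreducible H) (hdvd : H ∣ PhiT k A ks t)
    (hPm : (PhiT k A ks t).Monic) (hdeg : (PhiT k A ks t).natDegree < 2 * H.natDegree) :
    H.map (mapRingHom (iterateFrobenius F p n)) = H := by
  set φ := mapRingHom (iterateFrobenius F p n) with hφ
  have hPhi : (PhiT k A ks t).map φ = PhiT k A ks t := by
    simp [PhiT, fX, hφ, Polynomial.map_sum, iterateFrobenius_def, hn]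
  have h1 : H.map φ ∣ PhiT k A ks t := by
    rw [← hPhi]; exact Polynomial.map_dvd φ hdvd
  have h2 : Irreducible (H.map φ) := by
    let e1 : F ≃+* F := iterateFrobeniusEquiv F p n
    let e2 : F[X] ≃+* F[X] := mapEquiv e1
    let e3 : F[X][X] ≃+* F[X][X] := mapEquiv e2
    have h3 : e3 H = H.map φ := rfl
    rw [← h3]
    exact (MulEquiv.irreducible_iff e3).2 hirr
  have hm2 := hm.map φ
  obtain ⟨g, hg⟩ := h1
  rw [hg] at hdvd
  rcases hirr.prime.dvd_or_dvd hdvd with h | h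
  · exact (eq_of_monic_of_associated hm hm2 (hirr.associated_of_dvd h2 h)).symm
  · exfalso
    have hgm : g.Monic := by
      rw [hg] at hPm; exact hm2.of_mul_monic_left hPm
    have h4 := natDegree_le_of_dvd h hgm.ne_zero
    rw [hg, hm2.natDegree_mul hgm, hm.natDegree_map] at hdeg
    omega

theorem final [IsAlgClosed F] (p : ℕ) [Fact p.Prime] [CharP F p] {e r : ℕ} (he : 0 < e) (hr : 0 < r)
    (hq : qq = p ^ e) (hcoef : ∀ i, (A i) ^ qq ^ r = A i)
    (ht : 2 ≤ t) (hks0 : ks 0 = 0) (hA : ∀ i, A i ≠ 0) (hmono : StrictMono ks)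
    (hAM : A (Fin.last M) = 1)
    (hyp : (t ∣ ks (Fin.last M) ∧ 3 * t ≤ ks (Fin.last M)) ∨
           (¬ t ∣ ks (Fin.last M) ∧ 2 * t - 1 ≤ ks (Fin.last M))) :
    ∃ m0 : ℕ, ∀ m ≥ m0, ∃ x y : F, x ≠ 0 ∧ y ≠ 0 ∧ x ^ qq ^ (r * m) = x ∧ y ^ qq ^ (r * m) = y ∧
      (∑ i, A i * x ^ qq ^ ks i) * y ^ qq ^ t = (∑ i, A i * y ^ qq ^ ks i) * x ^ qq ^ t ∧
      (y / x) ^ qq ≠ y / x := by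
  classical
  have htK : t < ks (Fin.last M) := by omega
  have hq1 := one_lt_qq (k := k)
  obtain ⟨H, hm, hirr, hdvd, hdeg⟩ := exists_factor (k := k) ht hks0 hA hmono hAM hyp
  obtain ⟨hPm, hPd⟩ := PhiT_monic (k := k) hmono hAM htK
  have hbig : 2 ≤ qq ^ ks (Fin.last M) := Nat.one_lt_pow (by omega) hq1
  have hd1 : 1 < H.natDegree := by omega
  obtain ⟨s, -, hs⟩ := card_fix_le (F := F) (qq) hq1
  have hne : ∀ l : F, H.eval (C l * X ^ 2) ≠ 0 := by
    intro l h
    have h1 := dvd_iff_isRoot.2 (show IsRoot H (C l * X ^ 2) from h)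
    have h2 := eq_of_monic_of_associated (monic_X_sub_C _) hm
      ((prime_X_sub_C _).irreducible.associated_of_dvd hirr h1)
    rw [← h2, natDegree_X_sub_C] at hd1
    omega
  let badx : Finset F := insert 0 (s.biUnion fun l => (H.eval (C l * X ^ 2)).roots.toFinset)
  let badpt : Finset (F × F) := badx.biUnion fun x => (H.map (evalRingHom x)).roots.toFinset.image fun y => (x, y)
  obtain ⟨n0, hn0⟩ := stepanov p H hm (by omega) hirr {0} (by
    intro x hx
    refine Separable.of_dvd (PhiT_sep (k := k) (t := t) (by omega) hks0 hmono (hA 0) (evalRingHom x) ?_) (Polynomial.map_dvd _ hdvd)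
    simpa using hx) (badpt.card + 1)
  refine ⟨n0, fun m hmm => ?_⟩
  have hpn : p ^ (e * (r * m)) = qq ^ (r * m) := by rw [hq, ← pow_mul]
  have hge : n0 ≤ e * (r * m) := by
    calc n0 ≤ 1 * (1 * m) := by omega
      _ ≤ _ := Nat.mul_le_mul he (Nat.mul_le_mul hr le_rfl)
  have hfixA : ∀ i, A i ^ p ^ (e * (r * m)) = A i := by
    intro i
    rw [hpn, pow_mul]
    have p1 : Function.IsFixedPt (fun a : F => a ^ (qq ^ r)) (A i) := hcoef i
    have p2 := p1.iterate m
    rw [Function.IsFixedPt, pow_iterate] at p2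
    exact p2
  obtain ⟨pts, hc, hpts⟩ := hn0 _ hge (frob_fix (k := k) p hfixA hm hirr hdvd hPm (by rw [hPd]; exact hdeg))
  obtain ⟨⟨x, y⟩, hv, hvb⟩ := Finset.exists_mem_notMem_of_card_lt_card (show badpt.card < pts.card by omega)
  obtain ⟨hx1, hy1, hroot⟩ := hpts _ hv
  simp only at hx1 hy1 hroot
  rw [hpn] at hx1 hy1
  have hxb : x ∉ badx := by
    intro h
    apply hvb
    simp only [badpt, Finset.mem_biUnion, Finset.mem_image]
    refine ⟨x, h, y, ?_, rfl⟩
    rw [Multiset.mem_toFinset, mem_roots (hm.map _).ne_zero]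
    exact hroot
  simp only [badx, Finset.mem_insert, Finset.mem_biUnion, not_or, not_exists, not_and] at hxb
  obtain ⟨hx0, hxs⟩ := hxb
  have hyl : ∀ l, l ^ qq = l → y ≠ l * x ^ 2 := by
    rintro l hl rfl
    apply hxs l (hs l hl)
    rw [Multiset.mem_toFinset, mem_roots (hne l), IsRoot]
    have e1 : l * x ^ 2 = evalRingHom x (C l * X ^ 2) := by simp
    rw [e1, eval_map, eval₂_at_apply] at hroot
    exact hroot
  have hy0 : y ≠ 0 := by
    have := hyl 0 (zero_pow (by omega))
    simpa using this
  refine ⟨x, y / x, hx0, div_ne_zero hy0 hx0, hx1, by rw [div_pow, hx1, hy1], ?_, ?_⟩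
  · apply PhiT_point hmono htK hx0
    rw [mul_div_cancel₀ _ hx0]
    exact eval_eq_zero_of_dvd_of_eval_eq_zero (Polynomial.map_dvd _ hdvd) hroot
  · intro h
    apply hyl _ h
    field_simp
end

theorem stmt_4' (p e : ℕ) [Fact p.Prime] (he : 0 < e) (q : ℕ) (hq : q = p ^ e)
    (r : ℕ) (hr : 1 ≤ r) (t : ℕ) (ht : 2 ≤ t)
    (M : ℕ) (A : Fin (M + 1) → AlgebraicClosure (ZMod p))
    (ks : Fin (M + 1) → ℕ)
    (hks0 : ks 0 = 0) (hmono : StrictMono ks)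
    (hA : ∀ i, A i ≠ 0) (hAM : A (Fin.last M) = 1)
    (hcoef : ∀ i, (A i) ^ q ^ r = A i)
    (hyp : (t ∣ ks (Fin.last M) ∧ 3 * t ≤ ks (Fin.last M)) ∨
           (¬ t ∣ ks (Fin.last M) ∧ 2 * t - 1 ≤ ks (Fin.last M))) :
    {m : ℕ | 0 < m ∧ ∀ x y : AlgebraicClosure (ZMod p),
        x ≠ 0 → y ≠ 0 → x ^ q ^ (r * m) = x → y ^ q ^ (r * m) = y →
        (∑ i, A i * x ^ q ^ ks i) * y ^ q ^ t =
          (∑ i, A i * y ^ q ^ ks i) * x ^ q ^ t →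
        (y / x) ^ q = y / x}.Finite := by
  let k := GaloisField p e
  let : Fintype k := Fintype.ofFinite k
  let ι : k →ₐ[ZMod p] AlgebraicClosure (ZMod p) := IsAlgClosed.lift
  let : Algebra k (AlgebraicClosure (ZMod p)) := ι.toRingHom.toAlgebra
  have hcard : Fintype.card k = q := by
    rw [← Nat.card_eq_fintype_card, hq]; exact GaloisField.card p e he.ne'
  have hchar : CharP (AlgebraicClosure (ZMod p)) p := charP_of_injective_algebraMap (algebraMap (ZMod p) _).injective p
  subst hcard
  obtain ⟨m0, h⟩ := final (k := k) (F := AlgebraicClosure (ZMod p)) p he hr hq hcoef ht hks0 hA hmono hAM hyp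
  refine (Set.finite_lt_nat m0).subset fun m hm => ?_
  by_contra hcon
  obtain ⟨x, y, h1, h2, h3, h4, h5, h6⟩ := h m (not_lt.1 hcon)
  exact h6 (hm.2 x y h1 h2 h3 h4 h5)
end Step
end

/-- Let `q = p^e` be a prime power, `t ≥ 2`, and let
`f(X) = ∑_{i=0}^{M} A_i X^{q^{k_i}}` be a `q`-polynomial with coefficients in `F_{q^r}`
(realized inside an algebraic closure `K` of `F_p` as `{c : c^{q^r} = c}`), where
`0 = k_0 < k_1 < ⋯ < k_M`, all `A_i ≠ 0`, `A_M = 1`, `k_i ≠ t` for all `i`, and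
`k_i ≥ t` for all `i ≥ 2`.  If either `t ∣ k_M` and `k_M ≥ 3t`, or `t ∤ k_M` and
`k_M ≥ 2t − 1`, then `f` is scattered of index `t` over `F_{q^{rm}}` for only finitely
many `m ≥ 1`, i.e. `f` is not exceptional scattered of index `t`. -/
theorem stmt_4 (p e : ℕ) [Fact p.Prime] (he : 0 < e) (q : ℕ) (hq : q = p ^ e)
    (r : ℕ) (hr : 1 ≤ r) (t : ℕ) (ht : 2 ≤ t)
    (M : ℕ) (A : Fin (M + 1) → AlgebraicClosure (ZMod p))
    (ks : Fin (M + 1) → ℕ)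
    (hks0 : ks 0 = 0) (hmono : StrictMono ks)
    (hA : ∀ i, A i ≠ 0) (hAM : A (Fin.last M) = 1)
    (hcoef : ∀ i, (A i) ^ q ^ r = A i)
    (hkt : ∀ i, ks i ≠ t)
    (hkt2 : ∀ i : Fin (M + 1), 2 ≤ (i : ℕ) → t ≤ ks i)
    (hyp : (t ∣ ks (Fin.last M) ∧ 3 * t ≤ ks (Fin.last M)) ∨
           (¬ t ∣ ks (Fin.last M) ∧ 2 * t - 1 ≤ ks (Fin.last M))) :
    {m : ℕ | 0 < m ∧ ∀ x y : AlgebraicClosure (ZMod p),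
        x ≠ 0 → y ≠ 0 → x ^ q ^ (r * m) = x → y ^ q ^ (r * m) = y →
        (∑ i, A i * x ^ q ^ ks i) * y ^ q ^ t =
          (∑ i, A i * y ^ q ^ ks i) * x ^ q ^ t →
        (y / x) ^ q = y / x}.Finite := by
  exact Step.stmt_4' p e he q hq r hr t ht M A ks hks0 hmono hA hAM hcoef hyp
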